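/- Let (X_n) be a sequence of compact length spaces, each homeomorphic to the 2-sphere, converging in the Gromov-Hausdorff sense to a compact metric space X. Then X is a cactoid. -/

import Mathlib

open Metric Set Filter GromovHausdorff

/-- A Jordan curve: a subset homeomorphic to the circle. -/
def IsJordanCurve {X : Type} [TopologicalSpace X] (J : Set X) : Prop :=
  Nonempty (AddCircle (1 : ℝ) ≃ₜ J)

/-- A set is cyclicly connected if every pair of its points lies on a Jordan curve in it. -/
def CyclicallyConnected {X : Type} [TopologicalSpace X] (C : Set X) : Prop :=
  ∀ x ∈ C, ∀ y ∈ C, ∃ J : Set X, J ⊆ C ∧ IsJordanCurve J ∧ x ∈ J ∧ y ∈ J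

/-- A maximal cyclic subset: non-degenerate, cyclicly connected, and not a proper subset
of any cyclicly connected subset. -/
def MaximalCyclic {X : Type} [TopologicalSpace X] (T : Set X) : Prop :=
  ¬ T.Subsingleton ∧ CyclicallyConnected T ∧
    ∀ C : Set X, CyclicallyConnected C → T ⊆ C → C = T
/-- Length of a path, as the total variation of the parametrization. -/
noncomputable def pathLength {X : Type} [MetricSpace X] {x y : X} (γ : Path x y) : ENNReal :=
  eVariationOn γ Set.univ

/-- A length space: the distance between two points is the infimum of lengths of
paths joining them. -/
def IsLengthSpace (X : Type) [MetricSpace X] : Prop :=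
  ∀ x y : X, edist x y = ⨅ γ : Path x y, pathLength γ

/-- Homeomorphic to the 2-sphere. -/
def IsTopological2Sphere (T : Type) [TopologicalSpace T] : Prop :=
  Nonempty (T ≃ₜ Metric.sphere (0 : EuclideanSpace ℝ (Fin 3)) 1)

namespace Cactoid

/-- A continuous logarithm of `z - w` on `k`. -/
def HasLog (k : Set ℂ) (w : ℂ) : Prop :=
  ∃ g : ℂ → ℂ, ContinuousOn g k ∧ ∀ z ∈ k, Complex.exp (g z) = z - w

lemma HasLog.of_near {k : Set ℂ} {w w' : ℂ} (h : HasLog k w)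
    (hw : ∀ z ∈ k, ‖w - w'‖ < ‖z - w‖) : HasLog k w' := by
  obtain ⟨g, hg, hge⟩ := h
  have hslit : ∀ z ∈ k, (z - w') / (z - w) ∈ Complex.slitPlane := by
    intro z hz
    have hpos : 0 < ‖z - w‖ := (norm_nonneg _).trans_lt (hw z hz)
    have hne : z - w ≠ 0 := norm_pos_iff.mp hpos
    have : (z - w') / (z - w) = 1 + (w - w') / (z - w) := by field_simp; ring
    rw [this]
    apply Complex.mem_slitPlane_of_norm_lt_one
    rw [norm_div, div_lt_one hpos]
    exact hw z hz
  refine ⟨fun z => g z + Complex.log ((z - w') / (z - w)), ?_, ?_⟩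
  · refine hg.add (ContinuousOn.clog ?_ hslit)
    refine ContinuousOn.div (by fun_prop) (by fun_prop) fun z hz => ?_
    exact norm_pos_iff.mp ((norm_nonneg _).trans_lt (hw z hz))
  · intro z hz
    have hne : z - w ≠ 0 := norm_pos_iff.mp ((norm_nonneg _).trans_lt (hw z hz))
    rw [Complex.exp_add, hge z hz, Complex.exp_log (Complex.slitPlane_ne_zero (hslit z hz))]
    field_simp

lemma HasLog.of_large {k : Set ℂ} {R : ℝ} (hk : k ⊆ closedBall 0 R) {w : ℂ} (hw : R < ‖w‖) :
    HasLog k w := by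
  by_cases hw0 : w = 0
  · subst hw0
    refine ⟨fun z => z, continuousOn_id, fun z hz => ?_⟩
    have := hk hz
    simp only [mem_closedBall, dist_zero_right, norm_zero] at this hw
    linarith [norm_nonneg z]
  have hslit : ∀ z ∈ k, 1 + -z / w ∈ Complex.slitPlane := by
    intro z hz
    apply Complex.mem_slitPlane_of_norm_lt_one
    have := hk hz
    simp only [mem_closedBall, dist_zero_right] at this
    rw [norm_div, norm_neg, div_lt_one (norm_pos_iff.mpr hw0)]
    linarith
  refine ⟨fun z => Complex.log (-w) + Complex.log (1 + -z / w), ?_, ?_⟩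
  · exact continuousOn_const.add (ContinuousOn.clog (by fun_prop) hslit)
  · intro z hz
    rw [Complex.exp_add, Complex.exp_log (neg_ne_zero.mpr hw0),
      Complex.exp_log (Complex.slitPlane_ne_zero (hslit z hz))]
    field_simp
    ring

/-- Logarithms propagate along connected subsets of the complement. -/
lemma HasLog.of_preconnected {k C : Set ℂ} (hk : IsCompact k) (hC : IsPreconnected C)
    (hCk : C ⊆ kᶜ) {w w' : ℂ} (hw : w ∈ C) (hw' : w' ∈ C) (h : HasLog k w) : HasLog k w' := by
  have key : ∀ x ∈ kᶜ, ∃ r > 0, ∀ y, dist y x < r → y ∈ kᶜ ∧ (HasLog k x ↔ HasLog k y) := by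
    intro x hx
    obtain ⟨r, hr, hrk⟩ := Metric.isOpen_iff.mp hk.isClosed.isOpen_compl x hx
    have hfar : ∀ z ∈ k, r ≤ ‖z - x‖ := by
      intro z hz
      by_contra hlt
      exact hrk (by rw [mem_ball, dist_eq_norm]; exact not_le.mp hlt) hz
    refine ⟨r / 2, by positivity, fun y hy => ⟨hrk (by rw [mem_ball]; linarith), ?_, ?_⟩⟩
    · intro hx'
      refine hx'.of_near fun z hz => ?_
      have := hfar z hz
      rw [dist_comm, dist_eq_norm] at hy
      linarith
    · intro hy'
      refine hy'.of_near fun z hz => ?_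
      have h1 := hfar z hz
      have h2 : ‖z - x‖ ≤ ‖z - y‖ + ‖y - x‖ := by
        have := norm_add_le (z - y) (y - x); simpa using this
      rw [dist_eq_norm] at hy
      linarith
  have hsub := hC.subset_left_of_subset_union (u := {x | x ∈ kᶜ ∧ HasLog k x})
    (v := {x | x ∈ kᶜ ∧ ¬ HasLog k x}) ?_ ?_ ?_ ?_ ⟨w, hw, hCk hw, h⟩
  · exact (hsub hw').2
  · rw [Metric.isOpen_iff]
    rintro x ⟨hx, hlx⟩
    obtain ⟨r, hr, hrr⟩ := key x hx
    exact ⟨r, hr, fun y hy => ⟨(hrr y hy).1, (hrr y hy).2.mp hlx⟩⟩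
  · rw [Metric.isOpen_iff]
    rintro x ⟨hx, hlx⟩
    obtain ⟨r, hr, hrr⟩ := key x hx
    exact ⟨r, hr, fun y hy => ⟨(hrr y hy).1, fun hy' => hlx ((hrr y hy).2.mpr hy')⟩⟩
  · rw [Set.disjoint_left]
    rintro x ⟨-, hx⟩ ⟨-, hx'⟩
    exact hx' hx
  · intro x hx
    by_cases hl : HasLog k x
    · exact Or.inl ⟨hCk hx, hl⟩
    · exact Or.inr ⟨hCk hx, hl⟩

/-- Two continuous logarithms of the same function differ by a constant on a preconnected set. -/
lemma log_sub_const {α : Type*} [TopologicalSpace α] {S : Set α} (hS : IsPreconnected S)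
    {f g : α → ℂ} (hf : ContinuousOn f S) (hg : ContinuousOn g S)
    (h : ∀ z ∈ S, Complex.exp (f z) = Complex.exp (g z)) {x y : α} (hx : x ∈ S) (hy : y ∈ S) :
    f x - g x = f y - g y := by
  have hcap : ∀ z ∈ S, ∃ n : ℤ, f z - g z = n * (2 * Real.pi * Complex.I) := by
    intro z hz
    obtain ⟨n, hn⟩ := Complex.exp_eq_exp_iff_exists_int.mp (h z hz)
    exact ⟨n, by rw [hn]; ring⟩
  let p : α → ℝ := fun z => (f z - g z).im / (2 * Real.pi)
  have hp : ContinuousOn p S :=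
    (Complex.continuous_im.comp_continuousOn (hf.sub hg)).div_const _
  have hpint : ∀ z ∈ S, ∀ n : ℤ, f z - g z = n * (2 * Real.pi * Complex.I) → p z = n := by
    intro z hz n hn
    have : (2 * Real.pi) ≠ 0 := by positivity
    simp only [p, hn]
    simp
  have hord := (hS.image p hp).ordConnected
  obtain ⟨n, hn⟩ := hcap x hx
  obtain ⟨m, hm⟩ := hcap y hy
  have aux : ∀ {x y : α} {n m : ℤ}, x ∈ S → y ∈ S → f x - g x = n * (2 * Real.pi * Complex.I) →
      f y - g y = m * (2 * Real.pi * Complex.I) → n < m → False := by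
    intro x y n m hx hy hn hm hlt
    have h1 := hpint x hx n hn
    have h2 := hpint y hy m hm
    have hle : (n : ℝ) + 1 ≤ m := by exact_mod_cast hlt
    have : (n : ℝ) + 1 / 2 ∈ p '' S :=
      hord.out (mem_image_of_mem p hx) (mem_image_of_mem p hy)
        ⟨by rw [h1]; linarith, by rw [h2]; linarith⟩
    obtain ⟨z, hz, hzp⟩ := this
    obtain ⟨l, hl⟩ := hcap z hz
    rw [hpint z hz l hl] at hzp
    have h3 : (2 * l : ℝ) = 2 * n + 1 := by linarith
    have h4 : 2 * l = 2 * n + 1 := by exact_mod_cast h3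
    omega
  rcases lt_trichotomy n m with hlt | heq | hlt
  · exact (aux hx hy hn hm hlt).elim
  · rw [hn, hm, heq]
  · exact (aux hy hx hm hn hlt).elim

/-- A continuous nonvanishing function on `ℂ` cannot be the identity near infinity. -/
lemma not_nonvanishing_eq_id_of_large {h : ℂ → ℂ} (hc : Continuous h) (h0 : ∀ z, h z ≠ 0) {R : ℝ}
    (hR : ∀ z, R < ‖z‖ → h z = z) : False := by
  have : ContractibleSpace (univ : Set ℂ) := (Homeomorph.Set.univ ℂ).contractibleSpace
  have hsc : IsSimplyConnected (univ : Set ℂ) := by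
    unfold IsSimplyConnected; infer_instance
  obtain ⟨L, hL, hLe⟩ := Complex.exists_continuousOn_eqOn_exp_comp (U := (univ : Set ℂ)) (g := h)
    hsc isOpen_univ hc.continuousOn
    (by rintro ⟨z, -, hz⟩; exact h0 z hz)
  set r := |R| + 1 with hr
  have hr0 : 0 < r := by positivity
  have hrR : R < r := by rw [hr]; linarith [le_abs_self R]
  let e : ℝ → ℂ := fun θ => Real.log r + θ * Complex.I
  have he : ∀ θ, Complex.exp (L (Complex.exp (e θ))) = Complex.exp (e θ) := by
    intro θ
    have h1 := hLe (mem_univ (Complex.exp (e θ)))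
    simp only [Function.comp_apply] at h1
    rw [h1]
    apply hR
    rw [Complex.norm_exp]
    simp [e, Real.exp_log hr0, hrR]
  have hc1 : Continuous fun θ => L (Complex.exp (e θ)) := by
    have : Continuous L := continuousOn_univ.mp hL
    fun_prop
  have := log_sub_const isPreconnected_univ hc1.continuousOn
    (g := e) (by fun_prop) (fun z _ => he z) (mem_univ 0) (mem_univ (2 * Real.pi))
  have h2 : Complex.exp (e 0) = Complex.exp (e (2 * Real.pi)) := by
    simp [e, Complex.exp_add]
  rw [h2] at this
  have h3 : e 0 = e (2 * Real.pi) := sub_right_injective this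
  simp [e, Real.pi_ne_zero] at h3

lemma not_hasLog_of_bounded {k : Set ℂ} (hk : IsCompact k) {w : ℂ} (hw : w ∉ k)
    (hb : Bornology.IsBounded (connectedComponentIn kᶜ w)) : ¬ HasLog k w := by
  rintro ⟨g, hg, hge⟩
  set U := connectedComponentIn kᶜ w with hU
  have hUo : IsOpen U := hk.isClosed.isOpen_compl.connectedComponentIn
  have hwU : w ∈ U := mem_connectedComponentIn hw
  have hfr : frontier U ⊆ k := by
    intro x hx
    by_contra hxk
    have hV : IsOpen (connectedComponentIn kᶜ x) := hk.isClosed.isOpen_compl.connectedComponentIn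
    obtain ⟨y, hy1, hy2⟩ := mem_closure_iff.mp hx.1 _ hV (mem_connectedComponentIn hxk)
    have e1 := connectedComponentIn_eq hy1
    have e2 := connectedComponentIn_eq hy2
    have : x ∈ U := by
      rw [hU, e2, ← e1]; exact mem_connectedComponentIn hxk
    exact hx.2 (by rwa [hUo.interior_eq])
  obtain ⟨G, hG⟩ := ContinuousMap.exists_restrict_eq hk.isClosed
    ⟨k.domRestrict g, continuousOn_iff_continuous_domRestrict.mp hg⟩
  have hGk : ∀ z ∈ k, G z = g z := fun z hz => DFunLike.congr_fun hG ⟨z, hz⟩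
  classical
  let h : ℂ → ℂ := fun z => if z ∈ U then Complex.exp (G z) else z - w
  have hcont : Continuous h := by
    refine Continuous.if ?_ (by fun_prop) (by fun_prop)
    intro a ha
    have := hfr ha
    rw [hGk a this, hge a this]
  have hne : ∀ z, h z ≠ 0 := by
    intro z
    by_cases hz : z ∈ U
    · simp [h, hz]
    · simp only [h, hz, if_false]
      intro h0
      rw [sub_eq_zero] at h0
      exact hz (h0 ▸ hwU)
  obtain ⟨R, hR⟩ := hb.subset_closedBall w
  refine not_nonvanishing_eq_id_of_large (h := fun z => h (z + w)) (by fun_prop)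
    (fun z => hne _) (R := R) ?_
  intro z hz
  have : z + w ∉ U := fun hm => by
    have := hR hm
    simp [dist_eq_norm] at this
    linarith
  simp [h, this]

/-- Pasting continuous logarithms over compact sets with preconnected intersection. -/
lemma HasLog.union {k l : Set ℂ} (hk : IsCompact k) (hl : IsCompact l)
    (hkl : IsPreconnected (k ∩ l)) {w : ℂ} (h1 : HasLog k w) (h2 : HasLog l w) :
    HasLog (k ∪ l) w := by
  obtain ⟨f, hf, hfe⟩ := h1
  obtain ⟨g, hg, hge⟩ := h2
  obtain ⟨c, hc, hce⟩ : ∃ c : ℂ, (∀ z ∈ k ∩ l, f z = g z + c) ∧ Complex.exp c = 1 := by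
    rcases (k ∩ l).eq_empty_or_nonempty with h | ⟨x, hx⟩
    · exact ⟨0, by simp [h], by simp⟩
    · refine ⟨f x - g x, fun z hz => ?_, ?_⟩
      · rw [log_sub_const hkl (hf.mono inter_subset_left) (hg.mono inter_subset_right)
          (fun z hz => by rw [hfe z hz.1, hge z hz.2]) hx hz]
        ring
      · rw [Complex.exp_sub, hfe x hx.1, hge x hx.2, div_self]
        rw [← hfe x hx.1]; exact Complex.exp_ne_zero _
  classical
  let F : ℂ → ℂ := fun z => if z ∈ k then f z else g z + c
  have hFk : EqOn F f k := fun z hz => by simp [F, hz]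
  have hFl : EqOn F (fun z => g z + c) l := fun z hz => by
    by_cases hzk : z ∈ k
    · simp only [F, hzk, if_true]; exact hc z ⟨hzk, hz⟩
    · simp [F, hzk]
  refine ⟨F, ?_, ?_⟩
  · exact (hf.congr hFk).union_of_isClosed ((hg.add continuousOn_const).congr hFl)
      hk.isClosed hl.isClosed
  · rintro z (hz | hz)
    · rw [hFk hz, hfe z hz]
    · rw [hFl hz, Complex.exp_add, hce, mul_one, hge z hz]

lemma hasLog_iff {k : Set ℂ} (hk : IsCompact k) {w : ℂ} (hw : w ∉ k) :
    HasLog k w ↔ ¬ Bornology.IsBounded (connectedComponentIn kᶜ w) := by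
  refine ⟨fun h hb => not_hasLog_of_bounded hk hw hb h, fun h => ?_⟩
  obtain ⟨R, hR⟩ := hk.isBounded.subset_closedBall 0
  obtain ⟨w', hw', hlarge⟩ : ∃ w' ∈ connectedComponentIn kᶜ w, R < ‖w'‖ := by
    by_contra! hcon
    exact h ((isBounded_closedBall (x := 0) (r := R)).subset fun z hz => by simpa using hcon z hz)
  exact (HasLog.of_large hR hlarge).of_preconnected hk isPreconnected_connectedComponentIn
    (connectedComponentIn_subset _ _) hw' (mem_connectedComponentIn hw)

lemma not_bounded_component_union {k l : Set ℂ} (hk : IsCompact k) (hl : IsCompact l)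
    (hkl : IsPreconnected (k ∩ l)) {w : ℂ} (hwk : w ∉ k) (hwl : w ∉ l)
    (h1 : ¬ Bornology.IsBounded (connectedComponentIn kᶜ w))
    (h2 : ¬ Bornology.IsBounded (connectedComponentIn lᶜ w)) :
    ¬ Bornology.IsBounded (connectedComponentIn (k ∪ l)ᶜ w) := by
  rw [← hasLog_iff hk hwk] at h1
  rw [← hasLog_iff hl hwl] at h2
  rw [← hasLog_iff (hk.union hl) (by simp [hwk, hwl])]
  exact h1.union hk hl hkl h2

/-- `x` and `y` lie in a common preconnected subset of `S`. -/
def Linked {E : Type*} [TopologicalSpace E] (S : Set E) (x y : E) : Prop :=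
  ∃ C ⊆ S, IsPreconnected C ∧ x ∈ C ∧ y ∈ C

section Linked

variable {E : Type*} [TopologicalSpace E] {S T : Set E} {x y z : E}

lemma Linked.refl (hx : x ∈ S) : Linked S x x :=
  ⟨{x}, by simpa, isPreconnected_singleton, rfl, rfl⟩

lemma Linked.symm (h : Linked S x y) : Linked S y x := by
  obtain ⟨C, hC, h1, h2, h3⟩ := h
  exact ⟨C, hC, h1, h3, h2⟩

lemma Linked.trans (h : Linked S x y) (h' : Linked S y z) : Linked S x z := by
  obtain ⟨C, hC, h1, h2, h3⟩ := h
  obtain ⟨D, hD, k1, k2, k3⟩ := h'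
  exact ⟨C ∪ D, union_subset hC hD, h1.union y h3 k2 k1, Or.inl h2, Or.inr k3⟩

lemma Linked.mono (h : Linked S x y) (hST : S ⊆ T) : Linked T x y := by
  obtain ⟨C, hC, h1⟩ := h
  exact ⟨C, hC.trans hST, h1⟩

lemma Linked.left (h : Linked S x y) : x ∈ S := by
  obtain ⟨C, hC, h1, h2, h3⟩ := h
  exact hC h2

lemma Linked.right (h : Linked S x y) : y ∈ S := h.symm.left

lemma Linked.mem_component (h : Linked S x y) : y ∈ connectedComponentIn S x := by
  obtain ⟨C, hC, h1, h2, h3⟩ := h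
  exact h1.subset_connectedComponentIn h2 hC h3

lemma linked_of_mem_component (h : y ∈ connectedComponentIn S x) : Linked S x y := by
  have hx : x ∈ S := by
    by_contra hx
    rw [connectedComponentIn_eq_empty hx] at h
    exact h
  exact ⟨_, connectedComponentIn_subset S x, isPreconnected_connectedComponentIn,
    mem_connectedComponentIn hx, h⟩

lemma _root_.IsPreconnected.linked (h : IsPreconnected S) (hx : x ∈ S) (hy : y ∈ S) : Linked S x y :=
  ⟨S, subset_rfl, h, hx, hy⟩

lemma isPreconnected_of_linked (h : ∀ x ∈ S, ∀ y ∈ S, Linked S x y) : IsPreconnected S :=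
  isPreconnected_of_forall_pair fun x hx y hy => by
    obtain ⟨C, hC, h1, h2, h3⟩ := h x hx y hy
    exact ⟨C, hC, h2, h3, h1⟩

lemma Linked.image {F : Type*} [TopologicalSpace F] {f : E → F} (h : Linked S x y)
    (hf : ContinuousOn f S) : Linked (f '' S) (f x) (f y) := by
  obtain ⟨C, hC, h1, h2, h3⟩ := h
  exact ⟨f '' C, image_mono hC, h1.image f (hf.mono hC), mem_image_of_mem f h2,
    mem_image_of_mem f h3⟩

end Linked

/-- Janiszewski's property: if neither of two closed sets with preconnected intersection separates
two points, then their union does not either. -/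
def Janis (E : Type*) [TopologicalSpace E] : Prop :=
  ∀ K L : Set E, IsClosed K → IsClosed L → IsPreconnected (K ∩ L) →
    ∀ u v, Linked Kᶜ u v → Linked Lᶜ u v → Linked (K ∪ L)ᶜ u v

lemma Janis.of_homeomorph {E F : Type*} [TopologicalSpace E] [TopologicalSpace F] (e : E ≃ₜ F)
    (h : Janis F) : Janis E := by
  intro K L hK hL hKL u v h1 h2
  have key : ∀ S : Set E, Linked S u v ↔ Linked (e '' S) (e u) (e v) := by
    intro S
    refine ⟨fun h => h.image e.continuous.continuousOn, fun h => ?_⟩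
    have := h.image e.symm.continuous.continuousOn
    simpa [image_image] using this
  rw [key, e.image_compl] at h1 h2
  rw [key, e.image_compl, image_union]
  refine h _ _ (e.isClosed_image.mpr hK) (e.isClosed_image.mpr hL) ?_ _ _ h1 h2
  rw [← image_inter e.injective]
  exact hKL.image e e.continuous.continuousOn

section Sphere

variable {S : Type*} [TopologicalSpace S] [CompactSpace S] [T2Space S]

lemma linked_iff_not_bounded {φ : ℂ → S} (hφ : Topology.IsOpenEmbedding φ) {v : S}
    (hr : range φ = {v}ᶜ) {K : Set S} (hK : IsClosed K) (hv : v ∉ K) {w : ℂ} (hw : φ w ∉ K) :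
    Linked Kᶜ (φ w) v ↔ ¬ Bornology.IsBounded (connectedComponentIn (φ ⁻¹' K)ᶜ w) := by
  set k := φ ⁻¹' K with hk
  set U := connectedComponentIn kᶜ w with hU
  have hkc : IsClosed k := hK.preimage hφ.continuous
  have hUo : IsOpen U := hkc.isOpen_compl.connectedComponentIn
  have hwU : w ∈ U := mem_connectedComponentIn hw
  have hvr : ∀ z, φ z ≠ v := fun z => by
    have : φ z ∈ range φ := mem_range_self z
    rw [hr] at this; exact this
  constructor
  · rintro ⟨C, hC, hCp, hwC, hvC⟩ hb
    have hcl : closure U ⊆ U ∪ k := by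
      intro x hx
      by_contra hxk
      rw [mem_union, not_or] at hxk
      have hV : IsOpen (connectedComponentIn kᶜ x) := hkc.isOpen_compl.connectedComponentIn
      obtain ⟨y, hy1, hy2⟩ := mem_closure_iff.mp hx _ hV (mem_connectedComponentIn hxk.2)
      apply hxk.1
      rw [hU, connectedComponentIn_eq hy2, ← connectedComponentIn_eq hy1]
      exact mem_connectedComponentIn hxk.2
    have hcc : IsClosed (φ '' closure U) :=
      (hb.isCompact_closure.image hφ.continuous).isClosed
    have := hCp.subset_left_of_subset_union (hφ.isOpenMap U hUo) hcc.isOpen_compl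
      (disjoint_compl_right.mono_left (image_mono subset_closure)) ?_ ⟨φ w, hwC, w, hwU, rfl⟩
    · obtain ⟨z, -, hz⟩ := this hvC
      exact hvr z hz
    · intro x hx
      by_cases hxc : x ∈ φ '' closure U
      · left
        obtain ⟨z, hz, rfl⟩ := hxc
        rcases hcl hz with h | h
        · exact ⟨z, h, rfl⟩
        · exact (hC hx h).elim
      · exact Or.inr hxc
  · intro hb
    have hvc : v ∈ closure (φ '' U) := by
      by_contra hvc
      apply hb
      have hsub : closure (φ '' U) ⊆ range φ := by
        rw [hr]; rintro x hx rfl; exact hvc hx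
      have := (hφ.isInducing.isCompact_preimage_iff hsub).mpr isClosed_closure.isCompact
      exact this.isBounded.subset fun z hz => subset_closure (mem_image_of_mem φ hz)
    refine ⟨insert v (φ '' U), ?_, ?_, Or.inr ⟨w, hwU, rfl⟩, Or.inl rfl⟩
    · rintro x (rfl | ⟨z, hz, rfl⟩)
      · exact hv
      · exact connectedComponentIn_subset kᶜ w hz
    · refine (isPreconnected_connectedComponentIn.image φ hφ.continuous.continuousOn).subset_closure
        (subset_insert _ _) ?_
      exact insert_subset hvc subset_closure

lemma janis_of_openEmbedding
    (h : ∀ v : S, ∃ φ : ℂ → S, Topology.IsOpenEmbedding φ ∧ range φ = {v}ᶜ) : Janis S := by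
  intro K L hK hL hKL u v h1 h2
  by_cases huv : u = v
  · subst huv
    exact Linked.refl (by simpa using ⟨h1.left, h2.left⟩)
  obtain ⟨φ, hφ, hr⟩ := h v
  obtain ⟨w, rfl⟩ : u ∈ range φ := by rw [hr]; exact huv
  have hvK : v ∉ K := h1.right
  have hvL : v ∉ L := h2.right
  have hwK : φ w ∉ K := h1.left
  have hwL : φ w ∉ L := h2.left
  have hsub : ∀ M : Set S, v ∉ M → M ⊆ range φ := by
    rintro M hM x hx
    rw [hr]; rintro rfl; exact hM hx
  rw [linked_iff_not_bounded hφ hr hK hvK hwK] at h1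
  rw [linked_iff_not_bounded hφ hr hL hvL hwL] at h2
  rw [linked_iff_not_bounded hφ hr (hK.union hL) (by simp [hvK, hvL]) (by simp [hwK, hwL]),
    preimage_union]
  refine not_bounded_component_union
    ((hφ.isInducing.isCompact_preimage_iff (hsub K hvK)).mpr hK.isCompact)
    ((hφ.isInducing.isCompact_preimage_iff (hsub L hvL)).mpr hL.isCompact) ?_ hwK hwL h1 h2
  rw [← preimage_inter, ← hφ.isInducing.isPreconnected_image, image_preimage_eq_of_subset]
  · exact hKL
  · exact hsub _ (fun h => hvK h.1)

end Sphere

/-- The standard 2-sphere. -/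
abbrev S2 : Type := Metric.sphere (0 : EuclideanSpace ℝ (Fin 3)) 1

lemma exists_stereographic (v : S2) : ∃ φ : ℂ → S2, Topology.IsOpenEmbedding φ ∧ range φ = {v}ᶜ := by
  have : Fact (Module.finrank ℝ (EuclideanSpace ℝ (Fin 3)) = 2 + 1) := ⟨by simp⟩
  let e := stereographic' 2 v
  let L : ℂ ≃ₜ EuclideanSpace ℝ (Fin 2) := Complex.orthonormalBasisOneI.repr.toHomeomorph
  have ht : e.symm.source = univ := by simp [e]
  have hs : e.source = {v}ᶜ := by simp [e]
  refine ⟨e.symm ∘ L, (e.symm.isOpenEmbedding ht).comp L.isOpenEmbedding, ?_⟩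
  rw [L.surjective.range_comp]
  have := e.symm.image_source_eq_target
  rw [ht, image_univ] at this
  rw [this]
  exact hs

lemma janis_S2 : Janis S2 := janis_of_openEmbedding exists_stereographic

lemma isPreconnected_compl_singleton_S2 (v : S2) : IsPreconnected ({v}ᶜ : Set S2) := by
  obtain ⟨φ, hφ, hr⟩ := exists_stereographic v
  rw [← hr]
  exact isPreconnected_range hφ.continuous

/-- Every two points are joined by a constant speed geodesic. -/
def Geod (E : Type*) [MetricSpace E] : Prop :=
  ∀ x y : E, ∃ f : ℝ → E, f 0 = x ∧ f 1 = y ∧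
    ∀ s ∈ Icc (0 : ℝ) 1, ∀ t ∈ Icc (0 : ℝ) 1, dist (f s) (f t) = |s - t| * dist x y

lemma exists_geodesic_of_approx {E : Type*} [MetricSpace E] [CompactSpace E] {x y : E}
    (h : ∀ ε > 0, ∃ f : ℝ → E, dist (f 0) x ≤ ε ∧ dist (f 1) y ≤ ε ∧
      ∀ s ∈ Icc (0 : ℝ) 1, ∀ t ∈ Icc (0 : ℝ) 1, dist (f s) (f t) ≤ |s - t| * dist x y + ε) :
    ∃ f : ℝ → E, f 0 = x ∧ f 1 = y ∧
      ∀ s ∈ Icc (0 : ℝ) 1, ∀ t ∈ Icc (0 : ℝ) 1, dist (f s) (f t) = |s - t| * dist x y := by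
  have hpos : ∀ n : ℕ, (0 : ℝ) < 1 / ((n : ℝ) + 1) := fun n => Nat.one_div_pos_of_nat
  choose f h0 h1 hf using fun n : ℕ => h _ (hpos n)
  have hlim : Tendsto (fun n : ℕ => 1 / ((n : ℝ) + 1)) (hyperfilter ℕ) (nhds 0) :=
    tendsto_one_div_add_atTop_nhds_zero_nat.mono_left
      (Nat.hyperfilter_le_atTop)
  have : Nonempty (ℝ → E) := ⟨f 0⟩
  let g := ((hyperfilter ℕ).map f).lim
  have hg : Tendsto f (hyperfilter ℕ) (nhds g) := ((hyperfilter ℕ).map f).le_nhds_lim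
  rw [tendsto_pi_nhds] at hg
  have g0 : g 0 = x := by
    have := le_of_tendsto_of_tendsto ((hg 0).dist tendsto_const_nhds) hlim
      (Eventually.of_forall fun n => h0 n)
    exact dist_le_zero.mp this
  have g1 : g 1 = y := by
    have := le_of_tendsto_of_tendsto ((hg 1).dist tendsto_const_nhds) hlim
      (Eventually.of_forall fun n => h1 n)
    exact dist_le_zero.mp this
  have hle : ∀ s ∈ Icc (0 : ℝ) 1, ∀ t ∈ Icc (0 : ℝ) 1, dist (g s) (g t) ≤ |s - t| * dist x y := by
    intro s hs t ht
    have := le_of_tendsto_of_tendsto ((hg s).dist (hg t)) (hlim.const_add (|s - t| * dist x y))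
      (Eventually.of_forall fun n => hf n s hs t ht)
    simpa using this
  have heq : ∀ s ∈ Icc (0 : ℝ) 1, ∀ t ∈ Icc (0 : ℝ) 1, s ≤ t →
      dist (g s) (g t) = |s - t| * dist x y := by
    intro s hs t ht hst
    refine le_antisymm (hle s hs t ht) ?_
    have a1 := hle 0 (by simp) s hs
    have a2 := hle t ht 1 (by simp)
    have a3 := dist_triangle4 (g 0) (g s) (g t) (g 1)
    rw [g0, g1] at *
    rw [abs_of_nonpos (by linarith [hs.1])] at a1
    rw [abs_of_nonpos (by linarith [ht.2])] at a2
    rw [abs_of_nonpos (by linarith)]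
    linarith
  refine ⟨g, g0, g1, fun s hs t ht => ?_⟩
  rcases le_total s t with hst | hst
  · exact heq s hs t ht hst
  · rw [dist_comm, abs_sub_comm]; exact heq t ht s hs hst

section

variable {E : Type*} [MetricSpace E]

lemma Geod.exists_path (hE : Geod E) (x y : E) : ∃ f : ℝ → E, f 0 = x ∧ f 1 = y ∧
    ContinuousOn f (Icc 0 1) ∧ (∀ t ∈ Icc (0 : ℝ) 1, dist x (f t) ≤ dist x y) := by
  obtain ⟨f, f0, f1, hf⟩ := hE x y
  refine ⟨f, f0, f1, ?_, ?_⟩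
  · have : LipschitzOnWith ⟨dist x y, dist_nonneg⟩ f (Icc 0 1) := by
      refine LipschitzOnWith.of_dist_le_mul fun s hs t ht => ?_
      rw [hf s hs t ht, Real.dist_eq, mul_comm]
      rfl
    exact this.continuousOn
  · intro t ht
    have := hf 0 (by simp) t ht
    rw [f0] at this
    rw [this, zero_sub, abs_neg, abs_of_nonneg ht.1]
    exact mul_le_of_le_one_left dist_nonneg ht.2

lemma Geod.linked (hE : Geod E) {x y : E} {r : ℝ} (h : dist x y ≤ r) :
    Linked (closedBall x r) x y := by
  obtain ⟨f, f0, f1, hf, hd⟩ := hE.exists_path x y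
  refine ⟨f '' Icc 0 1, ?_, isPreconnected_Icc.image f hf, ⟨0, by simp, f0⟩, ⟨1, by simp, f1⟩⟩
  rintro _ ⟨t, ht, rfl⟩
  rw [mem_closedBall, dist_comm]
  exact (hd t ht).trans h

lemma Geod.isPreconnected_closedBall (hE : Geod E) (x : E) (r : ℝ) :
    IsPreconnected (closedBall x r) := by
  refine isPreconnected_of_linked fun y hy z hz => ?_
  exact (hE.linked (by rwa [dist_comm, ← mem_closedBall])).symm.trans
    (hE.linked (by rwa [dist_comm, ← mem_closedBall]))

lemma Geod.isPreconnected_ball (hE : Geod E) (x : E) (r : ℝ) :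
    IsPreconnected (ball x r) := by
  have key : ∀ y ∈ ball x r, Linked (ball x r) x y := fun y hy =>
    (hE.linked (le_refl (dist x y))).mono (closedBall_subset_ball (by rwa [dist_comm]))
  exact isPreconnected_of_linked fun y hy z hz => (key y hy).symm.trans (key z hz)

lemma Geod.preconnectedSpace (hE : Geod E) : PreconnectedSpace E :=
  ⟨isPreconnected_of_linked fun x _ y _ =>
    (hE.linked (le_refl (dist x y))).mono (subset_univ _)⟩

lemma Geod.locallyConnectedSpace (hE : Geod E) : LocallyConnectedSpace E :=
  locallyConnectedSpace_of_connected_bases (fun x (r : ℝ) => ball x r) (fun _ r => 0 < r)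
    (fun _ => nhds_basis_ball) (fun x r _ => hE.isPreconnected_ball x r)

/-- Compact preconnected sets inside an open set. -/
lemma Geod.linked_compact [CompactSpace E] (hE : Geod E) {U : Set E} (hU : IsOpen U) {x y : E}
    (h : Linked U x y) : ∃ C ⊆ U, IsCompact C ∧ IsPreconnected C ∧ x ∈ C ∧ y ∈ C := by
  obtain ⟨D, hDU, hD, hx, hy⟩ := h
  refine hD.induction₂ (P := fun x y => ∃ C ⊆ U, IsCompact C ∧ IsPreconnected C ∧ x ∈ C ∧ y ∈ C)
    ?_ ?_ ?_ hx hy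
  · intro z hz
    obtain ⟨r, hr, hrU⟩ := nhds_basis_closedBall.mem_iff.mp (hU.mem_nhds (hDU hz))
    filter_upwards [mem_nhdsWithin_of_mem_nhds (closedBall_mem_nhds z hr)] with w hw
    exact ⟨closedBall z r, hrU, isClosed_closedBall.isCompact, hE.isPreconnected_closedBall z r,
      mem_closedBall_self hr.le, hw⟩
  · rintro a b c - - - ⟨C, hC, h1, h2, h3, h4⟩ ⟨C', hC', h1', h2', h3', h4'⟩
    exact ⟨C ∪ C', union_subset hC hC', h1.union h1', h2.union b h4 h3' h2', Or.inl h3, Or.inr h4'⟩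
  · rintro a b - - ⟨C, hC, h1, h2, h3, h4⟩
    exact ⟨C, hC, h1, h2, h4, h3⟩

end

/-- `X` and `Y` are `τ`-close in the Gromov-Hausdorff sense, witnessed by almost isometries. -/
def Approx (X Y : Type*) [MetricSpace X] [MetricSpace Y] (τ : ℝ) : Prop :=
  ∃ (a : X → Y) (b : Y → X), (∀ x x', |dist (a x) (a x') - dist x x'| ≤ τ) ∧
    (∀ y y', |dist (b y) (b y') - dist y y'| ≤ τ) ∧ (∀ x, dist (b (a x)) x ≤ τ) ∧
    (∀ y, dist (a (b y)) y ≤ τ)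

lemma geod_of_approx {X : Type} [MetricSpace X] [CompactSpace X]
    (h : ∀ τ > 0, ∃ (Y : Type) (_ : MetricSpace Y), Geod Y ∧ Approx X Y τ) : Geod X := by
  intro x y
  refine exists_geodesic_of_approx fun ε hε => ?_
  obtain ⟨Y, _, hY, a, b, ha, hb, hba, hab⟩ := h (ε / 2) (by positivity)
  obtain ⟨g, g0, g1, hg⟩ := hY (a x) (a y)
  refine ⟨fun t => b (g t), ?_, ?_, ?_⟩
  · simp only [g0]; linarith [hba x]
  · simp only [g1]; linarith [hba y]
  · intro s hs t ht
    have h1 := (abs_le.mp (hb (g s) (g t))).2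
    have h2 := (abs_le.mp (ha x y)).2
    have h3 := hg s hs t ht
    have h4 : |s - t| ≤ 1 := abs_le.mpr ⟨by linarith [hs.1, ht.2], by linarith [hs.2, ht.1]⟩
    have h5 : |s - t| * dist (a x) (a y) ≤ |s - t| * (dist x y + ε / 2) :=
      mul_le_mul_of_nonneg_left (by linarith) (abs_nonneg _)
    have h6 : |s - t| * (ε / 2) ≤ 1 * (ε / 2) := mul_le_mul_of_nonneg_right h4 (by positivity)
    linarith

lemma linked_transfer {A B : Type*} [MetricSpace A] [MetricSpace B] (hB : Geod B) {a : A → B}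
    {τ : ℝ} (hτ : 0 < τ) (ha : ∀ x x', dist (a x) (a x') ≤ dist x x' + τ) {C : Set A}
    (hC : IsPreconnected C) {S : Set B} (hS : ∀ c ∈ C, closedBall (a c) (2 * τ) ⊆ S) {x y : A}
    (hx : x ∈ C) (hy : y ∈ C) : Linked S (a x) (a y) := by
  refine hC.induction₂ (P := fun x y => Linked S (a x) (a y)) ?_ ?_ ?_ hx hy
  · intro z hz
    filter_upwards [mem_nhdsWithin_of_mem_nhds (closedBall_mem_nhds z hτ)] with w hw
    refine (hB.linked ?_).mono (hS z hz)
    have := ha z w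
    rw [mem_closedBall, dist_comm] at hw
    linarith
  · intro u v w _ _ _ h1 h2
    exact h1.trans h2
  · intro u v _ _ h1
    exact h1.symm

lemma janis_of_approx {X : Type} [MetricSpace X] [CompactSpace X] (hX : Geod X)
    (h : ∀ τ > 0, ∃ (Y : Type) (_ : MetricSpace Y), Geod Y ∧ Janis Y ∧ Approx X Y τ) :
    Janis X := by
  intro K₁ K₂ hK₁ hK₂ hI u v h1 h2
  obtain ⟨C₁, hC₁, hC₁c, hC₁p, hu₁, hv₁⟩ := hX.linked_compact hK₁.isOpen_compl h1
  obtain ⟨C₂, hC₂, hC₂c, hC₂p, hu₂, hv₂⟩ := hX.linked_compact hK₂.isOpen_compl h2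
  have sep : ∀ C K : Set X, IsCompact C → IsClosed K → C ⊆ Kᶜ → ∃ e > 0, ∀ c ∈ C, ∀ k ∈ K,
      e ≤ dist c k := by
    intro C K hC hK hCK
    obtain ⟨δ, hδ, hd⟩ := Metric.exists_pos_forall_lt_edist hC hK
      (Set.disjoint_left.mpr fun x hx hx' => hCK hx hx')
    refine ⟨δ, hδ, fun c hc k hk => ?_⟩
    have := hd c hc k hk
    rw [edist_nndist] at this
    have h3 : δ < nndist c k := by exact_mod_cast this
    exact (NNReal.coe_lt_coe.mpr h3).le
  obtain ⟨e₁, he₁, hd₁⟩ := sep C₁ K₁ hC₁c hK₁ hC₁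
  obtain ⟨e₂, he₂, hd₂⟩ := sep C₂ K₂ hC₂c hK₂ hC₂
  obtain ⟨e, he, hee₁, hee₂⟩ : ∃ e > 0, e ≤ e₁ ∧ e ≤ e₂ :=
    ⟨min e₁ e₂, lt_min he₁ he₂, min_le_left _ _, min_le_right _ _⟩
  set r := e / 4 with hr
  obtain ⟨ε, hε, hεe, hεI⟩ : ∃ ε > 0, ε ≤ e / 4 ∧ ∀ x, ∀ k₁ ∈ K₁, ∀ k₂ ∈ K₂, dist x k₁ ≤ 2 * ε →
      dist x k₂ ≤ 2 * ε → ∃ i ∈ K₁ ∩ K₂, dist x i ≤ r / 2 := by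
    let U := ⋃ i ∈ K₁ ∩ K₂, ball i (r / 4)
    have hUo : IsOpen U := isOpen_biUnion fun i _ => isOpen_ball
    obtain ⟨η, hη, hs⟩ := sep (K₁ \ U) K₂ (hK₁.isCompact.diff hUo) hK₂ (by
      intro x hx hx2
      exact hx.2 (mem_biUnion (show x ∈ K₁ ∩ K₂ from ⟨hx.1, hx2⟩)
        (mem_ball_self (by positivity))))
    refine ⟨min (e / 32) (η / 8), by positivity, (min_le_left _ _).trans (by linarith), ?_⟩
    intro x k₁ hk₁ k₂ hk₂ h1 h2
    have m1 := min_le_left (e / 32) (η / 8)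
    have m2 := min_le_right (e / 32) (η / 8)
    by_cases hkU : k₁ ∈ U
    · obtain ⟨i, hi, hik⟩ := mem_iUnion₂.mp hkU
      rw [mem_ball] at hik
      refine ⟨i, hi, ?_⟩
      linarith [dist_triangle x k₁ i]
    · have := hs k₁ ⟨hk₁, hkU⟩ k₂ hk₂
      have := dist_triangle_left k₁ k₂ x
      linarith
  set τ := ε / 16 with hτ
  have hτ0 : 0 < τ := by positivity
  obtain ⟨Y, _, hYG, hYJ, a, b, ha, hb, hba, hab⟩ := h τ hτ0
  have ha1 : ∀ x x', dist (a x) (a x') ≤ dist x x' + τ := fun x x' => by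
    linarith [(abs_le.mp (ha x x')).2]
  have ha2 : ∀ x x', dist x x' ≤ dist (a x) (a x') + τ := fun x x' => by
    linarith [(abs_le.mp (ha x x')).1]
  have hb1 : ∀ x x', dist (b x) (b x') ≤ dist x x' + τ := fun x x' => by
    linarith [(abs_le.mp (hb x x')).2]
  let N : Set X → ℝ → Set Y := fun S ρ => closure (⋃ k ∈ S, closedBall (a k) ρ)
  have hN : ∀ S ρ y, y ∈ N S ρ → ∀ σ > ρ, ∃ k ∈ S, dist y (a k) < σ := by
    intro S ρ y hy σ hσ
    obtain ⟨z, hz, hyz⟩ := Metric.mem_closure_iff.mp hy (σ - ρ) (by linarith)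
    obtain ⟨k, hk, hzk⟩ := mem_iUnion₂.mp hz
    rw [mem_closedBall] at hzk
    exact ⟨k, hk, by linarith [dist_triangle y z (a k)]⟩
  have hN' : ∀ S ρ, ∀ k ∈ S, closedBall (a k) ρ ⊆ N S ρ := fun S ρ k hk =>
    (subset_biUnion_of_mem (u := fun k => closedBall (a k) ρ) hk).trans subset_closure
  set L := N (K₁ ∩ K₂) r with hL
  have hLp : IsPreconnected L := by
    refine IsPreconnected.closure (isPreconnected_of_linked ?_)
    have key : ∀ x ∈ ⋃ k ∈ K₁ ∩ K₂, closedBall (a k) r, ∃ k ∈ K₁ ∩ K₂,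
        Linked (⋃ k ∈ K₁ ∩ K₂, closedBall (a k) r) (a k) x := by
      intro x hx
      obtain ⟨k, hk, hxk⟩ := mem_iUnion₂.mp hx
      refine ⟨k, hk, (hYG.linked (r := r) ?_).mono
        (subset_biUnion_of_mem (u := fun k => closedBall (a k) r) hk)⟩
      rwa [dist_comm, ← mem_closedBall]
    intro x hx y hy
    obtain ⟨k, hk, h1⟩ := key x hx
    obtain ⟨l, hl, h2⟩ := key y hy
    refine h1.symm.trans (Linked.trans ?_ h2)
    refine linked_transfer hYG hτ0 ha1 hI (fun c hc => ?_) hk hl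
    exact (closedBall_subset_closedBall (by linarith)).trans
      (subset_biUnion_of_mem (u := fun k => closedBall (a k) r) hc)
  have hcap : (N K₁ ε ∪ L) ∩ (N K₂ ε ∪ L) = L := by
    rw [← inter_union_distrib_right]
    refine union_eq_right.mpr ?_
    rintro y ⟨hy1, hy2⟩
    obtain ⟨k₁, hk₁, hd1⟩ := hN _ _ _ hy1 (3 / 2 * ε) (by linarith)
    obtain ⟨k₂, hk₂, hd2⟩ := hN _ _ _ hy2 (3 / 2 * ε) (by linarith)
    obtain ⟨i, hi, hid⟩ := hεI (b y) k₁ hk₁ k₂ hk₂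
      (by linarith [dist_triangle (b y) (b (a k₁)) k₁, hb1 y (a k₁), hba k₁])
      (by linarith [dist_triangle (b y) (b (a k₂)) k₂, hb1 y (a k₂), hba k₂])
    refine hN' _ _ i hi ?_
    rw [mem_closedBall]
    linarith [dist_triangle_left y (a i) (a (b y)), ha1 (b y) i, hab y]
  have hlift : ∀ C K : Set X, K₁ ∩ K₂ ⊆ K → (∀ c ∈ C, ∀ k ∈ K, e ≤ dist c k) →
      ∀ c ∈ C, closedBall (a c) (2 * τ) ⊆ (N K ε ∪ L)ᶜ := by
    intro C K hIK hd c hc y hy hyN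
    rw [mem_closedBall] at hy
    rcases hyN with hyN | hyN
    · obtain ⟨k, hk, hd1⟩ := hN _ _ _ hyN (3 / 2 * ε) (by linarith)
      linarith [hd c hc k hk, ha2 c k, dist_triangle_left (a c) (a k) y]
    · obtain ⟨k, hk, hd1⟩ := hN _ _ _ hyN (2 * r) (by linarith)
      linarith [hd c hc k (hIK hk), ha2 c k, dist_triangle_left (a c) (a k) y]
  have hJ := hYJ (N K₁ ε ∪ L) (N K₂ ε ∪ L) (isClosed_closure.union isClosed_closure)
    (isClosed_closure.union isClosed_closure) (by rw [hcap]; exact hLp) (a u) (a v)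
    (linked_transfer hYG hτ0 ha1 hC₁p
      (hlift C₁ K₁ inter_subset_left fun c hc k hk => hee₁.trans (hd₁ c hc k hk)) hu₁ hv₁)
    (linked_transfer hYG hτ0 ha1 hC₂p
      (hlift C₂ K₂ inter_subset_right fun c hc k hk => hee₂.trans (hd₂ c hc k hk)) hu₂ hv₂)
  obtain ⟨D, hD, hDp, huD, hvD⟩ := hJ
  have hback : ∀ y ∈ D, closedBall (b y) (2 * τ) ⊆ (K₁ ∪ K₂)ᶜ := by
    intro y hy x hx hxK
    rw [mem_closedBall] at hx
    apply hD hy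
    have : dist y (a x) ≤ ε := by
      linarith [dist_triangle_left y (a x) (a (b y)), ha1 (b y) x, hab y, dist_comm x (b y)]
    rcases hxK with hxK | hxK
    · exact Or.inl (Or.inl (hN' _ _ x hxK this))
    · exact Or.inr (Or.inl (hN' _ _ x hxK this))
  refine Linked.trans ?_ ((linked_transfer hX hτ0 hb1 hDp hback huD hvD).trans ?_)
  · exact (hX.linked (by linarith [hba u])).symm.mono (hback _ huD)
  · exact (hX.linked (by linarith [hba v])).mono (hback _ hvD)

lemma geod_of_isLengthSpace {Z : Type} [MetricSpace Z] [CompactSpace Z] (hZ : IsLengthSpace Z) :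
    Geod Z := by
  intro x y
  refine exists_geodesic_of_approx fun ε hε => ?_
  obtain ⟨γ, hγ⟩ : ∃ γ : Path x y, pathLength γ < edist x y + ENNReal.ofReal ε := by
    have h1 : (⨅ γ : Path x y, pathLength γ) < edist x y + ENNReal.ofReal ε := by
      rw [← hZ x y]
      exact ENNReal.lt_add_right (edist_ne_top x y) (by simpa using hε)
    exact iInf_lt_iff.mp h1
  have hsum : ∀ a b : unitInterval, a ≤ b →
      dist x (γ a) + dist (γ a) (γ b) + dist (γ b) y ≤ dist x y + ε := by
    intro a b hab
    have e1 := eVariationOn.Icc_add_Icc γ (s := univ) (a := 0) (b := a) (c := b)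
      unitInterval.nonneg' hab (mem_univ _)
    have e2 := eVariationOn.Icc_add_Icc γ (s := univ) (a := 0) (b := b) (c := 1)
      unitInterval.nonneg' unitInterval.le_one' (mem_univ _)
    have d1 : edist x (γ a) ≤ eVariationOn γ (univ ∩ Icc 0 a) := by
      have := eVariationOn.edist_le γ (s := univ ∩ Icc 0 a) (x := 0) (y := a)
        (by simp) (by simp)
      simpa using this
    have d2 : edist (γ a) (γ b) ≤ eVariationOn γ (univ ∩ Icc a b) :=
      eVariationOn.edist_le γ (by simp [hab]) (by simp [hab])
    have d3 : edist (γ b) y ≤ eVariationOn γ (univ ∩ Icc b 1) := by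
      have := eVariationOn.edist_le γ (s := univ ∩ Icc b 1) (x := b) (y := 1)
        (by simp [unitInterval.le_one']) (by simp [unitInterval.le_one'])
      simpa using this
    have d4 : eVariationOn γ (univ ∩ Icc 0 1) ≤ pathLength γ := eVariationOn.mono _ (subset_univ _)
    have : edist x (γ a) + edist (γ a) (γ b) + edist (γ b) y ≤ edist x y + ENNReal.ofReal ε := by
      refine le_trans (add_le_add (add_le_add d1 d2) d3) ?_
      rw [e1, e2]
      exact d4.trans hγ.le
    simp only [edist_dist] at this
    rw [← ENNReal.ofReal_add dist_nonneg dist_nonneg,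
      ← ENNReal.ofReal_add (by positivity) dist_nonneg,
      ← ENNReal.ofReal_add dist_nonneg hε.le, ENNReal.ofReal_le_ofReal_iff (by positivity)] at this
    exact this
  have hex : ∀ s ∈ Icc (0 : ℝ) 1, ∃ t : unitInterval, dist x (γ t) = s * dist x y := by
    intro s hs
    have hc : Continuous fun t => dist x (γ t) := by fun_prop
    have : s * dist x y ∈ Icc (dist x (γ 0)) (dist x (γ 1)) := by
      simp only [γ.source, γ.target, dist_self]
      exact ⟨mul_nonneg hs.1 dist_nonneg, mul_le_of_le_one_left dist_nonneg hs.2⟩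
    obtain ⟨t, ht⟩ := intermediate_value_univ 0 1 hc this
    exact ⟨t, ht⟩
  choose! t ht using hex
  refine ⟨fun s => γ (t s), ?_, ?_, ?_⟩
  · have := ht 0 (by simp)
    rw [dist_comm, this]; simpa using hε.le
  · have h1 := ht 1 (by simp)
    have h2 := hsum (t 1) (t 1) le_rfl
    simp only [dist_self] at h2
    show dist (γ (t 1)) y ≤ ε
    linarith
  · intro s hs s' hs'
    have a1 := ht s hs
    have a2 := ht s' hs'
    have h5 := le_abs_self (s - s')
    have h6 := neg_abs_le (s - s')
    have h7 : (s - s') * dist x y ≤ |s - s'| * dist x y :=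
      mul_le_mul_of_nonneg_right h5 dist_nonneg
    have h8 : (-|s - s'|) * dist x y ≤ (s - s') * dist x y :=
      mul_le_mul_of_nonneg_right h6 dist_nonneg
    rcases le_total (t s) (t s') with h | h
    · have := hsum _ _ h
      have h4 := dist_triangle x (γ (t s')) y
      linarith
    · have := hsum _ _ h
      have h4 := dist_triangle x (γ (t s)) y
      rw [dist_comm (γ (t s')) (γ (t s))] at this
      linarith

lemma approx_of_ghDist_lt {X Y : Type} [MetricSpace X] [CompactSpace X] [Nonempty X]
    [MetricSpace Y] [CompactSpace Y] [Nonempty Y] {τ : ℝ}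
    (h : ghDist X Y < τ) : Approx X Y (2 * τ) := by
  rw [← hausdorffDist_optimal] at h
  set Φ := optimalGHInjl X Y
  set Ψ := optimalGHInjr X Y
  have hΦ : Isometry Φ := isometry_optimalGHInjl X Y
  have hΨ : Isometry Ψ := isometry_optimalGHInjr X Y
  have hfin : hausdorffEDist (range Φ) (range Ψ) ≠ ⊤ :=
    hausdorffEDist_ne_top_of_nonempty_of_bounded (range_nonempty _) (range_nonempty _)
      (isCompact_range hΦ.continuous).isBounded (isCompact_range hΨ.continuous).isBounded
  have h1 : ∀ x, ∃ y, dist (Φ x) (Ψ y) < τ := fun x => by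
    obtain ⟨_, ⟨y, rfl⟩, hy⟩ := exists_dist_lt_of_hausdorffDist_lt (mem_range_self x) h hfin
    exact ⟨y, hy⟩
  have h2 : ∀ y, ∃ x, dist (Φ x) (Ψ y) < τ := fun y => by
    obtain ⟨_, ⟨x, rfl⟩, hx⟩ := exists_dist_lt_of_hausdorffDist_lt' (mem_range_self y) h hfin
    exact ⟨x, hx⟩
  choose a ha using h1
  choose b hb using h2
  refine ⟨a, b, fun x x' => ?_, fun y y' => ?_, fun x => ?_, fun y => ?_⟩
  · rw [← hΦ.dist_eq, ← hΨ.dist_eq, abs_le]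
    have i1 := ha x
    have i2 := ha x'
    have i3 := dist_triangle4 (Φ x) (Ψ (a x)) (Ψ (a x')) (Φ x')
    have i4 := dist_triangle4 (Ψ (a x)) (Φ x) (Φ x') (Ψ (a x'))
    rw [dist_comm (Ψ (a x')) (Φ x')] at i3
    rw [dist_comm (Ψ (a x)) (Φ x)] at i4
    constructor <;> linarith
  · rw [← hΦ.dist_eq, ← hΨ.dist_eq, abs_le]
    have i1 := hb y
    have i2 := hb y'
    have i3 := dist_triangle4 (Φ (b y)) (Ψ y) (Ψ y') (Φ (b y'))
    have i4 := dist_triangle4 (Ψ y) (Φ (b y)) (Φ (b y')) (Ψ y')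
    rw [dist_comm (Ψ y') (Φ (b y'))] at i3
    rw [dist_comm (Ψ y) (Φ (b y))] at i4
    constructor <;> linarith
  · rw [← hΦ.dist_eq]
    linarith [dist_triangle_right (Φ (b (a x))) (Φ x) (Ψ (a x)), ha x, hb (a x)]
  · rw [← hΨ.dist_eq]
    linarith [dist_triangle_left (Ψ (a (b y))) (Ψ y) (Φ (b y)), ha (b y), hb y]

/-- Geodesic spaces with the Janiszewski property and without cut points. -/
structure Good (E : Type*) [MetricSpace E] : Prop where
  geod : Geod E
  janis : Janis E
  nocut : ∀ p : E, IsPreconnected ({p}ᶜ : Set E)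
  nontrivial : Nontrivial E

lemma good_of_sphere {Z : Type} [MetricSpace Z] [CompactSpace Z] (hZ : IsLengthSpace Z)
    (h : IsTopological2Sphere Z) : Good Z := by
  obtain ⟨e⟩ := h
  refine ⟨geod_of_isLengthSpace hZ, janis_S2.of_homeomorph e, fun p => ?_, ?_⟩
  · have := (isPreconnected_compl_singleton_S2 (e p)).image e.symm e.symm.continuous.continuousOn
    rwa [e.symm.image_compl, image_singleton, e.symm_apply_apply] at this
  · let v : S2 := ⟨EuclideanSpace.single 0 1, by simp⟩
    obtain ⟨φ, hφ, -⟩ := exists_stereographic v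
    exact (e.symm.injective.comp hφ.injective).nontrivial

lemma geod_janis_of_limit {X : Type} [MetricSpace X] [Nonempty X] [CompactSpace X]
    {F : ℕ → GHSpace}
    (hF : ∀ n, ∃ (Z : Type) (m : MetricSpace Z), letI := m;
      ∃ (_ : Nonempty Z) (_ : CompactSpace Z),
        IsLengthSpace Z ∧ IsTopological2Sphere Z ∧ toGHSpace Z = F n)
    (hlim : Tendsto F atTop (nhds (toGHSpace X))) : Geod X ∧ Janis X := by
  have key : ∀ τ > 0, ∃ (Y : Type) (_ : MetricSpace Y), Geod Y ∧ Janis Y ∧ Approx X Y τ := by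
    intro τ hτ
    obtain ⟨n, hn⟩ := (Metric.tendsto_nhds.mp hlim (τ / 2) (by positivity)).exists
    obtain ⟨Z, m, _, _, hZ, hS, hZF⟩ := hF n
    refine ⟨Z, m, geod_of_isLengthSpace hZ, (good_of_sphere hZ hS).janis, ?_⟩
    have : ghDist X Z < τ / 2 := by
      unfold ghDist
      rwa [hZF, dist_comm]
    have := approx_of_ghDist_lt this
    rwa [mul_div_cancel₀ _ two_ne_zero] at this
  have hG : Geod X := geod_of_approx fun τ hτ => by
    obtain ⟨Y, m, h1, -, h2⟩ := key τ hτ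
    exact ⟨Y, m, h1, h2⟩
  exact ⟨hG, janis_of_approx hG key⟩

/-- `S` is an arc with end points `a` and `b`. -/
def IsArc {E : Type*} [TopologicalSpace E] (S : Set E) (a b : E) : Prop :=
  ∃ f : ℝ → E, ContinuousOn f (Icc 0 1) ∧ InjOn f (Icc 0 1) ∧ f 0 = a ∧ f 1 = b ∧ f '' Icc 0 1 = S

section Arc

variable {E : Type*} [TopologicalSpace E] {S T : Set E} {a b c p q : E}

lemma isArc_image_Icc {f : ℝ → E} {s t : ℝ} (hst : s < t) (hf : ContinuousOn f (Icc s t))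
    (hi : InjOn f (Icc s t)) : IsArc (f '' Icc s t) (f s) (f t) := by
  have himg : (fun u : ℝ => (t - s) * u + s) '' Icc 0 1 = Icc s t := by
    rw [image_affine_Icc' (by linarith)]; simp
  have hm : MapsTo (fun u : ℝ => (t - s) * u + s) (Icc 0 1) (Icc s t) := by
    rw [mapsTo_iff_image_subset, himg]
  refine ⟨fun u => f ((t - s) * u + s), hf.comp (by fun_prop) hm, ?_, by simp, by simp, ?_⟩
  · refine hi.comp (fun u _ v _ h => ?_) hm
    simp only [add_left_inj] at h
    exact mul_left_cancel₀ (by linarith) h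
  · rw [← image_image f, himg]

lemma IsArc.left_mem (h : IsArc S a b) : a ∈ S := by
  obtain ⟨f, hf, hi, f0, f1, rfl⟩ := h
  exact ⟨0, by simp, f0⟩

lemma IsArc.symm (h : IsArc S a b) : IsArc S b a := by
  obtain ⟨f, hf, hi, f0, f1, rfl⟩ := h
  have hm : MapsTo (fun u : ℝ => 1 - u) (Icc 0 1) (Icc 0 1) :=
    fun u hu => ⟨by linarith [hu.2], by linarith [hu.1]⟩
  refine ⟨fun u => f (1 - u), hf.comp (by fun_prop) hm, hi.comp (fun u _ v _ h => ?_) hm,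
    by simpa, by simpa, ?_⟩
  · simpa using h
  · rw [← image_image f, image_const_sub_Icc]; simp

lemma IsArc.right_mem (h : IsArc S a b) : b ∈ S := h.symm.left_mem

lemma IsArc.ne (h : IsArc S a b) : a ≠ b := by
  obtain ⟨f, hf, hi, f0, f1, rfl⟩ := h
  intro hab
  rw [← f0, ← f1] at hab
  exact zero_ne_one (hi (by simp) (by simp) hab)

lemma IsArc.isCompact (h : IsArc S a b) : IsCompact S := by
  obtain ⟨f, hf, hi, f0, f1, rfl⟩ := h
  exact isCompact_Icc.image_of_continuousOn hf

lemma IsArc.isClosed [T2Space E] (h : IsArc S a b) : IsClosed S := h.isCompact.isClosed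

lemma IsArc.isPreconnected (h : IsArc S a b) : IsPreconnected S := by
  obtain ⟨f, hf, hi, f0, f1, rfl⟩ := h
  exact isPreconnected_Icc.image f hf

lemma IsArc.image {F : Type*} [TopologicalSpace F] (h : IsArc S a b) {φ : E → F}
    (hφ : ContinuousOn φ S) (hi : InjOn φ S) : IsArc (φ '' S) (φ a) (φ b) := by
  obtain ⟨f, hf, hfi, f0, f1, rfl⟩ := h
  refine ⟨fun t => φ (f t), hφ.comp hf (mapsTo_image _ _), hi.comp hfi (mapsTo_image _ _),
    by simp [f0], by simp [f1], ?_⟩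
  rw [← image_image φ]

/-- Splitting an arc at an interior point. -/
lemma IsArc.split (h : IsArc S a b) (hp : p ∈ S) (hpa : p ≠ a) (hpb : p ≠ b) :
    ∃ S₁ S₂, IsArc S₁ a p ∧ IsArc S₂ p b ∧ S₁ ∪ S₂ = S ∧ S₁ ∩ S₂ = {p} := by
  obtain ⟨f, hf, hi, f0, f1, rfl⟩ := h
  obtain ⟨t, ht, rfl⟩ := hp
  have h0 : 0 < t := ht.1.lt_of_ne (fun h => hpa (by rw [← h, f0]))
  have h1 : t < 1 := ht.2.lt_of_ne (fun h => hpb (by rw [h, f1]))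
  have s1 : Icc 0 t ⊆ Icc (0 : ℝ) 1 := Icc_subset_Icc le_rfl ht.2
  have s2 : Icc t 1 ⊆ Icc (0 : ℝ) 1 := Icc_subset_Icc ht.1 le_rfl
  refine ⟨f '' Icc 0 t, f '' Icc t 1, ?_, ?_, ?_, ?_⟩
  · rw [← f0]; exact isArc_image_Icc h0 (hf.mono s1) (hi.mono s1)
  · rw [← f1]; exact isArc_image_Icc h1 (hf.mono s2) (hi.mono s2)
  · rw [← image_union, Icc_union_Icc_eq_Icc ht.1 ht.2]
  · rw [← hi.image_inter s1 s2, Icc_inter_Icc_eq_singleton ht.1 ht.2, image_singleton]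

/-- Concatenation of two arcs meeting only at a common end point. -/
lemma IsArc.concat [T2Space E] (h : IsArc S a b) (h' : IsArc T b c) (hST : S ∩ T ⊆ {b}) :
    IsArc (S ∪ T) a c := by
  obtain ⟨f, hf, hi, f0, f1, rfl⟩ := h
  obtain ⟨g, hg, hgi, g0, g1, rfl⟩ := h'
  let F : ℝ → E := fun t => if t ≤ 1 then f t else g (t - 1)
  have F1 : EqOn F f (Icc 0 1) := fun t ht => by simp [F, ht.2]
  have F2 : EqOn F (fun t => g (t - 1)) (Icc 1 2) := fun t ht => by
    rcases ht.1.eq_or_lt with h | h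
    · subst h; simp [F, f1, g0]
    · simp [F, not_le.mpr h]
  have hm : MapsTo (fun t : ℝ => t - 1) (Icc 1 2) (Icc 0 1) :=
    fun t ht => ⟨by linarith [ht.1], by linarith [ht.2]⟩
  have hU : Icc (0 : ℝ) 1 ∪ Icc 1 2 = Icc 0 2 :=
    Icc_union_Icc_eq_Icc (by norm_num) (by norm_num)
  have hcont : ContinuousOn F (Icc 0 2) := by
    rw [← hU]
    exact (hf.congr F1).union_of_isClosed ((hg.comp (by fun_prop) hm).congr F2)
      isClosed_Icc isClosed_Icc
  have cross : ∀ s ∈ Icc (0 : ℝ) 1, ∀ t ∈ Icc (1 : ℝ) 2, F s = F t → s = t := by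
    intro s hs t ht hst
    rw [F1 hs, F2 ht] at hst
    have hb : f s = b := hST ⟨mem_image_of_mem f hs, hst ▸ mem_image_of_mem g (hm ht)⟩
    have e1 : s = 1 := hi hs (by simp) (by rw [hb, f1])
    have e2 : t - 1 = 0 := hgi (hm ht) (by simp) (by rw [g0, ← hb, hst])
    linarith
  have hinj : InjOn F (Icc 0 2) := by
    rw [← hU]
    rintro s (hs | hs) t (ht | ht) hst
    · rw [F1 hs, F1 ht] at hst; exact hi hs ht hst
    · exact cross s hs t ht hst
    · exact (cross t ht s hs hst.symm).symm
    · rw [F2 hs, F2 ht] at hst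
      have := hgi (hm hs) (hm ht) hst
      linarith
  have himg : F '' Icc 0 2 = f '' Icc 0 1 ∪ g '' Icc 0 1 := by
    rw [← hU, image_union, F1.image_eq, F2.image_eq, ← image_image g, image_sub_const_Icc]
    norm_num
  have := isArc_image_Icc (by norm_num : (0 : ℝ) < 2) hcont hinj
  rw [himg] at this
  have e0 : F 0 = a := by rw [F1 (by simp), f0]
  have e2 : F 2 = c := by rw [F2 (by simp)]; norm_num [g1]
  rwa [e0, e2] at this

/-- The tail of an arc. -/
lemma IsArc.tail (h : IsArc S a b) (hp : p ∈ S) (hpb : p ≠ b) :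
    ∃ T ⊆ S, IsArc T p b := by
  by_cases hpa : p = a
  · exact ⟨S, subset_rfl, hpa ▸ h⟩
  · obtain ⟨S₁, S₂, h1, h2, h3, h4⟩ := h.split hp hpa hpb
    exact ⟨S₂, h3 ▸ subset_union_right, h2⟩

lemma IsArc.subarc (h : IsArc S a b) (hp : p ∈ S) (hq : q ∈ S) (hpq : p ≠ q) :
    ∃ T ⊆ S, IsArc T p q := by
  by_cases hpb : p = b
  · subst hpb
    obtain ⟨T, hT, h1⟩ := h.tail hq hpq.symm
    exact ⟨T, hT, h1.symm⟩
  obtain ⟨T, hT, h1⟩ := h.tail hp hpb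
  by_cases hqT : q ∈ T
  · obtain ⟨R, hR, h2⟩ := h1.symm.tail hqT hpq.symm
    exact ⟨R, hR.trans hT, h2.symm⟩
  · by_cases hpa : p = a
    · subst hpa
      obtain ⟨R, hR, h2⟩ := h.symm.tail hq hpq.symm
      exact ⟨R, hR, h2.symm⟩
    · obtain ⟨S₁, S₂, k1, k2, k3, k4⟩ := h.split hp hpa hpb
      rw [← k3] at hq
      rcases hq with hq | hq
      · obtain ⟨R, hR, h2⟩ := k1.tail hq hpq.symm
        exact ⟨R, hR.trans (k3 ▸ subset_union_left), h2.symm⟩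
      · obtain ⟨R, hR, h2⟩ := k2.symm.tail hq hpq.symm
        exact ⟨R, hR.trans (k3 ▸ subset_union_right), h2.symm⟩

/-- The first point of an arc in a closed set. -/
lemma IsArc.first_hit (h : IsArc S a b) {K : Set E} (hK : IsClosed K) (ha : a ∉ K)
    (hK' : (S ∩ K).Nonempty) : ∃ p ∈ S, ∃ R ⊆ S, IsArc R a p ∧ R ∩ K = {p} := by
  obtain ⟨f, hf, hi, f0, f1, rfl⟩ := h
  have hc : IsCompact (Icc (0 : ℝ) 1 ∩ f ⁻¹' K) :=
    isCompact_Icc.of_isClosed_subset (hf.preimage_isClosed_of_isClosed isClosed_Icc hK)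
      inter_subset_left
  obtain ⟨t, ⟨ht, htK⟩, hmin⟩ := hc.exists_isLeast (by
    obtain ⟨_, ⟨s, hs, rfl⟩, hsK⟩ := hK'
    exact ⟨s, hs, hsK⟩)
  have h0 : 0 < t := ht.1.lt_of_ne (fun h => ha (by rw [← f0, h]; exact htK))
  have s1 : Icc 0 t ⊆ Icc (0 : ℝ) 1 := Icc_subset_Icc le_rfl ht.2
  refine ⟨f t, mem_image_of_mem f ht, f '' Icc 0 t, image_mono s1, ?_, ?_⟩
  · rw [← f0]; exact isArc_image_Icc h0 (hf.mono s1) (hi.mono s1)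
  · ext x
    constructor
    · rintro ⟨⟨s, hs, rfl⟩, hsK⟩
      have := hmin ⟨s1 hs, hsK⟩
      rw [le_antisymm hs.2 this]; rfl
    · rintro rfl
      exact ⟨⟨t, ⟨h0.le, le_rfl⟩, rfl⟩, htK⟩

lemma IsArc.join [T2Space E] (h : IsArc S a b) (h' : IsArc T b c) (hac : a ≠ c) :
    ∃ R ⊆ S ∪ T, IsArc R a c := by
  by_cases ha : a ∈ T
  · obtain ⟨R, hR, h1⟩ := h'.tail ha hac
    exact ⟨R, hR.trans subset_union_right, h1⟩
  obtain ⟨p, hp, R, hR, h1, h2⟩ := h.first_hit h'.isClosed ha ⟨b, h.right_mem, h'.left_mem⟩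
  by_cases hpc : p = c
  · exact ⟨R, hR.trans subset_union_left, hpc ▸ h1⟩
  obtain ⟨T', hT', h3⟩ := h'.tail (h2.symm.subset (mem_singleton p)).2 hpc
  exact ⟨R ∪ T', union_subset_union hR hT',
    h1.concat h3 ((inter_subset_inter_right R hT').trans h2.subset)⟩

lemma IsArc.isPreconnected_diff_left (h : IsArc S a b) : IsPreconnected (S \ {a}) := by
  obtain ⟨f, hf, hi, f0, f1, rfl⟩ := h
  have : f '' Icc 0 1 \ {a} = f '' Ioc 0 1 := by
    rw [← Icc_sdiff_left, hi.image_sdiff_subset (by simp), image_singleton, f0]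
  rw [this]
  exact isPreconnected_Ioc.image f (hf.mono Ioc_subset_Icc_self)

lemma IsArc.isPreconnected_diff (h : IsArc S a b) : IsPreconnected (S \ {a, b}) := by
  obtain ⟨f, hf, hi, f0, f1, rfl⟩ := h
  have : f '' Icc 0 1 \ {a, b} = f '' Ioo 0 1 := by
    rw [← Icc_sdiff_both, hi.image_sdiff_subset (by simp [insert_subset_iff]), image_pair, f0, f1]
  rw [this]
  exact isPreconnected_Ioo.image f (hf.mono Ioo_subset_Icc_self)

lemma IsArc.subset_closure_diff (h : IsArc S a b) : S ⊆ closure (S \ {a, b}) := by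
  obtain ⟨f, hf, hi, f0, f1, rfl⟩ := h
  have : f '' Icc 0 1 \ {a, b} = f '' Ioo 0 1 := by
    rw [← Icc_sdiff_both, hi.image_sdiff_subset (by simp [insert_subset_iff]), image_pair, f0, f1]
  rw [this, ← closure_Ioo (zero_ne_one' ℝ)]
  exact (by rwa [closure_Ioo (zero_ne_one' ℝ)] : ContinuousOn f (closure (Ioo 0 1))).image_closure

lemma IsArc.nonempty_diff (h : IsArc S a b) : (S \ {a, b}).Nonempty := by
  by_contra hne
  rw [not_nonempty_iff_eq_empty] at hne
  have := h.subset_closure_diff h.left_mem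
  rw [hne, closure_empty] at this
  exact this

end Arc

section

variable {E : Type*} [MetricSpace E]

lemma isArc_geodesic {x y : E} (hxy : x ≠ y) {f : ℝ → E} (f0 : f 0 = x) (f1 : f 1 = y)
    (hf : ∀ s ∈ Icc (0 : ℝ) 1, ∀ t ∈ Icc (0 : ℝ) 1, dist (f s) (f t) = |s - t| * dist x y) :
    IsArc (f '' Icc 0 1) x y := by
  have hd : 0 < dist x y := dist_pos.mpr hxy
  refine ⟨f, ?_, ?_, f0, f1, rfl⟩
  · have : LipschitzOnWith ⟨dist x y, dist_nonneg⟩ f (Icc 0 1) := by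
      refine LipschitzOnWith.of_dist_le_mul fun s hs t ht => ?_
      rw [hf s hs t ht, Real.dist_eq, mul_comm]
      rfl
    exact this.continuousOn
  · intro s hs t ht hst
    have := hf s hs t ht
    rw [hst, dist_self, eq_comm, mul_eq_zero] at this
    rcases this with h | h
    · exact sub_eq_zero.mp (abs_eq_zero.mp h)
    · exact (hd.ne' h).elim

lemma Geod.exists_arc (hE : Geod E) {x y : E} (hxy : x ≠ y) {r : ℝ} (h : dist x y ≤ r) :
    ∃ S ⊆ closedBall x r, IsArc S x y := by
  obtain ⟨f, f0, f1, hf⟩ := hE x y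
  refine ⟨f '' Icc 0 1, ?_, isArc_geodesic hxy f0 f1 hf⟩
  rintro _ ⟨t, ht, rfl⟩
  have := hf t ht 0 (by simp)
  rw [f0] at this
  rw [mem_closedBall, this, sub_zero, abs_of_nonneg ht.1]
  exact (mul_le_of_le_one_left dist_nonneg ht.2).trans h

/-- Points linked in an open set are joined by an arc. -/
lemma Geod.arc_in_open (hE : Geod E) {U : Set E} (hU : IsOpen U) {x y : E} (h : Linked U x y)
    (hxy : x ≠ y) : ∃ S ⊆ U, IsArc S x y := by
  obtain ⟨D, hDU, hD, hx, hy⟩ := h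
  refine (hD.induction₂ (P := fun x y => x = y ∨ ∃ S ⊆ U, IsArc S x y)
    ?_ ?_ ?_ hx hy).resolve_left hxy
  · intro z hz
    obtain ⟨r, hr, hrU⟩ := nhds_basis_closedBall.mem_iff.mp (hU.mem_nhds (hDU hz))
    filter_upwards [mem_nhdsWithin_of_mem_nhds (closedBall_mem_nhds z hr)] with w hw
    by_cases hzw : z = w
    · exact Or.inl hzw
    · obtain ⟨S, hS, h⟩ := hE.exists_arc hzw (r := r) (by rwa [dist_comm, ← mem_closedBall])
      exact Or.inr ⟨S, hS.trans hrU, h⟩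
  · rintro a b c - - - (rfl | ⟨S, hS, h1⟩) (rfl | ⟨T, hT, h2⟩)
    · exact Or.inl rfl
    · exact Or.inr ⟨T, hT, h2⟩
    · exact Or.inr ⟨S, hS, h1⟩
    · by_cases hac : a = c
      · exact Or.inl hac
      · obtain ⟨R, hR, h3⟩ := h1.join h2 hac
        exact Or.inr ⟨R, hR.trans (union_subset hS hT), h3⟩
  · rintro a b - - (rfl | ⟨S, hS, h1⟩)
    · exact Or.inl rfl
    · exact Or.inr ⟨S, hS, h1.symm⟩

end

lemma isPreconnected_compl_singleton_addCircle (q : AddCircle (1 : ℝ)) :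
    IsPreconnected ({q}ᶜ : Set (AddCircle (1 : ℝ))) := by
  obtain ⟨a, rfl⟩ := QuotientAddGroup.mk_surjective q
  have := (AddCircle.openPartialHomeomorphCoe (1 : ℝ) a).image_source_eq_target
  have hs : (AddCircle.openPartialHomeomorphCoe (1 : ℝ) a).source = Ioo a (a + 1) := rfl
  have ht : (AddCircle.openPartialHomeomorphCoe (1 : ℝ) a).target = {(a : AddCircle (1 : ℝ))}ᶜ := rfl
  rw [hs, ht] at this
  change IsPreconnected ({(a : AddCircle (1 : ℝ))}ᶜ : Set (AddCircle (1 : ℝ)))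
  rw [← this]
  refine isPreconnected_Ioo.image _ ?_
  rw [← hs]
  exact (AddCircle.openPartialHomeomorphCoe (1 : ℝ) a).continuousOn

lemma _root_.IsJordanCurve.isPreconnected_diff {X : Type} [TopologicalSpace X] {J : Set X}
    (hJ : IsJordanCurve J) (p : X) : IsPreconnected (J \ {p}) := by
  obtain ⟨e⟩ := hJ
  by_cases hp : p ∈ J
  · have := (isPreconnected_compl_singleton_addCircle (e.symm ⟨p, hp⟩)).image
      (fun t => (e t : X)) (by fun_prop)
    convert this using 1
    ext x
    constructor
    · rintro ⟨hx, hxp⟩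
      refine ⟨e.symm ⟨x, hx⟩, ?_, by simp⟩
      intro h
      have := e.symm.injective h
      exact hxp (by simpa using this)
    · rintro ⟨t, ht, rfl⟩
      refine ⟨(e t).2, fun h => ht ?_⟩
      rw [mem_singleton_iff, ← e.symm_apply_apply t]
      congr 1
      exact Subtype.ext h
  · rw [sdiff_singleton_eq_self hp]
    have := isPreconnected_range (f := fun t => (e t : X)) (by fun_prop)
    convert this using 1
    ext x
    constructor
    · intro hx
      exact ⟨e.symm ⟨x, hx⟩, by simp⟩
    · rintro ⟨t, rfl⟩
      exact (e t).2

lemma isJordanCurve_range {X : Type} [TopologicalSpace X] [T2Space X] {h : AddCircle (1 : ℝ) → X}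
    (hc : Continuous h) (hi : Function.Injective h) : IsJordanCurve (range h) := by
  have : CompactSpace (AddCircle (1 : ℝ)) := by
    have : Fact ((0 : ℝ) < 1) := ⟨one_pos⟩
    infer_instance
  exact ⟨(hc.isClosedEmbedding hi).isEmbedding.toHomeomorph⟩

lemma exists_circle_S2 (x y : S2) : ∃ h : AddCircle (1 : ℝ) → S2, Continuous h ∧
    Function.Injective h ∧ x ∈ range h ∧ y ∈ range h := by
  have hinf : Infinite S2 := by
    obtain ⟨φ, hφ, -⟩ := exists_stereographic x
    exact Infinite.of_injective φ hφ.injective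
  wlog hxy : x ≠ y generalizing y
  · obtain ⟨y', hy'⟩ := Infinite.exists_notMem_finset ({x} : Finset S2)
    obtain ⟨h, hc, hi, h1, -⟩ := this y' (fun h => hy' (by simp [h]))
    push Not at hxy
    exact ⟨h, hc, hi, h1, hxy ▸ h1⟩
  obtain ⟨v, hv⟩ := Infinite.exists_notMem_finset ({x, y} : Finset S2)
  simp only [Finset.mem_insert, Finset.mem_singleton, not_or] at hv
  obtain ⟨φ, hφ, hr⟩ := exists_stereographic v
  obtain ⟨w₁, rfl⟩ : x ∈ range φ := by rw [hr]; exact fun h => hv.1 h.symm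
  obtain ⟨w₂, rfl⟩ : y ∈ range φ := by rw [hr]; exact fun h => hv.2 h.symm
  have hw : w₁ - w₂ ≠ 0 := sub_ne_zero.mpr fun h => hxy (by rw [h])
  let e := AddCircle.homeomorphCircle (one_ne_zero' ℝ)
  refine ⟨fun t => φ ((w₁ + w₂) / 2 + (w₁ - w₂) / 2 * (e t : ℂ)), ?_, ?_, ?_, ?_⟩
  · have := hφ.continuous
    fun_prop
  · intro s t hst
    have h1 := hφ.injective hst
    have h2 := mul_left_cancel₀ (div_ne_zero hw two_ne_zero) (add_left_cancel h1)
    exact e.injective (Subtype.ext h2)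
  · refine ⟨e.symm 1, ?_⟩
    simp only [e.apply_symm_apply, Circle.coe_one]
    congr 1; ring
  · refine ⟨e.symm (-1), ?_⟩
    simp only [e.apply_symm_apply]
    congr 1
    have : ((-1 : Circle) : ℂ) = -1 := rfl
    rw [this]; ring

lemma cyclicallyConnected_of_homeomorph {X : Type} [TopologicalSpace X] [T2Space X] {E : Set X}
    (e : E ≃ₜ S2) : CyclicallyConnected E := by
  intro x hx y hy
  obtain ⟨h, hc, hi, ⟨s, hs⟩, ⟨t, ht⟩⟩ := exists_circle_S2 (e ⟨x, hx⟩) (e ⟨y, hy⟩)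
  refine ⟨range fun t => (e.symm (h t) : X), ?_, isJordanCurve_range (by fun_prop) ?_, ⟨s, ?_⟩,
    ⟨t, ?_⟩⟩
  · rintro _ ⟨t, rfl⟩; exact (e.symm (h t)).2
  · exact Subtype.val_injective.comp (e.symm.injective.comp hi)
  · simp [hs]
  · simp [ht]

/-- The points which are separated from `a` by no point. -/
def NonSep {X : Type} [TopologicalSpace X] (a : X) : Set X :=
  {z | ∀ p, p ≠ z → p ≠ a → Linked {p}ᶜ z a}

section

variable {X : Type} [MetricSpace X]

lemma isClosed_nonSep (hG : Geod X) (a : X) : IsClosed (NonSep a) := by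
  rw [← closure_subset_iff_isClosed]
  intro z hz p hpz hpa
  obtain ⟨z', hz', hd⟩ := Metric.mem_closure_iff.mp hz (dist p z) (dist_pos.mpr hpz)
  have hsub : ball z (dist p z) ⊆ {p}ᶜ := by
    rintro x hx rfl
    exact lt_irrefl _ (mem_ball.mp hx)
  refine Linked.trans (Linked.mono ?_ hsub) (hz' p ?_ hpa)
  · exact (hG.isPreconnected_ball z _).linked (mem_ball_self (dist_pos.mpr hpz))
      (by rwa [mem_ball, dist_comm])
  · rintro rfl
    rw [dist_comm] at hd
    exact lt_irrefl _ hd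

lemma arc_subset_nonSep {a : X} {S : Set X} {x y : X} (hS : IsArc S x y) (hx : x ∈ NonSep a)
    (hy : y ∈ NonSep a) : S ⊆ NonSep a := by
  intro z hz
  by_cases hzx : z = x
  · rwa [hzx]
  by_cases hzy : z = y
  · rwa [hzy]
  obtain ⟨S₁, S₂, h1, h2, h3, h4⟩ := hS.split hz hzx hzy
  intro p hpz hpa
  by_cases hp : p ∈ S₁
  · have hp2 : p ∉ S₂ := fun h => hpz (h4.subset ⟨hp, h⟩)
    refine Linked.trans ⟨S₂, fun w hw hwp => hp2 (hwp ▸ hw), h2.isPreconnected, h2.left_mem,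
      h2.right_mem⟩ (hy p (fun h => hp2 (h ▸ h2.right_mem)) hpa)
  · exact Linked.trans ⟨S₁, fun w hw hwp => hp (hwp ▸ hw), h1.isPreconnected, h1.right_mem,
      h1.left_mem⟩ (hx p (fun h => hp (h ▸ h1.left_mem)) hpa)

/-- Goodness passes to closed subsets containing all arcs between their points. -/
lemma good_of_arc_closed [CompactSpace X] (hG : Geod X) (hJ : Janis X) {E : Set X}
    (hE : IsClosed E) (hnt : E.Nontrivial)
    (harc : ∀ S x y, IsArc S x y → x ∈ E → y ∈ E → S ⊆ E)
    (hsep : ∀ x ∈ E, ∀ y ∈ E, ∀ p, p ≠ x → p ≠ y → Linked {p}ᶜ x y) : Good E := by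
  have hlink : ∀ U : Set X, IsOpen U → ∀ u v : E, Linked U (u : X) v →
      Linked ((↑) ⁻¹' U : Set E) u v := by
    intro U hU u v h
    by_cases huv : u = v
    · subst huv
      exact Linked.refl h.left
    obtain ⟨S, hSU, hS⟩ := hG.arc_in_open hU h (fun h => huv (Subtype.ext h))
    have hSE := harc S u v hS u.2 v.2
    refine ⟨((↑) : E → X) ⁻¹' S, preimage_mono hSU, ?_, hS.left_mem, hS.right_mem⟩
    rw [← Topology.IsInducing.subtypeVal.isPreconnected_image, Subtype.image_preimage_coe,
      inter_eq_right.mpr hSE]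
    exact hS.isPreconnected
  refine ⟨?_, ?_, ?_, ?_⟩
  · intro x y
    by_cases hxy : x = y
    · subst hxy
      exact ⟨fun _ => x, rfl, rfl, by simp⟩
    obtain ⟨f, f0, f1, hf⟩ := hG x y
    have hne : (x : X) ≠ y := fun h => hxy (Subtype.ext h)
    have hsub := harc _ _ _ (isArc_geodesic hne f0 f1 hf) x.2 y.2
    have hmem : ∀ t ∈ Icc (0 : ℝ) 1, f t ∈ E := fun t ht => hsub (mem_image_of_mem f ht)
    classical
    refine ⟨fun t => if h : t ∈ Icc (0 : ℝ) 1 then ⟨f t, hmem t h⟩ else x, ?_, ?_, ?_⟩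
    · simp [f0]
    · simp [f1]
    · intro s hs t ht
      simp only [dif_pos hs, dif_pos ht, Subtype.dist_eq]
      exact hf s hs t ht
  · intro K L hK hL hKL u v h1 h2
    have hcl := hE.isClosedEmbedding_subtypeVal
    have hK' := hcl.isClosedMap K hK
    have hL' := hcl.isClosedMap L hL
    have himg : ∀ K : Set E, Linked Kᶜ u v → Linked ((↑) '' K : Set X)ᶜ (u : X) v := by
      intro K h
      refine (h.image continuous_subtype_val.continuousOn).mono ?_
      rintro _ ⟨w, hw, rfl⟩ ⟨w', hw', he⟩
      exact hw (Subtype.ext he ▸ hw')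
    have := hJ _ _ hK' hL' ?_ u v (himg K h1) (himg L h2)
    · have := hlink _ (hK'.union hL').isOpen_compl u v this
      refine this.mono ?_
      intro w hw hwK
      apply hw
      rw [← image_union]
      exact mem_image_of_mem _ hwK
    · rw [← image_inter Subtype.val_injective]
      exact hKL.image _ continuous_subtype_val.continuousOn
  · intro p
    refine isPreconnected_of_linked fun x hx y hy => ?_
    have := hlink {(p : X)}ᶜ isOpen_compl_singleton x y
      (hsep x x.2 y y.2 p (fun h => hx (Subtype.ext h.symm)) (fun h => hy (Subtype.ext h.symm)))
    refine this.mono ?_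
    rintro w hw rfl
    exact hw rfl
  · exact hnt.coe_sort

lemma exists_good_of_maximalCyclic [CompactSpace X] (hG : Geod X) (hJ : Janis X) {T : Set X}
    (hT : MaximalCyclic T) :
    ∃ E : Set X, IsClosed E ∧ Good E ∧ (Nonempty (E ≃ₜ S2) → E = T) := by
  obtain ⟨hns, hcyc, hmax⟩ := hT
  rw [not_subsingleton_iff] at hns
  obtain ⟨a, ha, b, hb, hab⟩ := id hns
  have hTsub : ∀ c ∈ T, T ⊆ NonSep c := by
    intro c hc z hz p hpz hpc
    obtain ⟨J, hJT, hJJ, hzJ, hcJ⟩ := hcyc z hz c hc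
    exact ⟨J \ {p}, fun x hx => hx.2, hJJ.isPreconnected_diff p, ⟨hzJ, hpz.symm⟩,
      ⟨hcJ, hpc.symm⟩⟩
  have hTE : T ⊆ NonSep a ∩ NonSep b := subset_inter (hTsub a ha) (hTsub b hb)
  refine ⟨NonSep a ∩ NonSep b, (isClosed_nonSep hG a).inter (isClosed_nonSep hG b), ?_, ?_⟩
  · refine good_of_arc_closed hG hJ ((isClosed_nonSep hG a).inter (isClosed_nonSep hG b))
      (hns.mono hTE) ?_ ?_
    · intro S x y hS hx hy
      exact subset_inter (arc_subset_nonSep hS hx.1 hy.1) (arc_subset_nonSep hS hx.2 hy.2)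
    · intro x hx y hy p hpx hpy
      by_cases hpa : p = a
      · have hpb : p ≠ b := hpa ▸ hab
        exact (hx.2 p hpx hpb).trans (hy.2 p hpy hpb).symm
      · exact (hx.1 p hpx hpa).trans (hy.1 p hpy hpa).symm
  · rintro ⟨e⟩
    exact hmax _ (cyclicallyConnected_of_homeomorph e) hTE

end

section Generic

variable {E : Type*} [TopologicalSpace E]

lemma subset_of_disjoint_frontier {P D : Set E} (hP : IsPreconnected P)
    (hd : Disjoint P (frontier D)) (hm : (P ∩ D).Nonempty) : P ⊆ D := by
  by_contra hn
  obtain ⟨y, hyP, hyD⟩ := not_subset.mp hn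
  have hcov : P ⊆ interior D ∪ (closure D)ᶜ := by
    intro z hz
    by_cases hzD : z ∈ closure D
    · left
      by_contra hzi
      exact disjoint_left.mp hd hz ⟨hzD, hzi⟩
    · exact Or.inr hzD
  obtain ⟨x, hxP, hxD⟩ := hm
  obtain ⟨z, -, hz1, hz2⟩ := hP _ _ isOpen_interior isClosed_closure.isOpen_compl hcov
    ⟨x, hxP, (hcov hxP).resolve_right (fun h => h (subset_closure hxD))⟩
    ⟨y, hyP, (hcov hyP).resolve_left (fun h => hyD (interior_subset h))⟩
  exact hz2 (subset_closure (interior_subset hz1))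

lemma mem_of_linked {S D : Set E} {x y : E} (h : Linked S x y) (hd : Disjoint S (frontier D))
    (hx : x ∈ D) : y ∈ D := by
  obtain ⟨C, hCS, hC, hxC, hyC⟩ := h
  exact subset_of_disjoint_frontier hC (hd.mono_left hCS) ⟨x, hxC, hx⟩ hyC

lemma frontier_component_subset [LocallyConnectedSpace E] {K : Set E} (hK : IsClosed K) (x : E) :
    frontier (connectedComponentIn Kᶜ x) ⊆ K := by
  intro z hz
  by_contra hzK
  have hop : IsOpen (connectedComponentIn Kᶜ z) := hK.isOpen_compl.connectedComponentIn
  obtain ⟨w, hw1, hw2⟩ := mem_closure_iff.mp hz.1 _ hop (mem_connectedComponentIn hzK)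
  have : Linked Kᶜ x z := (linked_of_mem_component hw2).trans (linked_of_mem_component hw1).symm
  refine hz.2 ?_
  rw [(hK.isOpen_compl.connectedComponentIn).interior_eq]
  exact this.mem_component

end Generic

lemma Geod.exists_compact_superset {E : Type*} [MetricSpace E] [CompactSpace E] (hE : Geod E)
    {U K : Set E} (hU : IsOpen U) (hUc : IsPreconnected U) (hK : IsCompact K) (hKU : K ⊆ U) :
    ∃ C ⊆ U, IsCompact C ∧ IsPreconnected C ∧ K ⊆ C := by
  rcases K.eq_empty_or_nonempty with rfl | ⟨x₀, hx₀⟩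
  · exact ⟨∅, empty_subset _, isCompact_empty, isPreconnected_empty, subset_rfl⟩
  suffices ∃ C ⊆ U, IsCompact C ∧ IsPreconnected C ∧ x₀ ∈ C ∧ K ⊆ C by
    obtain ⟨C, h1, h2, h3, -, h4⟩ := this
    exact ⟨C, h1, h2, h3, h4⟩
  refine hK.induction_on (p := fun s => ∃ C ⊆ U, IsCompact C ∧ IsPreconnected C ∧ x₀ ∈ C ∧ s ⊆ C)
    ?_ ?_ ?_ ?_
  · exact ⟨{x₀}, by simpa using hKU hx₀, isCompact_singleton, isPreconnected_singleton, rfl,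
      empty_subset _⟩
  · rintro s t hst ⟨C, h1, h2, h3, h4, h5⟩
    exact ⟨C, h1, h2, h3, h4, hst.trans h5⟩
  · rintro s t ⟨C, h1, h2, h3, h4, h5⟩ ⟨C', h1', h2', h3', h4', h5'⟩
    exact ⟨C ∪ C', union_subset h1 h1', h2.union h2', h3.union x₀ h4 h4' h3', Or.inl h4,
      union_subset_union h5 h5'⟩
  · intro x hx
    obtain ⟨ε, hε, hεU⟩ := nhds_basis_closedBall.mem_iff.mp (hU.mem_nhds (hKU hx))
    obtain ⟨C, h1, h2, h3, h4, h5⟩ := hE.linked_compact hU (hUc.linked (hKU hx₀) (hKU hx))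
    exact ⟨closedBall x ε, mem_nhdsWithin_of_mem_nhds (closedBall_mem_nhds x hε),
      C ∪ closedBall x ε, union_subset h1 hεU, h2.union isClosed_closedBall.isCompact,
      h3.union x h5 (mem_closedBall_self hε.le) (hE.isPreconnected_closedBall x ε),
      Or.inl h4, subset_union_right⟩

section Jordan

variable {E : Type*} [TopologicalSpace E] {α β S T J : Set E} {a b c p q x y : E}

/-- Two arcs with common endpoints and no other common points. -/
def Loop (α β : Set E) (a b : E) : Prop :=
  IsArc α a b ∧ IsArc β a b ∧ α ∩ β ⊆ {a, b}

/-- A simple closed curve, presented as the union of two arcs. -/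
def IsJordan (J : Set E) : Prop :=
  ∃ a b α β, Loop α β a b ∧ α ∪ β = J

lemma Loop.swap (h : Loop α β a b) : Loop β α a b :=
  ⟨h.2.1, h.1, by rw [inter_comm]; exact h.2.2⟩

lemma Loop.symm (h : Loop α β a b) : Loop α β b a :=
  ⟨h.1.symm, h.2.1.symm, by rw [pair_comm]; exact h.2.2⟩

lemma Loop.isJordan (h : Loop α β a b) : IsJordan (α ∪ β) := ⟨a, b, α, β, h, rfl⟩

lemma Loop.inter_eq (h : Loop α β a b) : α ∩ β = {a, b} := by
  refine h.2.2.antisymm ?_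
  rintro z (rfl | rfl)
  exacts [⟨h.1.left_mem, h.2.1.left_mem⟩, ⟨h.1.right_mem, h.2.1.right_mem⟩]

lemma IsJordan.isCompact (h : IsJordan J) : IsCompact J := by
  obtain ⟨a, b, α, β, h, rfl⟩ := h
  exact h.1.isCompact.union h.2.1.isCompact

lemma IsJordan.isClosed [T2Space E] (h : IsJordan J) : IsClosed J := h.isCompact.isClosed

lemma IsJordan.isPreconnected (h : IsJordan J) : IsPreconnected J := by
  obtain ⟨a, b, α, β, h, rfl⟩ := h
  exact h.1.isPreconnected.union a h.1.left_mem h.2.1.left_mem h.2.1.isPreconnected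

lemma Loop.rebase_aux [T2Space E] (h : Loop α β p q) (hx : x ∈ α) (hxp : x ≠ p) :
    ∃ α' β', Loop α' β' p x ∧ α' ∪ β' = α ∪ β := by
  by_cases hxq : x = q
  · exact ⟨α, β, hxq ▸ h, rfl⟩
  obtain ⟨α₁, α₂, h1, h2, h3, h4⟩ := h.1.split hx hxp hxq
  have hp : p ∉ α₂ := fun hp => hxp (h4.subset ⟨h1.left_mem, hp⟩).symm
  have hq : q ∉ α₁ := fun hq => hxq (h4.subset ⟨hq, h2.right_mem⟩).symm
  refine ⟨α₁, β ∪ α₂, ⟨h1, h.2.1.concat h2.symm ?_, ?_⟩, ?_⟩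
  · rintro z ⟨hz1, hz2⟩
    rcases h.2.2 ⟨h3.subset (Or.inr hz2), hz1⟩ with rfl | rfl
    · exact absurd hz2 hp
    · rfl
  · rintro z ⟨hz1, hz2 | hz2⟩
    · rcases h.2.2 ⟨h3.subset (Or.inl hz1), hz2⟩ with rfl | rfl
      · exact Or.inl rfl
      · exact absurd hz1 hq
    · exact Or.inr (h4.subset ⟨hz1, hz2⟩)
  · rw [← h3, union_comm β, union_assoc]

lemma Loop.rebase [T2Space E] (h : Loop α β p q) (hx : x ∈ α ∪ β) (hxp : x ≠ p) :
    ∃ α' β', Loop α' β' p x ∧ α' ∪ β' = α ∪ β := by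
  rcases hx with hx | hx
  · exact h.rebase_aux hx hxp
  · obtain ⟨α', β', h1, h2⟩ := h.swap.rebase_aux hx hxp
    exact ⟨α', β', h1, h2.trans (union_comm _ _)⟩

lemma IsJordan.split [T2Space E] (h : IsJordan J) (hx : x ∈ J) (hy : y ∈ J) (hxy : x ≠ y) :
    ∃ α β, Loop α β x y ∧ α ∪ β = J := by
  obtain ⟨p, q, α, β, h, rfl⟩ := h
  by_cases hxp : x = p
  · subst hxp
    exact h.rebase hy hxy.symm
  · obtain ⟨α', β', h1, h2⟩ := h.rebase hx hxp
    rw [← h2] at hy ⊢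
    exact h1.symm.rebase hy hxy.symm

lemma IsArc.shrink (h : IsArc S a b) {U : Set E} (hU : IsOpen U) (ha : a ∈ U) :
    ∃ s T, IsArc T s b ∧ T ⊆ S ∧ a ∉ T ∧ S \ T ⊆ U := by
  obtain ⟨f, hf, hi, f0, f1, rfl⟩ := h
  have h0 : f ⁻¹' U ∈ nhdsWithin 0 (Icc (0 : ℝ) 1) :=
    hf 0 (by simp) (hU.mem_nhds (by rwa [f0]))
  obtain ⟨ε, hε, hεU⟩ := Metric.mem_nhdsWithin_iff.mp h0
  have hs : 0 < min (ε / 2) (1 / 2) := by positivity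
  set s := min (ε / 2) (1 / 2) with hs_def
  have hs1 : s < 1 := (min_le_right _ _).trans_lt (by norm_num)
  have hsε : s < ε := (min_le_left _ _).trans_lt (by linarith)
  have hsub : Icc s 1 ⊆ Icc 0 1 := Icc_subset_Icc_left hs.le
  refine ⟨f s, f '' Icc s 1, ?_, image_mono hsub, ?_, ?_⟩
  · rw [← f1]; exact isArc_image_Icc hs1 (hf.mono hsub) (hi.mono hsub)
  · rintro ⟨t, ht, hta⟩
    have := hi (hsub ht) (by simp) (hta.trans f0.symm)
    linarith [ht.1]
  · rintro _ ⟨⟨t, ht, rfl⟩, hn⟩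
    refine hεU ⟨?_, ht⟩
    have : t < s := by
      by_contra hts
      exact hn ⟨t, ⟨not_lt.mp hts, ht.2⟩, rfl⟩
    rw [mem_ball, Real.dist_eq, sub_zero, abs_of_nonneg ht.1]
    linarith

lemma IsJordan.exists_ne (h : IsJordan J) (q : E) : ∃ b ∈ J, b ≠ q := by
  obtain ⟨a, b, α, β, h, rfl⟩ := h
  by_cases ha : a = q
  · exact ⟨b, Or.inl h.1.right_mem, fun hb => h.1.ne (ha.trans hb.symm)⟩
  · exact ⟨a, Or.inl h.1.left_mem, ha⟩

lemma IsJordan.exists_arc_compl [T2Space E] (h : IsJordan J) (hq : q ∈ J) {U : Set E}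
    (hU : IsOpen U) (hqU : q ∈ U) : ∃ a b γ, IsArc γ a b ∧ γ ⊆ J ∧ q ∉ γ ∧ J \ γ ⊆ U := by
  obtain ⟨b, hb, hbq⟩ := h.exists_ne q
  obtain ⟨α, β, h1, rfl⟩ := h.split hq hb hbq.symm
  obtain ⟨s, S, hS, hSα, hqS, hSU⟩ := h1.1.shrink hU hqU
  obtain ⟨t, T, hT, hTβ, hqT, hTU⟩ := h1.2.1.shrink hU hqU
  refine ⟨s, t, S ∪ T, hS.concat hT.symm ?_, union_subset_union hSα hTβ, by simp [hqS, hqT], ?_⟩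
  · rintro z ⟨hz1, hz2⟩
    rcases h1.2.2 ⟨hSα hz1, hTβ hz2⟩ with rfl | rfl
    · exact absurd hz1 hqS
    · rfl
  · rintro z ⟨hz | hz, hn⟩
    · exact hSU ⟨hz, fun h => hn (Or.inl h)⟩
    · exact hTU ⟨hz, fun h => hn (Or.inr h)⟩

/-- `D` is a nonempty connected open set with frontier `J`. -/
structure Face (D J : Set E) : Prop where
  isOpen : IsOpen D
  isPreconnected : IsPreconnected D
  nonempty : D.Nonempty
  frontier_eq : frontier D = J

lemma Face.disjoint (h : Face D J) : Disjoint D J := by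
  rw [← h.frontier_eq, h.isOpen.frontier_eq]
  exact disjoint_sdiff_right

lemma Face.closure_eq (h : Face D J) : closure D = D ∪ J := by
  rw [← h.frontier_eq, closure_eq_self_union_frontier]

lemma Face.mem_of_linked (h : Face D J) (hl : Linked Jᶜ x y) (hx : x ∈ D) : y ∈ D :=
  Cactoid.mem_of_linked hl (by rw [h.frontier_eq]; exact disjoint_compl_left) hx

/-- `a` is the endpoint of an arc in `D ∪ {a}`. -/
def Access (D : Set E) (a : E) : Prop :=
  ∃ y ∈ D, ∃ R, IsArc R y a ∧ R \ {a} ⊆ D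

end Jordan

section GoodSpace

variable {E : Type*} [MetricSpace E] {D J α β c : Set E} {a b q : E}

lemma Geod.crosscut_of_access (hE : Geod E) (hD : IsOpen D) (hDc : IsPreconnected D)
    (ha : Access D a) (hb : Access D b) (haD : a ∉ D) (hab : a ≠ b) :
    ∃ c, IsArc c a b ∧ c \ {a, b} ⊆ D := by
  obtain ⟨y, hy, R, hR, hRD⟩ := ha
  obtain ⟨z, hz, Q, hQ, hQD⟩ := hb
  have key : ∃ B, IsArc B a z ∧ B \ {a} ⊆ D := by
    by_cases hyz : y = z
    · subst hyz
      exact ⟨R, hR.symm, hRD⟩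
    · obtain ⟨A, hAD, hA⟩ := hE.arc_in_open hD (hDc.linked hy hz) hyz
      obtain ⟨B, hB, hBa⟩ := hR.symm.join hA (fun h => haD (h ▸ hz))
      refine ⟨B, hBa, fun w hw => ?_⟩
      rcases hB hw.1 with h | h
      · exact hRD ⟨h, hw.2⟩
      · exact hAD h
  obtain ⟨B, hB, hBD⟩ := key
  obtain ⟨c, hc, hca⟩ := hB.join hQ hab
  refine ⟨c, hca, fun w hw => ?_⟩
  simp only [Set.mem_sdiff, mem_insert_iff, mem_singleton_iff, not_or] at hw
  rcases hc hw.1 with h | h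
  · exact hBD ⟨h, hw.2.1⟩
  · exact hQD ⟨h, hw.2.2⟩

lemma Geod.access_near (hE : Geod E) (hD : IsOpen D) (hq : q ∈ frontier D) {ε : ℝ} (hε : 0 < ε) :
    ∃ a ∈ ball q ε ∩ frontier D, Access D a := by
  rw [hD.frontier_eq] at hq
  obtain ⟨x, hxD, hx⟩ := Metric.mem_closure_iff.mp hq.1 (ε / 2) (by linarith)
  have hxq : x ≠ q := fun h => hq.2 (h ▸ hxD)
  obtain ⟨S, hS, hSa⟩ := hE.exists_arc hxq (dist_comm x q ▸ hx.le)
  obtain ⟨p, hpS, R, hRS, hR, hRp⟩ := hSa.first_hit hD.isClosed_compl (by simpa using hxD)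
    ⟨q, hSa.right_mem, hq.2⟩
  have hRD : R \ {p} ⊆ D := by
    rintro w ⟨hw, hwp⟩
    by_contra hwD
    exact hwp (hRp.subset ⟨hw, hwD⟩)
  refine ⟨p, ⟨?_, ?_⟩, x, hxD, R, hR, hRD⟩
  · have := hS hpS
    rw [mem_closedBall] at this
    rw [mem_ball]
    have := dist_triangle p x q
    rw [dist_comm x q] at this
    linarith
  · rw [hD.frontier_eq]
    refine ⟨closure_mono (fun w hw => hRD ⟨hw.1, fun h => hw.2 (Or.inr h)⟩)
      (hR.subset_closure_diff hR.right_mem), ?_⟩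
    exact (hRp.symm.subset rfl).2

lemma Face.exists_crosscut (hE : Geod E) (hD : Face D J) (hJ : IsJordan J) :
    ∃ a b c α β, IsArc c a b ∧ c \ {a, b} ⊆ D ∧ Loop α β a b ∧ α ∪ β = J := by
  obtain ⟨p, q, hp, hq, hpq⟩ : ∃ p q, p ∈ J ∧ q ∈ J ∧ p ≠ q := by
    obtain ⟨a, b, α, β, h, rfl⟩ := hJ
    exact ⟨a, b, Or.inl h.1.left_mem, Or.inl h.1.right_mem, h.1.ne⟩
  have hd : 0 < dist p q / 2 := by have := dist_pos.mpr hpq; linarith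
  obtain ⟨a, ⟨ha1, ha2⟩, ha3⟩ := hE.access_near hD.isOpen (hD.frontier_eq ▸ hp) hd
  obtain ⟨b, ⟨hb1, hb2⟩, hb3⟩ := hE.access_near hD.isOpen (hD.frontier_eq ▸ hq) hd
  rw [hD.frontier_eq] at ha2 hb2
  have hab : a ≠ b := by
    rintro rfl
    rw [mem_ball] at ha1 hb1
    have := dist_triangle_left p q a
    linarith
  obtain ⟨c, hc, hcD⟩ := hE.crosscut_of_access hD.isOpen hD.isPreconnected ha3 hb3
    (fun h => disjoint_left.mp hD.disjoint h ha2) hab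
  obtain ⟨α, β, h1, h2⟩ := hJ.split ha2 hb2 hab
  exact ⟨a, b, c, α, β, hc, hcD, h1, h2⟩

lemma Face.isPreconnected_union (hD : Face D J) (hα : α ⊆ J) : IsPreconnected (D ∪ α) :=
  hD.isPreconnected.subset_closure subset_union_left
    (union_subset subset_closure (hα.trans (by rw [hD.closure_eq]; exact subset_union_right)))

variable [CompactSpace E]

lemma Good.isPreconnected_compl_arc (hE : Good E) (h : IsArc α a b) : IsPreconnected αᶜ := by
  refine isPreconnected_of_linked fun u hu v hv => ?_
  obtain ⟨f, hf, hi, -, -, rfl⟩ := h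
  have hg : Continuous ((Icc (0 : ℝ) 1).domRestrict f) := continuousOn_iff_continuous_domRestrict.mp hf
  have hgi : Function.Injective ((Icc (0 : ℝ) 1).domRestrict f) := injOn_iff_injective.mp hi
  set g := (Icc (0 : ℝ) 1).domRestrict f with hg_def
  have hgu : ∀ t, g t ≠ u := fun t ht => hu ⟨t, t.2, ht⟩
  have hgv : ∀ t, g t ≠ v := fun t ht => hv ⟨t, t.2, ht⟩
  have hC : ∀ t, ∃ C ⊆ ({g t}ᶜ : Set E), IsCompact C ∧ IsPreconnected C ∧ u ∈ C ∧ v ∈ C :=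
    fun t => hE.geod.linked_compact isClosed_singleton.isOpen_compl
      ((hE.nocut (g t)).linked (hgu t).symm (hgv t).symm)
  choose C hC1 hC2 hC3 hC4 hC5 using hC
  obtain ⟨t, t0, tmono, ⟨m, hm⟩, ht⟩ := exists_monotone_Icc_subset_open_cover_Icc
    (zero_le_one' ℝ) (c := fun t => g ⁻¹' (C t)ᶜ)
    (fun i => (hC2 i).isClosed.isOpen_compl.preimage hg)
    (fun s _ => mem_iUnion.mpr ⟨s, fun h => hC1 s h rfl⟩)
  have key : ∀ n, Linked (g '' Iic (t n))ᶜ u v := by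
    intro n
    induction n with
    | zero =>
      have : Iic (t 0) = {⟨0, by simp⟩} := by
        rw [Subtype.ext (a1 := t 0) (a2 := ⟨0, by simp⟩) t0]
        ext s
        simp only [mem_Iic, mem_singleton_iff]
        exact ⟨fun h => Subtype.ext (le_antisymm h s.2.1), fun h => h.le⟩
      rw [this, image_singleton]
      exact (hE.nocut _).linked (hgu _).symm (hgv _).symm
    | succ n ih =>
      have hun : Iic (t (n + 1)) = Iic (t n) ∪ Icc (t n) (t (n + 1)) :=
        (Iic_union_Icc_eq_Iic (tmono n.le_succ)).symm
      rw [hun, image_union]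
      have hin : g '' Iic (t n) ∩ g '' Icc (t n) (t (n + 1)) = {g (t n)} := by
        rw [← image_inter hgi, ← image_singleton]
        congr 1
        ext s
        simp only [mem_inter_iff, mem_Iic, mem_Icc, mem_singleton_iff]
        exact ⟨fun h => le_antisymm h.1 h.2.1, fun h => by simp [h, tmono n.le_succ]⟩
      refine hE.janis _ _ (isClosed_Iic.isCompact.image hg).isClosed
        (isClosed_Icc.isCompact.image hg).isClosed (hin ▸ isPreconnected_singleton) u v ih ?_
      obtain ⟨i, hti⟩ := ht n
      refine ⟨C i, ?_, hC3 i, hC4 i, hC5 i⟩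
      rintro w hw ⟨s, hs, rfl⟩
      exact hti hs hw
  have hfin := key m
  have : g '' Iic (t m) = f '' Icc 0 1 := by
    have h1 : Iic (t m) = univ := eq_univ_of_forall fun s => by
      rw [mem_Iic, ← Subtype.coe_le_coe, hm m le_rfl]; exact s.2.2
    rw [h1, image_univ, hg_def, range_domRestrict]
  rwa [this] at hfin

lemma Good.not_isPreconnected_compl (hE : Good E) (h : IsJordan J) : ¬ IsPreconnected Jᶜ := by
  intro hJ
  have hJc := h.isClosed
  obtain ⟨a, b, α, β, h, rfl⟩ := h
  have hab : 0 < dist b a := dist_pos.mpr h.1.ne.symm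
  have hα := h.1.isClosed
  have hβ := h.2.1.isClosed
  set r := dist b a / 2 with hr
  let M₁ : Set E := {x | dist x a = r} ∩ {x | infDist x β ≤ infDist x α}
  let M₂ : Set E := {x | dist x a = r} ∩ {x | infDist x α ≤ infDist x β}
  have hM : IsClosed {x : E | dist x a = r} := isClosed_eq (by fun_prop) (by fun_prop)
  have hM₁ : IsClosed M₁ :=
    hM.inter (isClosed_le (continuous_infDist_pt _) (continuous_infDist_pt _))
  have hM₂ : IsClosed M₂ :=
    hM.inter (isClosed_le (continuous_infDist_pt _) (continuous_infDist_pt _))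
  have hne : ∀ x, dist x a = r → x ∈ α → x ∈ β → False := by
    intro x hx h1 h2
    rcases h.2.2 ⟨h1, h2⟩ with rfl | rfl
    · rw [dist_self] at hx; linarith
    · linarith
  have h1α : ∀ x ∈ M₁, x ∉ α := by
    intro x hx hxα
    have h0 : infDist x β = 0 :=
      le_antisymm (hx.2.trans (infDist_zero_of_mem hxα).le) infDist_nonneg
    exact hne x hx.1 hxα ((hβ.mem_iff_infDist_zero ⟨a, h.2.1.left_mem⟩).mpr h0)
  have h2β : ∀ x ∈ M₂, x ∉ β := by
    intro x hx hxβ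
    have h0 : infDist x α = 0 :=
      le_antisymm (hx.2.trans (infDist_zero_of_mem hxβ).le) infDist_nonneg
    exact hne x hx.1 ((hα.mem_iff_infDist_zero ⟨a, h.1.left_mem⟩).mpr h0) hxβ
  obtain ⟨C, hCJ, hC1, hC2, hMC⟩ := hE.geod.exists_compact_superset hJc.isOpen_compl hJ
    (hM₁.inter hM₂).isCompact (fun x hx => by simpa using ⟨h1α x hx.1, h2β x hx.2⟩)
  have hcap : (M₁ ∪ C) ∩ (M₂ ∪ C) = C := by
    rw [← inter_union_distrib_right, union_eq_right]; exact hMC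
  have hl := hE.janis (M₁ ∪ C) (M₂ ∪ C) (hM₁.union hC1.isClosed) (hM₂.union hC1.isClosed)
    (by rw [hcap]; exact hC2) a b
    ⟨α, fun x hx => by
      rintro (h' | h')
      · exact h1α x h' hx
      · exact hCJ h' (Or.inl hx), h.1.isPreconnected, h.1.left_mem, h.1.right_mem⟩
    ⟨β, fun x hx => by
      rintro (h' | h')
      · exact h2β x h' hx
      · exact hCJ h' (Or.inr hx), h.2.1.isPreconnected, h.2.1.left_mem, h.2.1.right_mem⟩
  obtain ⟨P, hPs, hP, haP, hbP⟩ := hl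
  obtain ⟨x, hxP, hx⟩ := hP.intermediate_value haP hbP
    (f := fun x => dist x a) (by fun_prop) (show r ∈ Icc _ _ by
      simp only [dist_self, mem_Icc]; constructor <;> linarith)
  refine hPs hxP ?_
  rcases le_total (infDist x α) (infDist x β) with h' | h'
  · exact Or.inr (Or.inl ⟨hx, h'⟩)
  · exact Or.inl (Or.inl ⟨hx, h'⟩)

lemma Good.face_component (hE : Good E) (h : IsJordan J) {x : E} (hx : x ∉ J) :
    Face (connectedComponentIn Jᶜ x) J := by
  have := hE.geod.locallyConnectedSpace
  have hsub := frontier_component_subset h.isClosed x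
  refine ⟨h.isClosed.isOpen_compl.connectedComponentIn, isPreconnected_connectedComponentIn,
    ⟨x, mem_connectedComponentIn hx⟩, hsub.antisymm fun q hq => ?_⟩
  by_contra hqf
  obtain ⟨a, b, γ, hγ, hγJ, hqγ, hJγ⟩ := h.exists_arc_compl hq isClosed_frontier.isOpen_compl hqf
  have := subset_of_disjoint_frontier (hE.isPreconnected_compl_arc hγ)
    (D := connectedComponentIn Jᶜ x) (disjoint_left.mpr fun z hz hzf => ?_)
    ⟨x, fun h' => hx (hγJ h'), mem_connectedComponentIn hx⟩
  · exact connectedComponentIn_subset _ _ (this hqγ) hq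
  · exact hJγ ⟨hsub hzf, hz⟩ hzf

/-- Only one complementary component of a simple closed curve other than a given one. -/
lemma Good.linked_of_notMem (hE : Good E) (hJ : IsJordan J) (hD : Face D J) {x y : E}
    (hx : x ∉ D ∪ J) (hy : y ∉ D ∪ J) : Linked Jᶜ x y := by
  simp only [mem_union, not_or] at hx hy
  obtain ⟨a, b, c, α, β, hc, hcD, hL, rfl⟩ := hD.exists_crosscut hE.geod hJ
  have hWx := hE.face_component hJ hx.2
  have hWy := hE.face_component hJ hy.2
  have hsep : ∀ z, z ∉ D → z ∉ α ∪ β → Disjoint (connectedComponentIn (α ∪ β)ᶜ z) D := by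
    intro z hz hzJ
    refine disjoint_left.mpr fun w hw hwD => hz ?_
    exact hD.mem_of_linked (linked_of_mem_component hw).symm hwD
  have side : ∀ α' β' : Set E, Loop α' β' a b → α' ∪ β' = α ∪ β → Linked (α' ∪ c)ᶜ x y := by
    intro α' β' hL' hJ'
    obtain ⟨m, hm⟩ := hL'.2.1.nonempty_diff
    have hsub : β' \ {a, b} ⊆ α ∪ β := by
      rw [← hJ']; exact sdiff_subset.trans subset_union_right
    have one : ∀ z, z ∉ D → z ∉ α ∪ β → Linked (α' ∪ c)ᶜ z m := by
      intro z hz hzJ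
      have hW := hE.face_component hJ hzJ
      refine ⟨_, ?_, hW.isPreconnected_union hsub, Or.inl (mem_connectedComponentIn hzJ),
        Or.inr hm⟩
      rintro w (hw | hw) (h' | h')
      · exact disjoint_left.mp hW.disjoint hw (hJ' ▸ Or.inl h')
      · by_cases hwab : w ∈ ({a, b} : Set E)
        · refine disjoint_left.mp hW.disjoint hw (hJ' ▸ Or.inl ?_)
          exact (hL'.inter_eq.symm.subset hwab).1
        · exact disjoint_left.mp (hsep z hz hzJ) hw (hcD ⟨h', hwab⟩)
      · exact hw.2 (hL'.2.2 ⟨h', hw.1⟩)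
      · exact disjoint_left.mp hD.disjoint (hcD ⟨h', hw.2⟩) (hsub hw)
    exact (one x hx.1 hx.2).trans (one y hy.1 hy.2).symm
  have hcap : (α ∪ c) ∩ (β ∪ c) = c := by
    rw [← inter_union_distrib_right, union_eq_right, hL.inter_eq]
    rintro z (rfl | rfl)
    exacts [hc.left_mem, hc.right_mem]
  refine (hE.janis (α ∪ c) (β ∪ c) (hL.1.isClosed.union hc.isClosed)
    (hL.2.1.isClosed.union hc.isClosed) (by rw [hcap]; exact hc.isPreconnected) x y (side α β hL rfl)
    (side β α hL.swap (union_comm _ _))).mono ?_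
  exact compl_subset_compl.mpr (union_subset_union subset_union_left subset_union_left)

lemma Good.exterior (hE : Good E) (hJ : IsJordan J) (hD : Face D J) : Face (D ∪ J)ᶜ J := by
  obtain ⟨x, hx⟩ : ((D ∪ J)ᶜ).Nonempty := by
    by_contra hne
    rw [not_nonempty_iff_eq_empty, compl_empty_iff] at hne
    refine hE.not_isPreconnected_compl hJ ?_
    have : Jᶜ = D := by
      refine Subset.antisymm (fun z hz => ?_) hD.disjoint.subset_compl_right
      exact (hne.symm.subset (mem_univ z)).resolve_right hz
    rw [this]; exact hD.isPreconnected
  have hxJ : x ∉ J := fun h => hx (Or.inr h)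
  have hW := hE.face_component hJ hxJ
  have : connectedComponentIn Jᶜ x = (D ∪ J)ᶜ := by
    refine Subset.antisymm (fun z hz => ?_) fun z hz =>
      (hE.linked_of_notMem hJ hD hx hz).mem_component
    rintro (h | h)
    · exact hx (Or.inl (hD.mem_of_linked (linked_of_mem_component hz).symm h))
    · exact connectedComponentIn_subset _ _ hz h
  rwa [this] at hW

/-- A crosscut divides a face into two faces. -/
lemma Good.theta (hE : Good E) (hL : Loop α β a b) (hD : Face D (α ∪ β)) (hc : IsArc c a b)
    (hcD : c \ {a, b} ⊆ D) :
    ∃ D₁ D₂, Disjoint D₁ D₂ ∧ D₁ ∪ D₂ = D \ c ∧ Face D₁ (α ∪ c) ∧ Face D₂ (β ∪ c) := by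
  have hcJ : ∀ z ∈ c, z ∈ α ∪ β → z ∈ ({a, b} : Set E) := by
    intro z hz hzJ
    by_contra hn
    exact disjoint_left.mp hD.disjoint (hcD ⟨hz, hn⟩) hzJ
  have hX := hE.exterior hL.isJordan hD
  obtain ⟨y, hy⟩ := hX.nonempty
  have side : ∀ α' β' : Set E, Loop α' β' a b → α' ∪ β' = α ∪ β → ∃ D₁, Face D₁ (α' ∪ c) ∧
      D₁ ⊆ D \ c ∧ ∀ x ∈ D \ c, x ∉ D₁ → Linked (α' ∪ c)ᶜ x y := by
    intro α' β' hL' hJ'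
    have hL1 : Loop α' c a b := ⟨hL'.1, hc, fun z hz => hcJ z hz.2 (hJ' ▸ Or.inl hz.1)⟩
    have hab : ({a, b} : Set E) ⊆ α' ∪ c := by
      rw [← hL1.inter_eq]; exact inter_subset_left.trans subset_union_left
    have hyc : ∀ z ∈ (D ∪ (α ∪ β))ᶜ ∪ (β' \ {a, b}), z ∉ α' ∪ c := by
      rintro z (hz | hz) (h' | h')
      · exact hz (Or.inr (hJ' ▸ Or.inl h'))
      · by_cases hzab : z ∈ ({a, b} : Set E)
        · exact hz (Or.inr (hJ' ▸ Or.inl (hL'.inter_eq.symm.subset hzab).1))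
        · exact hz (Or.inl (hcD ⟨h', hzab⟩))
      · exact hz.2 (hL'.2.2 ⟨h', hz.1⟩)
      · exact hz.2 (hcJ z h' (hJ' ▸ Or.inr hz.1))
    have hW := hE.face_component hL1.isJordan (hyc y (Or.inl hy))
    have hsub : (D ∪ (α ∪ β))ᶜ ∪ (β' \ {a, b}) ⊆ connectedComponentIn (α' ∪ c)ᶜ y :=
      (hX.isPreconnected_union (hJ' ▸ sdiff_subset.trans
        subset_union_right)).subset_connectedComponentIn (Or.inl hy) hyc
    refine ⟨_, hE.exterior hL1.isJordan hW, fun z hz => ?_, fun x hx hx' => ?_⟩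
    · simp only [mem_compl_iff, mem_union, not_or] at hz
      refine ⟨?_, hz.2.2⟩
      by_contra hzD
      refine hz.1 (hsub ?_)
      by_cases hzβ : z ∈ β'
      · exact Or.inr ⟨hzβ, fun h => (hab h).elim hz.2.1 hz.2.2⟩
      · refine Or.inl ?_
        rintro (h | h)
        · exact hzD h
        · exact (hJ'.symm.subset h).elim hz.2.1 hzβ
    · rw [notMem_compl_iff] at hx'
      rcases hx' with h | h | h
      · exact (linked_of_mem_component h).symm
      · exact absurd (hJ' ▸ Or.inl h) (disjoint_left.mp hD.disjoint hx.1)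
      · exact absurd h hx.2
  obtain ⟨D₁, hD₁, hs₁, hl₁⟩ := side α β hL rfl
  obtain ⟨D₂, hD₂, hs₂, hl₂⟩ := side β α hL.swap (union_comm _ _)
  refine ⟨D₁, D₂, ?_, ?_, hD₁, hD₂⟩
  · by_contra hd
    obtain ⟨z, hz1, hz2⟩ := not_disjoint_iff.mp hd
    have h12 : D₁ ⊆ D₂ := subset_of_disjoint_frontier hD₁.isPreconnected
      (by
        rw [hD₂.frontier_eq]
        refine disjoint_left.mpr fun w hw => ?_
        rintro (h | h)
        · exact disjoint_left.mp hD.disjoint (hs₁ hw).1 (Or.inr h)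
        · exact (hs₁ hw).2 h) ⟨z, hz1, hz2⟩
    obtain ⟨m, hm1, hm2⟩ := hL.1.nonempty_diff
    have hm : m ∈ closure D₂ := closure_mono h12 (by rw [hD₁.closure_eq]; exact Or.inr (Or.inl hm1))
    rw [hD₂.closure_eq] at hm
    rcases hm with h | h | h
    · exact disjoint_left.mp hD.disjoint (hs₂ h).1 (Or.inl hm1)
    · exact hm2 (hL.2.2 ⟨hm1, h⟩)
    · exact hm2 (hcJ m h (Or.inl hm1))
  · refine (union_subset hs₁ hs₂).antisymm fun x hx => ?_
    by_contra hn
    simp only [mem_union, not_or] at hn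
    have hcap : (α ∪ c) ∩ (β ∪ c) = c := by
      rw [← inter_union_distrib_right, union_eq_right, hL.inter_eq]
      rintro z (rfl | rfl)
      exacts [hc.left_mem, hc.right_mem]
    have hl := hE.janis (α ∪ c) (β ∪ c) (hL.1.isClosed.union hc.isClosed)
      (hL.2.1.isClosed.union hc.isClosed) (by rw [hcap]; exact hc.isPreconnected) x y (hl₁ x hx hn.1)
      (hl₂ x hx hn.2)
    refine hy (Or.inl (hD.mem_of_linked (hl.mono ?_) hx.1))
    exact compl_subset_compl.mpr (union_subset_union subset_union_left subset_union_left)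

end GoodSpace

section

variable {E : Type*} [MetricSpace E]

lemma Good.exists_jordan (hE : Good E) : ∃ J : Set E, IsJordan J := by
  obtain ⟨a, b, hab⟩ := hE.nontrivial.exists_pair_ne
  obtain ⟨S, -, hS⟩ := hE.geod.exists_arc hab le_rfl
  obtain ⟨m, hmS, hm⟩ := hS.nonempty_diff
  simp only [mem_insert_iff, mem_singleton_iff, not_or] at hm
  obtain ⟨S₁, S₂, h1, h2, h3, h4⟩ := hS.split hmS hm.1 hm.2
  obtain ⟨A, hAm, hA⟩ := hE.geod.arc_in_open (isClosed_singleton (x := m)).isOpen_compl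
    ((hE.nocut m).linked (show b ∈ ({m}ᶜ : Set E) from fun h => hm.2 h.symm)
      (show a ∈ ({m}ᶜ : Set E) from fun h => hm.1 h.symm)) hab.symm
  have hb : b ∉ S₁ := fun h => hm.2 (h4.subset ⟨h, h2.right_mem⟩).symm
  obtain ⟨p, hpA, R, hRA, hR, hRp⟩ := hA.first_hit h1.isClosed hb ⟨a, hA.right_mem, h1.left_mem⟩
  have hp1 : p ∈ S₁ := (hRp.symm.subset rfl).2
  have hpm : p ≠ m := hAm hpA
  have hp2 : p ∉ S₂ := fun h => hpm (h4.subset ⟨hp1, h⟩)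
  obtain ⟨q, hqR, Q, hQR, hQ, hQq⟩ := hR.symm.first_hit h2.isClosed hp2
    ⟨b, hR.left_mem, h2.right_mem⟩
  have hq2 : q ∈ S₂ := (hQq.symm.subset rfl).2
  have hqm : q ≠ m := hAm (hRA hqR)
  obtain ⟨T₁, hT₁, h5⟩ := h1.subarc hp1 h1.right_mem hpm
  obtain ⟨T₂, hT₂, h6⟩ := h2.subarc h2.left_mem hq2 hqm.symm
  have hT := h5.concat h6 (fun z hz => h4.subset ⟨hT₁ hz.1, hT₂ hz.2⟩)
  refine ⟨_, Loop.isJordan (α := Q) (β := T₁ ∪ T₂) ⟨hQ, hT, ?_⟩⟩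
  rintro z ⟨hz, hz' | hz'⟩
  · exact Or.inl (hRp.subset ⟨hQR hz, hT₁ hz'⟩)
  · exact Or.inr (hQq.subset ⟨hz, hT₂ hz'⟩)

/-- A face is locally connected at each of its boundary points. -/
lemma Good.locally_linked (hE : Good E) {D J : Set E} (hJ : IsJordan J) (hD : Face D J) {a : E}
    (ha : a ∈ J) {η : ℝ} (hη : 0 < η) : ∃ ρ > 0, ∀ x ∈ D ∩ ball a ρ, ∀ y ∈ D ∩ ball a ρ,
      Linked (D ∩ ball a η) x y := by
  obtain ⟨u, v, τ, hτ, hτJ, haτ, hJτ⟩ := hJ.exists_arc_compl ha isOpen_ball (mem_ball_self hη)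
  obtain ⟨ρ, hρ, hsub⟩ := Metric.mem_nhds_iff.mp
    ((isOpen_ball.inter hτ.isClosed.isOpen_compl).mem_nhds ⟨mem_ball_self hη, haτ⟩)
  refine ⟨ρ, hρ, fun x hx y hy => ?_⟩
  have hcap : J ∩ (τ ∪ (ball a η)ᶜ) = τ := by
    refine Subset.antisymm ?_ fun z hz => ⟨hτJ hz, Or.inl hz⟩
    rintro z ⟨hz, hz' | hz'⟩
    · exact hz'
    · by_contra hn
      exact hz' (hJτ ⟨hz, hn⟩)
  have hl := hE.janis J (τ ∪ (ball a η)ᶜ) hJ.isClosed (hτ.isClosed.union isOpen_ball.isClosed_compl)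
    (by rw [hcap]; exact hτ.isPreconnected) x y
    ((hD.isPreconnected.linked hx.1 hy.1).mono hD.disjoint.subset_compl_right)
    (((hE.geod.isPreconnected_ball a ρ).linked hx.2 hy.2).mono fun z hz => by
      rintro (h | h)
      · exact (hsub hz).2 h
      · exact h (hsub hz).1)
  obtain ⟨C, hCs, hC, hxC, hyC⟩ := hl
  refine ⟨C, fun z hz => ⟨?_, ?_⟩, hC, hxC, hyC⟩
  · exact hD.mem_of_linked ⟨C, fun w hw h => hCs hw (Or.inl h), hC, hxC, hz⟩ hx.1
  · by_contra h
    exact hCs hz (Or.inr (Or.inr h))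

lemma isArc_iUnion {Q : ℕ → Set E} {p : ℕ → E} {a : E} (hQ : ∀ k, IsArc (Q k) (p k) (p (k + 1)))
    (hnext : ∀ k, Q k ∩ Q (k + 1) ⊆ {p (k + 1)}) (hfar : ∀ k j, k + 1 < j → Disjoint (Q k) (Q j))
    (ha : ∀ k, a ∉ Q k) (hlim : ∀ ε > 0, ∃ N, ∀ k ≥ N, Q k ⊆ ball a ε) :
    IsArc (insert a (⋃ k, Q k)) (p 0) a := by
  choose q hqc hqi hq0 hq1 hqQ using hQ
  let G : ℝ → E := fun s => q ⌊s⌋₊ (s - ⌊s⌋₊)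
  have hfl : ∀ s : ℝ, 0 ≤ s → s - ⌊s⌋₊ ∈ Icc (0 : ℝ) 1 := fun s hs =>
    ⟨by linarith [Nat.floor_le hs], by linarith [Nat.lt_floor_add_one s]⟩
  have hGn : ∀ n : ℕ, EqOn G (fun s => q n (s - n)) (Icc n (n + 1)) := by
    intro n s hs
    rcases hs.2.lt_or_eq with h | h
    · have : ⌊s⌋₊ = n := (Nat.floor_eq_iff (n.cast_nonneg.trans hs.1)).mpr ⟨hs.1, h⟩
      simp only [G, this]
    · have : ⌊s⌋₊ = n + 1 := by rw [h]; exact_mod_cast Nat.floor_natCast (n + 1)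
      simp only [G, this]
      rw [h]; push_cast
      rw [sub_self, hq0, add_sub_cancel_left, hq1]
  have hGc : ∀ n : ℕ, ContinuousOn G (Icc 0 n) := by
    intro n
    induction n with
    | zero => simp
    | succ n ih =>
      have h1 : ContinuousOn G (Icc n (n + 1)) := by
        refine ((hqc n).comp (by fun_prop) ?_).congr (hGn n)
        intro s hs
        exact ⟨by linarith [hs.1], by linarith [hs.2]⟩
      have := ih.union_of_isClosed h1 isClosed_Icc isClosed_Icc
      rw [Icc_union_Icc_eq_Icc n.cast_nonneg (by linarith)] at this
      exact_mod_cast this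
  have hGc' : ContinuousOn G (Ici 0) := by
    intro s hs
    obtain ⟨n, hn⟩ := exists_nat_gt s
    refine (hGc n s ⟨hs, hn.le⟩).mono_of_mem_nhdsWithin ?_
    exact mem_nhdsWithin.mpr ⟨Iio n, isOpen_Iio, hn, fun z hz => ⟨hz.2, hz.1.le⟩⟩
  have hGmem : ∀ s, 0 ≤ s → G s ∈ Q ⌊s⌋₊ := fun s hs => by
    rw [← hqQ]; exact mem_image_of_mem _ (hfl s hs)
  have hGlt : ∀ s t : ℝ, 0 ≤ s → 0 ≤ t → ⌊s⌋₊ < ⌊t⌋₊ → G s ≠ G t := by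
    intro s t hs ht hst h
    have h1 := hGmem s hs
    have h2 := hGmem t ht
    rcases (Nat.succ_le_of_lt hst).lt_or_eq with h' | h'
    · exact disjoint_left.mp (hfar _ _ h') h1 (h ▸ h2)
    · have h3 : G s = p (⌊s⌋₊ + 1) := hnext _ ⟨h1, by rw [h]; rwa [← h'] at h2⟩
      have := hqi _ (hfl s hs) (by simp) (h3.trans (hq1 _).symm)
      linarith [Nat.lt_floor_add_one s]
  have hGi : InjOn G (Ici 0) := by
    intro s hs t ht h
    rcases lt_trichotomy ⌊s⌋₊ ⌊t⌋₊ with h' | h' | h'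
    · exact absurd h (hGlt s t hs ht h')
    · simp only [G, h'] at h
      have := hqi _ (h' ▸ hfl s hs) (hfl t ht) h
      linarith
    · exact absurd h.symm (hGlt t s ht hs h')
  let F : ℝ → E := fun t => if t < 1 then G (t / (1 - t)) else a
  have hpos : ∀ t : ℝ, 0 ≤ t → t < 1 → 0 ≤ t / (1 - t) := fun t h0 h1 =>
    div_nonneg h0 (by linarith)
  have hFa : ∀ t : ℝ, 0 ≤ t → t < 1 → F t ≠ a := by
    intro t h0 h1 h
    simp only [F, h1, if_true] at h
    exact ha _ (h ▸ hGmem _ (hpos t h0 h1))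
  refine ⟨F, ?_, ?_, ?_, by simp [F], ?_⟩
  · intro t ht
    rcases ht.2.lt_or_eq with h | rfl
    · have h1 : ContinuousWithinAt (fun t : ℝ => G (t / (1 - t))) (Ico 0 1) t := by
        refine ContinuousOn.comp (t := Ici 0) hGc' ?_ (fun s hs => hpos s hs.1 hs.2) t ⟨ht.1, h⟩
        exact ContinuousOn.div (by fun_prop) (by fun_prop) fun s hs => by linarith [hs.2]
      have h2 : ContinuousWithinAt F (Ico 0 1) t :=
        h1.congr (fun s hs => by simp [F, hs.2]) (by simp [F, h])
      refine h2.mono_of_mem_nhdsWithin ?_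
      exact mem_nhdsWithin.mpr ⟨Iio 1, isOpen_Iio, h, fun z hz => ⟨hz.2.1, hz.1⟩⟩
    · rw [Metric.continuousWithinAt_iff]
      intro ε hε
      obtain ⟨N, hN⟩ := hlim ε hε
      refine ⟨1 / (N + 1), by positivity, fun {t} ht htd => ?_⟩
      have hF1 : F 1 = a := by simp [F]
      rw [hF1]
      rcases ht.2.lt_or_eq with h | rfl
      · simp only [F, h, if_true]
        refine hN _ ?_ (hGmem _ (hpos t ht.1 h))
        refine Nat.le_floor ?_
        rw [Real.dist_eq, abs_sub_comm, abs_of_pos (by linarith), lt_div_iff₀ (by positivity)] at htd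
        rw [le_div_iff₀ (by linarith)]
        nlinarith
      · simpa [hF1] using hε
  · intro s hs t ht h
    rcases hs.2.lt_or_eq with h1 | rfl <;> rcases ht.2.lt_or_eq with h2 | rfl
    · simp only [F, h1, h2, if_true] at h
      have := hGi (hpos s hs.1 h1) (hpos t ht.1 h2) h
      rw [div_eq_div_iff (by linarith) (by linarith)] at this
      linarith
    · exact absurd (h.trans (by simp [F])) (hFa s hs.1 h1)
    · exact absurd (h.symm.trans (by simp [F])) (hFa t ht.1 h2)
    · rfl
  · simp [F, G, hq0]
  · ext z
    simp only [mem_image, mem_insert_iff, mem_iUnion]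
    constructor
    · rintro ⟨t, ht, rfl⟩
      rcases ht.2.lt_or_eq with h | rfl
      · right
        simp only [F, h, if_true]
        exact ⟨_, hGmem _ (hpos t ht.1 h)⟩
      · left; simp [F]
    · rintro (rfl | ⟨k, hk⟩)
      · exact ⟨1, by simp, by simp [F]⟩
      · rw [← hqQ] at hk
        obtain ⟨u, hu, rfl⟩ := hk
        have hs : 0 ≤ u + k := by have := hu.1; positivity
        have h1 : (u + k) / (1 + (u + k)) < 1 := by rw [div_lt_one (by positivity)]; linarith
        refine ⟨(u + k) / (1 + (u + k)), ⟨by positivity, h1.le⟩, ?_⟩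
        simp only [F, h1, if_true]
        have h2 : (u + k) / (1 + (u + k)) / (1 - (u + k) / (1 + (u + k))) = u + k := by
          have : 1 + (u + k) ≠ 0 := by positivity
          field_simp
          ring
        rw [h2, hGn k ⟨by linarith [hu.1], by linarith [hu.2]⟩]
        simp

lemma access_of_arcs {D : Set E} {a : E} {A : ℕ → Set E} {y : ℕ → E} (haD : a ∉ D)
    (hA : ∀ k, IsArc (A k) (y k) (y (k + 1))) (hAD : ∀ k, A k ⊆ D)
    (hlim : ∀ ε > 0, ∃ N, ∀ k ≥ N, A k ⊆ ball a ε) : Access D a := by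
  have hmax : ∀ T : Set E, IsClosed T → a ∉ T → ∀ m₀, (A m₀ ∩ T).Nonempty →
      ∃ m ≥ m₀, (A m ∩ T).Nonempty ∧ ∀ j > m, ¬ (A j ∩ T).Nonempty := by
    intro T hT haT m₀ hm₀
    obtain ⟨ε, hε, hεT⟩ := Metric.mem_nhds_iff.mp (hT.isOpen_compl.mem_nhds haT)
    obtain ⟨N, hN⟩ := hlim ε hε
    have hbdd : BddAbove {m | (A m ∩ T).Nonempty} := by
      refine ⟨N, fun m hm => ?_⟩
      by_contra h
      obtain ⟨z, hz1, hz2⟩ := hm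
      exact hεT (hN m (not_le.mp h).le hz1) hz2
    refine ⟨_, le_csSup hbdd hm₀, Nat.sSup_mem ⟨m₀, hm₀⟩ hbdd, fun j hj hjT => ?_⟩
    exact absurd (le_csSup hbdd hjT) (not_le.mpr hj)
  let σ := {s : ℕ × E // s.2 ∈ A s.1 ∧ ∀ j > s.1, s.2 ∉ A j}
  have step : ∀ s : σ, ∃ s' : σ, ∃ Q, s.1.1 < s'.1.1 ∧ IsArc Q s.1.2 s'.1.2 ∧ Q ⊆ A s.1.1 ∧
      Q ∩ A s'.1.1 = {s'.1.2} ∧ ∀ j > s'.1.1, Disjoint Q (A j) := by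
    rintro ⟨⟨k, p⟩, hp, hpj⟩
    have hpy : p ≠ y (k + 1) := fun h => hpj (k + 1) k.lt_succ_self (h ▸ (hA (k + 1)).left_mem)
    obtain ⟨T, hTA, hT⟩ := (hA k).tail hp hpy
    obtain ⟨m, hm, hmT, hmj⟩ := hmax T hT.isClosed (fun h => haD (hAD _ (hTA h))) (k + 1)
      ⟨y (k + 1), (hA _).left_mem, hT.right_mem⟩
    obtain ⟨p', hp', Q, hQT, hQ, hQp⟩ := hT.first_hit (hA m).isClosed (hpj m hm)
      (by rwa [inter_comm])
    refine ⟨⟨⟨m, p'⟩, (hQp.symm.subset rfl).2, fun j hj h => hmj j hj ⟨p', h, hp'⟩⟩, Q, hm, hQ,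
      hQT.trans hTA, hQp, fun j hj => disjoint_left.mpr fun z hz hzj => hmj j hj ⟨z, hzj, hQT hz⟩⟩
  choose next Q h1 h2 h3 h4 h5 using step
  obtain ⟨m, -, hm, hmj⟩ := hmax {y 0} isClosed_singleton
    (fun h => haD (h ▸ hAD 0 (hA 0).left_mem)) 0 ⟨y 0, (hA 0).left_mem, rfl⟩
  let s₀ : σ := ⟨⟨m, y 0⟩, by obtain ⟨z, hz, rfl⟩ := hm; exact hz,
    fun j hj h => hmj j hj ⟨y 0, h, rfl⟩⟩
  let s : ℕ → σ := fun n => next^[n] s₀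
  have hs : ∀ n, s (n + 1) = next (s n) := fun n => Function.iterate_succ_apply' _ _ _
  have hmono : StrictMono fun n => (s n).1.1 :=
    strictMono_nat_of_lt_succ fun n => by simp only [hs]; exact h1 _
  have hQA : ∀ n, Q (s n) ⊆ A (s n).1.1 := fun n => h3 _
  refine ⟨_, hAD _ (s 0).2.1, _, isArc_iUnion (Q := fun n => Q (s n)) (p := fun n => (s n).1.2)
    (a := a) (fun k => ?_) (fun k => ?_) (fun k j hj => ?_) (fun k h => haD (hAD _ (hQA k h)))
    (fun ε hε => ?_), ?_⟩
  · rw [hs]; exact h2 _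
  · have h4' := h4 (s k)
    rw [← hs] at h4'
    rw [← h4']
    exact inter_subset_inter_right _ (hQA _)
  · refine (h5 (s k) (s j).1.1 ?_).mono_right (hQA j)
    rw [← hs]
    exact hmono hj
  · obtain ⟨N, hN⟩ := hlim ε hε
    exact ⟨N, fun k hk => (hQA k).trans (hN _ (hk.trans (hmono.id_le k)))⟩
  · rintro z ⟨rfl | hz, hza⟩
    · exact absurd rfl hza
    · obtain ⟨k, hk⟩ := mem_iUnion.mp hz
      exact hAD _ (hQA k hk)

lemma Good.access (hE : Good E) {D J : Set E} (hJ : IsJordan J) (hD : Face D J) {a : E}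
    (ha : a ∈ J) : Access D a := by
  have haD : a ∉ D := fun h => disjoint_left.mp hD.disjoint h ha
  have hacl : a ∈ closure D := by rw [hD.closure_eq]; exact Or.inr ha
  have hη : ∀ k : ℕ, (0 : ℝ) < 1 / (k + 1) := fun k => by positivity
  choose ρ hρ hl using fun k : ℕ => hE.locally_linked hJ hD ha (hη k)
  have hstep : ∀ (n : ℕ) (x : D), ∃ x' : D, dist (x' : E) a < min (ρ (n + 1)) (dist (x : E) a) := by
    intro n x
    have hx : 0 < dist (x : E) a := dist_pos.mpr fun h => haD (h ▸ x.2)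
    obtain ⟨z, hz, hzd⟩ := Metric.mem_closure_iff.mp hacl _ (lt_min (hρ (n + 1)) hx)
    exact ⟨⟨z, hz⟩, by rwa [dist_comm]⟩
  choose g hg using hstep
  obtain ⟨z₀, hz₀, hzd₀⟩ := Metric.mem_closure_iff.mp hacl _ (hρ 0)
  let y : ℕ → D := fun n => Nat.rec ⟨z₀, hz₀⟩ g n
  have hy1 : ∀ n, dist (y (n + 1)).1 a < dist (y n).1 a := by
    intro n
    exact (lt_min_iff.mp (hg n (y n))).2
  have hy2 : ∀ n, dist (y n).1 a < ρ n := by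
    intro n
    cases n with
    | zero => rw [dist_comm]; exact hzd₀
    | succ n => exact (lt_min_iff.mp (hg n (y n))).1
  have harc : ∀ k : ℕ, ∃ S ⊆ D ∩ ball a (1 / (k + 1)), IsArc S (y k).1 (y (k + 1)).1 := fun k =>
    hE.geod.arc_in_open (hD.isOpen.inter isOpen_ball)
      (hl k _ ⟨(y k).2, hy2 k⟩ _ ⟨(y (k + 1)).2, (hy1 k).trans (hy2 k)⟩)
      (fun h => (h ▸ hy1 k).ne rfl)
  choose A hA hAarc using harc
  refine access_of_arcs haD hAarc (fun k => (hA k).trans inter_subset_left) fun ε hε => ?_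
  obtain ⟨N, hN⟩ := exists_nat_one_div_lt hε
  refine ⟨N, fun k hk => ((hA k).trans inter_subset_right).trans (ball_subset_ball ?_)⟩
  refine le_trans ?_ hN.le
  exact Nat.one_div_le_one_div hk

/-- Any two boundary points of a face are joined by a crosscut. -/
lemma Good.crosscut (hE : Good E) {D J : Set E} (hJ : IsJordan J) (hD : Face D J) {a b : E}
    (ha : a ∈ J) (hb : b ∈ J) (hab : a ≠ b) : ∃ c, IsArc c a b ∧ c \ {a, b} ⊆ D :=
  hE.geod.crosscut_of_access hD.isOpen hD.isPreconnected (hE.access hJ hD ha) (hE.access hJ hD hb)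
    (fun h => disjoint_left.mp hD.disjoint h ha) hab

end

section LC

variable {E : Type*} [MetricSpace E]

/-- Local connectedness of a subset, in terms of small linking sets. -/
def LC (S : Set E) : Prop :=
  ∀ x ∈ S, ∀ ε > 0, ∀ᶠ y in nhds x, y ∈ S → Linked (S ∩ ball x ε) x y

lemma LC.uniform {S : Set E} (h : LC S) (hS : IsCompact S) {ε : ℝ} (hε : 0 < ε) :
    ∃ δ > 0, ∀ x ∈ S, ∀ y ∈ S, dist y x < δ → Linked (S ∩ ball x ε) x y := by
  have h1 : ∀ x : S, ∃ r > 0, r ≤ ε / 2 ∧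
      ∀ y ∈ S, y ∈ ball x.1 r → Linked (S ∩ ball x.1 (ε / 2)) x y := by
    intro x
    obtain ⟨r, hr, h2⟩ := Metric.eventually_nhds_iff_ball.mp (h x x.2 (ε / 2) (by linarith))
    exact ⟨min r (ε / 2), lt_min hr (by linarith), min_le_right _ _, fun y hy hyr =>
      h2 y (ball_subset_ball (min_le_left _ _) hyr) hy⟩
  choose r hr hrε hl using h1
  obtain ⟨δ, hδ, hL⟩ := lebesgue_number_lemma_of_metric hS (c := fun x : S => ball x.1 (r x))
    (fun _ => isOpen_ball) (fun x hx => mem_iUnion.mpr ⟨⟨x, hx⟩, mem_ball_self (hr _)⟩)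
  refine ⟨δ, hδ, fun x hx y hy hxy => ?_⟩
  obtain ⟨z, hz⟩ := hL x hx
  have hxz := hz (mem_ball_self hδ)
  refine ((hl z x hx hxz).symm.trans (hl z y hy (hz hxy))).mono (inter_subset_inter_right _ ?_)
  intro w hw
  rw [mem_ball] at hw hxz ⊢
  have := dist_triangle_right w x z.1
  linarith [hrε z]

lemma LC.iUnion {ι : Type*} [Finite ι] {S : ι → Set E} (h : ∀ i, LC (S i))
    (hc : ∀ i, IsClosed (S i)) : LC (⋃ i, S i) := by
  intro x _ ε hε
  have : ∀ᶠ y in nhds x, ∀ i, y ∈ S i → Linked ((⋃ i, S i) ∩ ball x ε) x y := by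
    rw [eventually_all]
    intro i
    by_cases hx : x ∈ S i
    · filter_upwards [h i x hx ε hε] with y hy hyS
      exact (hy hyS).mono (inter_subset_inter_left _ (subset_iUnion S i))
    · filter_upwards [(hc i).isOpen_compl.mem_nhds hx] with y hy hyS
      exact absurd hyS hy
  filter_upwards [this] with y hy hyS
  obtain ⟨i, hi⟩ := mem_iUnion.mp hyS
  exact hy i hi

lemma LC.union {S T : Set E} (hS : LC S) (hT : LC T) (hSc : IsClosed S) (hTc : IsClosed T) :
    LC (S ∪ T) := by
  rw [union_eq_iUnion]
  exact LC.iUnion (fun b => by cases b <;> assumption) (fun b => by cases b <;> assumption)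

lemma IsArc.lc {S : Set E} {a b : E} (h : IsArc S a b) : LC S := by
  obtain ⟨f, hf, hi, -, -, rfl⟩ := h
  rintro _ ⟨t, ht, rfl⟩ ε hε
  obtain ⟨δ, hδ, hfδ⟩ := Metric.continuousOn_iff.mp hf t ht ε hε
  have hcl : IsClosed (f '' (Icc 0 1 \ ball t δ)) :=
    ((isCompact_Icc.diff isOpen_ball).image_of_continuousOn (hf.mono sdiff_subset)).isClosed
  have hnot : f t ∉ f '' (Icc 0 1 \ ball t δ) := by
    rintro ⟨s, hs, hst⟩
    exact hs.2 ((hi hs.1 ht hst).symm ▸ mem_ball_self hδ)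
  filter_upwards [hcl.isOpen_compl.mem_nhds hnot]
  rintro _ hy ⟨s, hs, rfl⟩
  have hsδ : s ∈ ball t δ := by
    by_contra hn
    exact hy ⟨s, ⟨hs, hn⟩, rfl⟩
  refine ⟨f '' (Icc 0 1 ∩ ball t δ), ?_, ?_, mem_image_of_mem _ ⟨ht, mem_ball_self hδ⟩,
    mem_image_of_mem _ ⟨hs, hsδ⟩⟩
  · rintro _ ⟨u, hu, rfl⟩
    exact ⟨mem_image_of_mem _ hu.1, hfδ u hu.1 hu.2⟩
  · refine IsPreconnected.image ?_ _ (hf.mono inter_subset_left)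
    rw [Real.ball_eq_Ioo]
    exact (ordConnected_Icc.inter ordConnected_Ioo).isPreconnected

lemma IsJordan.lc {J : Set E} (h : IsJordan J) : LC J := by
  obtain ⟨a, b, α, β, h, rfl⟩ := h
  exact h.1.lc.union h.2.1.lc h.1.isClosed h.2.1.isClosed

end LC

section Cells

variable {E : Type*} [MetricSpace E] {ι : Type} {D : ι → Set E} {Γ Γ₁ Γ₂ c : Set E} {a b : E}

/-- A decomposition into faces bounded by simple closed curves, with skeleton `Γ`. -/
structure Cells (D : ι → Set E) (Γ : Set E) : Prop where
  face : ∀ i, Face (D i) (frontier (D i))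
  jordan : ∀ i, IsJordan (frontier (D i))
  disj : ∀ i j, i ≠ j → Disjoint (D i) (D j)
  cover : ∀ x, ∃ i, x ∈ closure (D i)
  skel : Γ = ⋃ i, frontier (D i)

lemma Cells.frontier_subset (h : Cells D Γ) (i : ι) : frontier (D i) ⊆ Γ := by
  rw [h.skel]; exact subset_iUnion (fun i => frontier (D i)) i

lemma Cells.isClosed [Finite ι] (h : Cells D Γ) : IsClosed Γ := by
  rw [h.skel]; exact isClosed_iUnion_of_finite fun _ => isClosed_frontier

lemma Cells.lc [Finite ι] (h : Cells D Γ) : LC Γ := by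
  rw [h.skel]; exact LC.iUnion (fun i => (h.jordan i).lc) fun _ => isClosed_frontier

lemma Cells.disjoint_closure (h : Cells D Γ) {i j : ι} (hij : i ≠ j) :
    Disjoint (D i) (closure (D j)) :=
  (h.disj i j hij).closure_right (h.face i).isOpen

lemma Cells.disjoint (h : Cells D Γ) (i : ι) : Disjoint (D i) Γ := by
  rw [h.skel, disjoint_iUnion_right]
  intro j
  by_cases hij : i = j
  · subst hij; exact (h.face i).disjoint
  · exact (h.disjoint_closure hij).mono_right frontier_subset_closure

lemma Cells.exists_mem (h : Cells D Γ) {x : E} (hx : x ∉ Γ) : ∃ i, x ∈ D i := by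
  obtain ⟨i, hi⟩ := h.cover x
  rw [(h.face i).closure_eq] at hi
  exact ⟨i, hi.resolve_right fun h' => hx (h.frontier_subset i h')⟩

lemma Cells.exists_arc_mem (h : Cells D Γ) (hc : IsArc c a b) (hcΓ : c ∩ Γ = {a, b}) :
    ∃ i, c \ {a, b} ⊆ D i ∧ a ∈ frontier (D i) ∧ b ∈ frontier (D i) := by
  have hd : ∀ z ∈ c \ {a, b}, z ∉ Γ := fun z hz hzΓ => hz.2 (hcΓ.subset ⟨hz.1, hzΓ⟩)
  obtain ⟨m, hm⟩ := hc.nonempty_diff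
  obtain ⟨i, hi⟩ := h.exists_mem (hd m hm)
  have hsub : c \ {a, b} ⊆ D i := subset_of_disjoint_frontier hc.isPreconnected_diff
    (disjoint_left.mpr fun z hz hz' => hd z hz (h.frontier_subset i hz')) ⟨m, hm, hi⟩
  have hcl : c ⊆ D i ∪ frontier (D i) := by
    rw [← (h.face i).closure_eq]
    exact hc.subset_closure_diff.trans (closure_mono hsub)
  have hab : ∀ z ∈ ({a, b} : Set E), z ∈ frontier (D i) := fun z hz =>
    (hcl (hcΓ.symm.subset hz).1).resolve_left fun hz' =>
      disjoint_left.mp (h.disjoint i) hz' (hcΓ.symm.subset hz).2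
  exact ⟨i, hsub, hab a (Or.inl rfl), hab b (Or.inr rfl)⟩

open Classical in
lemma Cells.split (h : Cells D Γ) {i : ι} {α β D₁ D₂ : Set E} (hL : Loop α β a b)
    (hJ : α ∪ β = frontier (D i)) (hc : IsArc c a b) (hcD : c \ {a, b} ⊆ D i)
    (hd : Disjoint D₁ D₂) (hu : D₁ ∪ D₂ = D i \ c) (h₁ : Face D₁ (α ∪ c)) (h₂ : Face D₂ (β ∪ c)) :
    Cells (fun o : Option ι => o.elim D₂ (Function.update D i D₁)) (Γ ∪ c) := by
  have hs₁ : D₁ ⊆ D i := (subset_union_left.trans hu.subset).trans sdiff_subset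
  have hs₂ : D₂ ⊆ D i := (subset_union_right.trans hu.subset).trans sdiff_subset
  have hcJ : ∀ z ∈ c, z ∈ frontier (D i) → z ∈ ({a, b} : Set E) := by
    intro z hz hz'
    by_contra hn
    exact disjoint_left.mp (h.face i).disjoint (hcD ⟨hz, hn⟩) hz'
  have hj₁ : IsJordan (α ∪ c) :=
    Loop.isJordan ⟨hL.1, hc, fun z hz => hcJ z hz.2 (hJ ▸ Or.inl hz.1)⟩
  have hj₂ : IsJordan (β ∪ c) :=
    Loop.isJordan ⟨hL.2.1, hc, fun z hz => hcJ z hz.2 (hJ ▸ Or.inr hz.1)⟩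
  refine ⟨?_, ?_, ?_, ?_, ?_⟩
  · rintro (_ | j)
    · simpa only [Option.elim, h₂.frontier_eq] using h₂
    · by_cases hj : j = i
      · subst hj; simpa only [Option.elim, Function.update_self, h₁.frontier_eq] using h₁
      · simpa only [Option.elim, Function.update_of_ne hj] using h.face j
  · rintro (_ | j)
    · simpa only [Option.elim, h₂.frontier_eq] using hj₂
    · by_cases hj : j = i
      · subst hj; simpa only [Option.elim, Function.update_self, h₁.frontier_eq] using hj₁
      · simpa only [Option.elim, Function.update_of_ne hj] using h.jordan j
  · have key : ∀ j, Disjoint D₂ (Function.update D i D₁ j) := by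
      intro j
      by_cases hj : j = i
      · subst hj; rw [Function.update_self]; exact hd.symm
      · rw [Function.update_of_ne hj]; exact (h.disj i j (Ne.symm hj)).mono_left hs₂
    rintro (_ | j) (_ | k) hjk
    · exact absurd rfl hjk
    · exact key k
    · exact (key j).symm
    · have hjk' : j ≠ k := fun h => hjk (h ▸ rfl)
      have hsub : ∀ l, Function.update D i D₁ l ⊆ D l := by
        intro l
        by_cases hl : l = i
        · subst hl; rw [Function.update_self]; exact hs₁
        · rw [Function.update_of_ne hl]
      exact (h.disj j k hjk').mono (hsub j) (hsub k)
  · intro x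
    obtain ⟨j, hj⟩ := h.cover x
    by_cases hji : j = i
    · subst hji
      rw [(h.face j).closure_eq] at hj
      have : x ∈ closure D₁ ∨ x ∈ closure D₂ := by
        rw [h₁.closure_eq, h₂.closure_eq]
        rcases hj with hj | hj
        · by_cases hxc : x ∈ c
          · exact Or.inl (Or.inr (Or.inr hxc))
          · exact (hu.symm.subset ⟨hj, hxc⟩).imp Or.inl Or.inl
        · rw [← hJ] at hj
          exact hj.imp (fun h => Or.inr (Or.inl h)) (fun h => Or.inr (Or.inl h))
      rcases this with h | h
      · exact ⟨some j, by simpa only [Option.elim, Function.update_self] using h⟩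
      · exact ⟨none, h⟩
    · exact ⟨some j, by simpa only [Option.elim, Function.update_of_ne hji] using hj⟩
  · ext x
    rw [h.skel]
    simp only [mem_union, mem_iUnion]
    constructor
    · rintro (⟨j, hj⟩ | hx)
      · by_cases hji : j = i
        · subst hji
          rw [← hJ] at hj
          rcases hj with hj | hj
          · exact ⟨some j, by
              simp only [Option.elim, Function.update_self, h₁.frontier_eq]; exact Or.inl hj⟩
          · exact ⟨none, by simp only [Option.elim, h₂.frontier_eq]; exact Or.inl hj⟩
        · exact ⟨some j, by simpa only [Option.elim, Function.update_of_ne hji] using hj⟩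
      · exact ⟨none, by simp only [Option.elim, h₂.frontier_eq]; exact Or.inr hx⟩
    · rintro ⟨_ | j, hj⟩
      · simp only [Option.elim, h₂.frontier_eq] at hj
        exact hj.imp (fun hx => ⟨i, hJ ▸ Or.inr hx⟩) id
      · by_cases hji : j = i
        · subst hji
          simp only [Option.elim, Function.update_self, h₁.frontier_eq] at hj
          exact hj.imp (fun hx => ⟨j, hJ ▸ Or.inl hx⟩) id
        · simp only [Option.elim, Function.update_of_ne hji] at hj
          exact Or.inl ⟨j, hj⟩

/-- `Γ` is the skeleton of a finite decomposition. -/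
def Net (Γ : Set E) : Prop :=
  ∃ (ι : Type) (_ : Finite ι) (D : ι → Set E), Cells D Γ

/-- `Ext Γ Γ'`: the set `Γ'` arises from `Γ` by successively adding crosscuts. -/
inductive Ext (Γ : Set E) : Set E → Prop
  | refl : Ext Γ Γ
  | step {Γ₁ c : Set E} {a b : E} (h : Ext Γ Γ₁) (hc : IsArc c a b) (hcΓ : c ∩ Γ₁ = {a, b}) :
      Ext Γ (Γ₁ ∪ c)

lemma Ext.trans (h : Ext Γ Γ₁) (h' : Ext Γ₁ Γ₂) : Ext Γ Γ₂ := by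
  induction h' with
  | refl => exact h
  | step _ hc hcΓ ih => exact ih.step hc hcΓ

lemma Ext.subset (h : Ext Γ Γ₁) : Γ ⊆ Γ₁ := by
  induction h with
  | refl => exact subset_rfl
  | step _ _ _ ih => exact ih.trans subset_union_left

lemma Ext.net [CompactSpace E] (hE : Good E) (h : Ext Γ Γ₁) (hΓ : Net Γ) : Net Γ₁ := by
  classical
  induction h with
  | refl => exact hΓ
  | step _ hc hcΓ ih =>
    obtain ⟨ι, _, D, h⟩ := ih
    obtain ⟨i, hi, ha, hb⟩ := h.exists_arc_mem hc hcΓ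
    obtain ⟨α, β, hL, hJ⟩ := (h.jordan i).split ha hb hc.ne
    obtain ⟨D₁, D₂, hd, hu, h₁, h₂⟩ := hE.theta hL (hJ ▸ h.face i) hc hi
    exact ⟨Option ι, inferInstance, _, h.split hL hJ hc hi hd hu h₁ h₂⟩

lemma Net.isClosed (h : Net Γ) : IsClosed Γ := by
  obtain ⟨ι, _, D, h⟩ := h
  exact h.isClosed

lemma Net.lc (h : Net Γ) : LC Γ := by
  obtain ⟨ι, _, D, h⟩ := h
  exact h.lc

end Cells

section Density

variable {E : Type*} [MetricSpace E]

lemma Good.interior_arc (hE : Good E) {S : Set E} {a b : E} (hS : IsArc S a b) :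
    interior S = ∅ := by
  by_contra hne
  obtain ⟨z, hz⟩ := nonempty_iff_ne_empty.mpr hne
  obtain ⟨m, hmU, hmS, hm⟩ := mem_closure_iff.mp (hS.subset_closure_diff (interior_subset hz))
    _ isOpen_interior hz
  obtain ⟨f, hf, hi, f0, f1, rfl⟩ := hS
  obtain ⟨t, ht, rfl⟩ := hmS
  have ht0 : 0 < t := ht.1.lt_of_ne fun h => hm (Or.inl (by rw [← h, f0]))
  have ht1 : t < 1 := ht.2.lt_of_ne fun h => hm (Or.inr (by rw [h, f1]; rfl))
  set U := interior (f '' Icc 0 1)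
  have hnb : f ⁻¹' U ∈ nhds t :=
    (hf.continuousAt (Icc_mem_nhds ht0 ht1)) (isOpen_interior.mem_nhds hmU)
  obtain ⟨δ, hδ, hδU⟩ := nhds_basis_closedBall.mem_iff.mp hnb
  obtain ⟨s₁, hs₁, hs₁t⟩ : ∃ s, max 0 (t - δ) < s ∧ s < t := exists_between (max_lt ht0 (by linarith))
  obtain ⟨s₂, hs₂t, hs₂⟩ : ∃ s, t < s ∧ s < min 1 (t + δ) := exists_between (lt_min ht1 (by linarith))
  rw [max_lt_iff] at hs₁
  rw [lt_min_iff] at hs₂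
  have hI1 : Ioo s₁ s₂ ⊆ Icc 0 1 := fun s hs => ⟨by linarith [hs.1], by linarith [hs.2]⟩
  have hIc : Icc s₁ s₂ ⊆ Icc 0 1 := fun s hs => ⟨by linarith [hs.1], by linarith [hs.2]⟩
  have hcl1 : IsClosed (f '' (Icc 0 1 \ Ioo s₁ s₂)) :=
    ((isCompact_Icc.diff isOpen_Ioo).image_of_continuousOn (hf.mono sdiff_subset)).isClosed
  have hV : f '' Ioo s₁ s₂ = U \ f '' (Icc 0 1 \ Ioo s₁ s₂) := by
    ext w
    constructor
    · rintro ⟨s, hs, rfl⟩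
      refine ⟨hδU ?_, ?_⟩
      · rw [mem_closedBall, Real.dist_eq, abs_le]
        constructor <;> linarith [hs.1, hs.2, hs₁.2, hs₂.2]
      · rintro ⟨s', hs', h⟩
        exact hs'.2 ((hi hs'.1 (hI1 hs) h) ▸ hs)
    · rintro ⟨hw, hw'⟩
      obtain ⟨s, hs, rfl⟩ := interior_subset hw
      by_contra hn
      exact hw' ⟨s, ⟨hs, fun h => hn ⟨s, h, rfl⟩⟩, rfl⟩
  have hVo : IsOpen (f '' Ioo s₁ s₂) := by
    rw [hV]; exact isOpen_interior.sdiff hcl1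
  have hclV : closure (f '' Ioo s₁ s₂) ⊆ f '' Icc s₁ s₂ :=
    closure_minimal (image_mono Ioo_subset_Icc_self)
      (isCompact_Icc.image_of_continuousOn (hf.mono hIc)).isClosed
  have hfr : frontier (f '' Ioo s₁ s₂) ⊆ {f s₁} ∪ {f s₂} := by
    rw [hVo.frontier_eq]
    rintro w ⟨hw, hw'⟩
    obtain ⟨s, hs, rfl⟩ := hclV hw
    rcases hs.1.eq_or_lt with h | h
    · exact Or.inl (h ▸ rfl)
    rcases hs.2.eq_or_lt with h' | h'
    · exact Or.inr (h' ▸ rfl)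
    exact absurd ⟨s, ⟨h, h'⟩, rfl⟩ hw'
  have hne : ∀ s ∈ Icc (0 : ℝ) 1, ∀ s' ∈ Icc (0 : ℝ) 1, s ≠ s' → f s ∈ ({f s'}ᶜ : Set E) :=
    fun s hs s' hs' h h' => h (hi hs hs' h')
  have m0 : (0 : ℝ) ∈ Icc (0 : ℝ) 1 := by simp
  have m1 : s₁ ∈ Icc (0 : ℝ) 1 := ⟨hs₁.1.le, by linarith⟩
  have m2 : s₂ ∈ Icc (0 : ℝ) 1 := ⟨by linarith, hs₂.1.le⟩
  have hl := hE.janis {f s₁} {f s₂} isClosed_singleton isClosed_singleton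
    (by
      rw [singleton_inter_eq_empty.mpr (hne s₁ m1 s₂ m2 (by linarith))]
      exact isPreconnected_empty) (f t) (f 0)
    ((hE.nocut _).linked (hne t ht s₁ m1 hs₁t.ne') (hne 0 m0 s₁ m1 hs₁.1.ne))
    ((hE.nocut _).linked (hne t ht s₂ m2 hs₂t.ne) (hne 0 m0 s₂ m2 (by linarith)))
  have := mem_of_linked hl (disjoint_left.mpr fun w hw hw' => hw (hfr hw'))
    (mem_image_of_mem f ⟨hs₁t, hs₂t⟩)
  obtain ⟨s, hs, hs0⟩ := this
  have := hi (hI1 hs) m0 hs0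
  linarith [hs.1]

/-- A crosscut of a face passing close to a given point. -/
lemma Face.exists_crosscut_near [CompactSpace E] (hE : Good E) {D J : Set E} (hJ : IsJordan J)
    (hD : Face D J) {p : E} (hp : p ∈ D) {ε : ℝ} (hε : 0 < ε) :
    ∃ a ∈ J, ∃ b ∈ J, ∃ c, IsArc c a b ∧ c \ {a, b} ⊆ D ∧ ∃ x ∈ c, dist x p < ε := by
  obtain ⟨ε', hε', hball⟩ := Metric.mem_nhds_iff.mp
    (inter_mem (hD.isOpen.mem_nhds hp) (ball_mem_nhds p hε))
  obtain ⟨s, hs, -⟩ := hJ.exists_ne p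
  obtain ⟨t, ht, hts⟩ := hJ.exists_ne s
  have hDJ := disjoint_left.mp hD.disjoint
  obtain ⟨A, hA, hAD⟩ : ∃ A, IsArc A p s ∧ A \ {s} ⊆ D := by
    obtain ⟨y, hy, R, hR, hRD⟩ := hE.access hJ hD hs
    by_cases hpy : p = y
    · subst hpy; exact ⟨R, hR, hRD⟩
    · obtain ⟨B, hBD, hB⟩ := hE.geod.arc_in_open hD.isOpen (hD.isPreconnected.linked hp hy) hpy
      obtain ⟨A, hAs, hA⟩ := hB.join hR (fun h => hDJ hp (h ▸ hs))
      refine ⟨A, hA, fun w hw => ?_⟩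
      rcases hAs hw.1 with h | h
      · exact hBD h
      · exact hRD ⟨h, hw.2⟩
  have hJA : J ∩ A = {s} := by
    refine Subset.antisymm (fun z hz => ?_) (by simpa using ⟨hs, hA.right_mem⟩)
    by_contra hn
    exact hDJ (hAD ⟨hz.2, hn⟩) hz.1
  have hDAo : IsOpen (D \ A) := hD.isOpen.sdiff hA.isClosed
  have hDA : IsPreconnected (D \ A) := by
    refine isPreconnected_of_linked fun u hu v hv => ?_
    have hl := hE.janis J A hJ.isClosed hA.isClosed (by rw [hJA]; exact isPreconnected_singleton)
      u v ((hD.isPreconnected.linked hu.1 hv.1).mono hD.disjoint.subset_compl_right)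
      ((hE.isPreconnected_compl_arc hA).linked hu.2 hv.2)
    obtain ⟨C, hCs, hC, huC, hvC⟩ := hl
    refine ⟨C, fun z hz => ⟨?_, fun h => hCs hz (Or.inr h)⟩, hC, huC, hvC⟩
    exact hD.mem_of_linked ⟨C, fun w hw h => hCs hw (Or.inl h), hC, huC, hz⟩ hu.1
  obtain ⟨q, hq, hqA⟩ : ∃ q ∈ ball p ε', q ∉ A := by
    by_contra hn
    push Not at hn
    have : p ∈ interior A := mem_interior.mpr ⟨ball p ε', hn, isOpen_ball, mem_ball_self hε'⟩
    rw [hE.interior_arc hA] at this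
    exact this
  have htA : t ∉ A := fun h => hts (hJA.subset ⟨ht, h⟩)
  obtain ⟨r, hr, hrA⟩ := Metric.mem_nhds_iff.mp (hA.isClosed.isOpen_compl.mem_nhds htA)
  have htf : t ∈ frontier (D \ A) := by
    rw [hDAo.frontier_eq]
    refine ⟨?_, fun h => hDJ h.1 ht⟩
    rw [sdiff_eq, inter_comm]
    refine hA.isClosed.isOpen_compl.inter_closure ⟨htA, ?_⟩
    rw [hD.closure_eq]; exact Or.inr ht
  obtain ⟨a, ⟨har, haf⟩, y, hy, R, hR, hRD⟩ := hE.geod.access_near hDAo htf hr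
  have haA : a ∉ A := hrA har
  have haJ : a ∈ J := by
    rw [hDAo.frontier_eq] at haf
    have : a ∈ closure D := closure_mono sdiff_subset haf.1
    rw [hD.closure_eq] at this
    exact this.resolve_left fun h => haf.2 ⟨h, haA⟩
  have hqD : q ∈ D := (hball hq).1
  obtain ⟨B, hB, hBD⟩ : ∃ B, IsArc B q a ∧ B \ {a} ⊆ D \ A := by
    by_cases hqy : q = y
    · subst hqy; exact ⟨R, hR, hRD⟩
    · obtain ⟨B, hBD, hB⟩ := hE.geod.arc_in_open hDAo (hDA.linked ⟨hqD, hqA⟩ hy) hqy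
      obtain ⟨A', hAs, hA'⟩ := hB.join hR (fun h => hDJ hqD (h ▸ haJ))
      refine ⟨A', hA', fun w hw => ?_⟩
      rcases hAs hw.1 with h | h
      · exact hBD h
      · exact hRD ⟨h, hw.2⟩
  obtain ⟨G, hGb, hG⟩ := hE.geod.arc_in_open isOpen_ball
    ((hE.geod.isPreconnected_ball p ε').linked hq (mem_ball_self hε'))
    (fun h => hqA (h ▸ hA.left_mem))
  obtain ⟨p', hp', G', hG'G, hG', hG'A⟩ := hG.first_hit hA.isClosed hqA
    ⟨p, hG.right_mem, hA.left_mem⟩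
  have hp'A : p' ∈ A := (hG'A.symm.subset rfl).2
  have hGD : G ⊆ D := fun z hz => (hball (hGb hz)).1
  have haG' : a ∉ G' := fun h => hDJ (hGD (hG'G h)) haJ
  obtain ⟨g, hgB, B', hB'B, hB', hB'G⟩ := hB.symm.first_hit hG'.isClosed haG'
    ⟨q, hB.left_mem, hG'.left_mem⟩
  have hgG' : g ∈ G' := (hB'G.symm.subset rfl).2
  have hga : g ≠ a := fun h => haG' (h ▸ hgG')
  have hgA : g ∉ A := (hBD ⟨hgB, hga⟩).2
  have hp's : s ≠ p' := fun h => hDJ (hGD hp') (h ▸ hs)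
  obtain ⟨A', hA'A, hA'⟩ := hA.subarc hA.right_mem hp'A hp's
  obtain ⟨G'', hG''G, hG''⟩ := hG'.subarc hG'.right_mem hgG' (fun h => hgA (h ▸ hp'A))
  have hc := (hA'.concat hG'' (fun z hz => hG'A.subset ⟨hG''G hz.2, hA'A hz.1⟩)).concat hB'.symm (by
    rintro z ⟨hz | hz, hzB⟩
    · exfalso
      refine (hBD ⟨hB'B hzB, ?_⟩).2 (hA'A hz)
      rintro rfl
      exact haA (hA'A hz)
    · exact hB'G.subset ⟨hzB, hG''G hz⟩)
  refine ⟨s, hs, a, haJ, _, hc, ?_, p', Or.inl (Or.inl hA'.right_mem), (hball (hGb hp')).2⟩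
  rintro z ⟨(hz | hz) | hz, hn⟩
  · exact hAD ⟨hA'A hz, fun h => hn (Or.inl h)⟩
  · exact hGD (hG'G (hG''G hz))
  · exact (hBD ⟨hB'B hz, fun h => hn (Or.inr h)⟩).1

lemma Net.exists_ext_near [CompactSpace E] (hE : Good E) {Γ : Set E} (hΓ : Net Γ) (p : E) {ε : ℝ}
    (hε : 0 < ε) : ∃ Γ₁, Ext Γ Γ₁ ∧ ∃ x ∈ Γ₁, dist x p < ε := by
  by_cases hp : p ∈ Γ
  · exact ⟨Γ, Ext.refl, p, hp, by simpa using hε⟩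
  obtain ⟨ι, _, D, h⟩ := hΓ
  obtain ⟨i, hi⟩ := h.exists_mem hp
  obtain ⟨a, ha, b, hb, c, hc, hcD, x, hx, hxp⟩ :=
    (h.face i).exists_crosscut_near hE (h.jordan i) hi hε
  refine ⟨Γ ∪ c, Ext.refl.step hc ?_, x, Or.inr hx, hxp⟩
  refine Subset.antisymm (fun z hz => ?_) ?_
  · by_contra hn
    exact disjoint_left.mp (h.disjoint i) (hcD ⟨hz.1, hn⟩) hz.2
  · rintro z (rfl | rfl)
    · exact ⟨hc.left_mem, h.frontier_subset i ha⟩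
    · exact ⟨hc.right_mem, h.frontier_subset i hb⟩

lemma Net.exists_ext_dense [CompactSpace E] (hE : Good E) {Γ : Set E} (hΓ : Net Γ) {ε : ℝ}
    (hε : 0 < ε) : ∃ Γ₁, Ext Γ Γ₁ ∧ ∀ p, ∃ x ∈ Γ₁, dist x p < ε := by
  obtain ⟨N, -, hNf, hN⟩ := finite_cover_balls_of_compact (isCompact_univ (X := E))
    (show 0 < ε / 2 by linarith)
  have key : ∃ Γ₁, Ext Γ Γ₁ ∧ ∀ p ∈ N, ∃ x ∈ Γ₁, dist x p < ε / 2 := by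
    clear hN
    induction N, hNf using Set.Finite.induction_on with
    | empty => exact ⟨Γ, Ext.refl, by simp⟩
    | insert _ _ ih =>
      obtain ⟨Γ₁, h1, h2⟩ := ih
      rename_i q s _ _
      obtain ⟨Γ₂, h3, x, hx, hxq⟩ := (h1.net hE hΓ).exists_ext_near hE q (show 0 < ε / 2 by linarith)
      refine ⟨Γ₂, h1.trans h3, ?_⟩
      rintro p (rfl | hp)
      · exact ⟨x, hx, hxq⟩
      · obtain ⟨y, hy, hyp⟩ := h2 p hp
        exact ⟨y, h3.subset hy, hyp⟩
  obtain ⟨Γ₁, h1, h2⟩ := key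
  refine ⟨Γ₁, h1, fun p => ?_⟩
  obtain ⟨n, hn, hpn⟩ := mem_iUnion₂.mp (hN (mem_univ p))
  obtain ⟨x, hx, hxn⟩ := h2 n hn
  refine ⟨x, hx, ?_⟩
  rw [mem_ball] at hpn
  have := dist_triangle_right x p n
  linarith

end Density

lemma isClosed_component {E : Type*} [TopologicalSpace E] {F : Set E} (hF : IsClosed F) (x : E) :
    IsClosed (connectedComponentIn F x) := by
  by_cases hx : x ∈ F
  · refine isClosed_of_closure_subset ?_
    exact isPreconnected_connectedComponentIn.closure.subset_connectedComponentIn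
      (subset_closure (mem_connectedComponentIn hx))
      (closure_minimal (connectedComponentIn_subset F x) hF)
  · rw [connectedComponentIn_eq_empty hx]
    exact isClosed_empty

section Mesh

variable {E : Type*} [MetricSpace E]

/-- The complement of a sufficiently fine web has only small components. -/
lemma Good.dist_le_of_web (hE : Good E) {Γ P : Set E} (hΓ : IsClosed Γ) (hP : P.Finite)
    {δ ε : ℝ} (hε : 0 < ε) (hεδ : 64 * ε ≤ δ)
    (hr : ∀ z u v : E, δ / 4 ≤ dist u z → δ / 4 ≤ dist v z → Linked (closedBall z (10 * ε))ᶜ u v)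
    (hdense : ∀ x, ∃ p ∈ P, dist x p ≤ 2 * ε)
    (hlink : ∀ x ∈ Γ, ∃ p ∈ P, dist x p ≤ 2 * ε ∧ Linked (Γ ∩ closedBall x (5 * ε)) x p)
    (hpair : ∀ p ∈ P, ∀ q ∈ P, dist p q ≤ 4 * ε → Linked (Γ ∩ closedBall p (5 * ε)) p q)
    {u v : E} (huv : Linked Γᶜ u v) : dist u v ≤ δ := by
  by_contra! hlt
  set P' : Set E := {p ∈ P | ∃ m, dist m u = δ / 2 ∧ dist m p ≤ 2 * ε} with hP'
  have key : ∀ Q : Set E, Q.Finite → Q ⊆ P' →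
      Linked (Γ ∪ ⋃ q ∈ Q, closedBall q (2 * ε))ᶜ u v := by
    intro Q hQ
    induction Q, hQ using Set.Finite.induction_on with
    | empty => intro _; simpa using huv
    | @insert p Q _ hQf ih =>
      intro hQP
      have hQP' : Q ⊆ P' := (subset_insert _ _).trans hQP
      obtain ⟨hpP, m, hmu, hmp⟩ := hQP (mem_insert p Q)
      set K₂ := Γ ∪ ⋃ q ∈ Q, closedBall q (2 * ε) with hK₂
      have hK₂c : IsClosed K₂ := hΓ.union (hQf.isClosed_biUnion fun _ _ => isClosed_closedBall)
      set Z := connectedComponentIn (K₂ ∩ closedBall p (10 * ε)) p with hZ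
      have hZc : IsClosed Z := isClosed_component (hK₂c.inter isClosed_closedBall) p
      have hZs : Z ⊆ K₂ ∩ closedBall p (10 * ε) := connectedComponentIn_subset _ _
      have hinter : (closedBall p (2 * ε) ∪ Z) ∩ K₂ = Z := by
        refine Subset.antisymm ?_ fun x hx => ⟨Or.inr hx, (hZs hx).1⟩
        rintro x ⟨hx | hx, hxK⟩
        swap
        · exact hx
        have hxp : dist x p ≤ 2 * ε := hx
        refine Linked.mem_component ?_
        have hw : ∀ q ∈ P, dist p q ≤ 4 * ε → Linked (K₂ ∩ closedBall p (10 * ε)) p q :=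
          fun q hq hpq => (hpair p hpP q hq hpq).mono
            (inter_subset_inter subset_union_left (closedBall_subset_closedBall (by linarith)))
        rcases hxK with hxΓ | hxB
        · obtain ⟨q, hq, hxq, hl⟩ := hlink x hxΓ
          refine (hw q hq ?_).trans (hl.symm.mono
            (inter_subset_inter subset_union_left fun y hy => ?_))
          · linarith [dist_triangle_left p q x]
          · rw [mem_closedBall] at hy ⊢
            linarith [dist_triangle y x p]
        · obtain ⟨q, hq, hxq⟩ := mem_iUnion₂.mp hxB
          have hxq' : dist x q ≤ 2 * ε := hxq
          have hpq : dist p q ≤ 4 * ε := by linarith [dist_triangle_left p q x]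
          refine (hw q (hQP' hq).1 hpq).trans
            (((hE.geod.isPreconnected_closedBall q (2 * ε)).linked
              (mem_closedBall_self (by positivity)) hxq).mono
              (subset_inter (fun y hy => Or.inr (mem_biUnion hq hy)) fun y hy => ?_))
          rw [mem_closedBall] at hy ⊢
          linarith [dist_triangle_right y p q]
      have hl := hE.janis (closedBall p (2 * ε) ∪ Z) K₂ (isClosed_closedBall.union hZc) hK₂c
        (by rw [hinter]; exact isPreconnected_connectedComponentIn) u v
        ((hr p u v ?_ ?_).mono (compl_subset_compl.mpr (union_subset
          (closedBall_subset_closedBall (by linarith)) fun x hx => (hZs hx).2))) (ih hQP')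
      · refine hl.mono (compl_subset_compl.mpr ?_)
        rw [biUnion_insert]
        rintro x (hx | hx | hx)
        · exact Or.inr (Or.inl hx)
        · exact Or.inl (Or.inl hx)
        · exact Or.inr (Or.inr hx)
      · linarith [dist_triangle_right m u p, dist_comm u p]
      · linarith [dist_triangle u m v, dist_triangle m p v, dist_comm m u, dist_comm p v]
  obtain ⟨C, hCs, hC, huC, hvC⟩ := key P' (hP.subset (sep_subset _ _)) subset_rfl
  obtain ⟨m, hm, hmu⟩ := hC.intermediate_value huC hvC
    (f := fun x => dist x u) (continuous_id.dist continuous_const).continuousOn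
    (show δ / 2 ∈ Icc (dist u u) (dist v u) by
      rw [dist_self, dist_comm v u]; constructor <;> linarith)
  obtain ⟨p, hp, hmp⟩ := hdense m
  exact hCs hm (Or.inr (mem_biUnion (⟨hp, m, hmu, hmp⟩ : p ∈ P') hmp))

variable [CompactSpace E]

/-- Small balls do not separate points at a definite distance from the centre. -/
lemma Good.bottleneck (hE : Good E) {δ : ℝ} (hδ : 0 < δ) :
    ∃ r > 0, ∀ z u v : E, δ ≤ dist u z → δ ≤ dist v z → Linked (closedBall z r)ᶜ u v := by
  suffices h : ∃ r > 0, ∀ z ∈ (univ : Set E), ∀ u v : E, δ ≤ dist u z → δ ≤ dist v z →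
      Linked (closedBall z r)ᶜ u v by
    obtain ⟨r, hr, h⟩ := h
    exact ⟨r, hr, fun z => h z (mem_univ z)⟩
  refine isCompact_univ.induction_on (p := fun s => ∃ r > 0, ∀ z ∈ s, ∀ u v : E, δ ≤ dist u z →
    δ ≤ dist v z → Linked (closedBall z r)ᶜ u v) ⟨1, one_pos, by simp⟩ ?_ ?_ ?_
  · rintro s t hst ⟨r, hr, h⟩
    exact ⟨r, hr, fun z hz => h z (hst hz)⟩
  · rintro s t ⟨r, hr, h⟩ ⟨r', hr', h'⟩
    refine ⟨min r r', lt_min hr hr', ?_⟩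
    rintro z (hz | hz) u v hu hv
    · exact (h z hz u v hu hv).mono
        (compl_subset_compl.mpr (closedBall_subset_closedBall (min_le_left _ _)))
    · exact (h' z hz u v hu hv).mono
        (compl_subset_compl.mpr (closedBall_subset_closedBall (min_le_right _ _)))
  · intro z₀ _
    have hKc : IsClosed {u : E | δ / 2 ≤ dist u z₀} :=
      isClosed_le continuous_const (continuous_id.dist continuous_const)
    obtain ⟨C, hCz, hCc, hCp, hKC⟩ := hE.geod.exists_compact_superset
      isOpen_compl_singleton (hE.nocut z₀) hKc.isCompact (fun u hu h => by
        simp only [mem_ofPred_eq] at hu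
        rw [mem_singleton_iff.mp h, dist_self] at hu
        linarith)
    obtain ⟨ρ, hρ, hball⟩ := Metric.mem_nhds_iff.mp (hCc.isClosed.isOpen_compl.mem_nhds
      (fun h => hCz h rfl : z₀ ∉ C))
    refine ⟨ball z₀ (min (ρ / 2) (δ / 2)), mem_nhdsWithin_of_mem_nhds
      (ball_mem_nhds _ (by positivity)), ρ / 4, by positivity, fun z hz u v hu hv => ?_⟩
    have hz1 : dist z z₀ < ρ / 2 := lt_of_lt_of_le hz (min_le_left _ _)
    have hz2 : dist z z₀ < δ / 2 := lt_of_lt_of_le hz (min_le_right _ _)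
    have hm : ∀ w, δ ≤ dist w z → w ∈ C := fun w hw => hKC (by
      have := dist_triangle_right w z z₀
      simp only [mem_ofPred_eq]; linarith)
    refine (hCp.linked (hm u hu) (hm v hv)).mono fun w hw h => ?_
    refine hball (?_ : w ∈ ball z₀ ρ) hw
    rw [mem_ball]
    have := dist_triangle w z z₀
    have := mem_closedBall.mp h
    linarith

/-- Linking two points of a net along a geodesic. -/
lemma Net.exists_bridge (hE : Good E) {Γ : Set E} (hΓ : Net Γ) {p q : E} (hp : p ∈ Γ) (hq : q ∈ Γ)
    {d η : ℝ} (hd : dist p q ≤ d) (hη : 0 < η) :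
    ∃ Γ', Ext Γ Γ' ∧ Linked (Γ' ∩ closedBall p (d + η)) p q ∧ ∀ x ∈ Γ' \ Γ,
      ∃ e, (e = p ∨ e = q) ∧ dist x e ≤ d / 2 ∧ Linked (Γ' ∩ closedBall x (d + η)) x e := by
  rcases eq_or_ne p q with rfl | hpq
  · have hd0 : 0 ≤ d := by simpa using hd
    exact ⟨Γ, Ext.refl, Linked.refl ⟨hp, mem_closedBall_self (by positivity)⟩, by simp⟩
  have hd0 : 0 < d := (dist_pos.mpr hpq).trans_le hd
  obtain ⟨f, f0, f1, hf⟩ := hE.geod p q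
  obtain ⟨δ₀, hδ₀, hlc⟩ := hΓ.lc.uniform hΓ.isClosed.isCompact hη
  obtain ⟨N, hN⟩ := exists_nat_gt (dist p q / δ₀)
  have hN0 : (0 : ℝ) < N := lt_of_le_of_lt (by positivity) hN
  have hNd : dist p q / N < δ₀ := by
    rw [div_lt_iff₀ hδ₀] at hN
    rw [div_lt_iff₀ hN0]; linarith
  set D := dist p q with hD
  have hDpos : 0 < D := dist_pos.mpr hpq
  have hfc : ContinuousOn f (Icc 0 1) := by
    refine LipschitzOnWith.continuousOn (K := ⟨D, hDpos.le⟩) (LipschitzOnWith.of_dist_le_mul ?_)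
    intro s hs t ht
    rw [hf s hs t ht, Real.dist_eq, mul_comm]
    rfl
  have hfi : InjOn f (Icc 0 1) := by
    intro s hs t ht h
    have := hf s hs t ht
    rw [h, dist_self] at this
    rcases mul_eq_zero.mp this.symm with h | h
    · exact sub_eq_zero.mp (abs_eq_zero.mp h)
    · exact absurd h hDpos.ne'
  set T : Set ℝ := Icc 0 1 ∩ f ⁻¹' Γ with hT
  have hTc : IsClosed T := hfc.preimage_isClosed_of_isClosed isClosed_Icc hΓ.isClosed
  have hTK : IsCompact T := isCompact_Icc.of_isClosed_subset hTc inter_subset_left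
  have hT0 : (0 : ℝ) ∈ T := ⟨⟨le_rfl, zero_le_one⟩, by simpa [f0] using hp⟩
  have hT1 : (1 : ℝ) ∈ T := ⟨⟨zero_le_one, le_rfl⟩, by simpa [f1] using hq⟩
  set U : Set E := ⋃ s ∈ Icc (0 : ℝ) 1, ball (f s) η with hU
  have hfU : ∀ s ∈ Icc (0 : ℝ) 1, f s ∈ U := fun s hs => mem_biUnion hs (mem_ball_self hη)
  have hbU : ∀ s ∈ Icc (0 : ℝ) 1, ball (f s) η ⊆ U := fun s hs x hx => mem_biUnion hs hx
  have hUb : ∀ s ∈ Icc (0 : ℝ) 1, U ⊆ closedBall (f s) (d + η) := by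
    intro s hs x hx
    obtain ⟨t, ht, hxt⟩ := mem_iUnion₂.mp hx
    rw [mem_closedBall]
    have h1 := dist_triangle x (f t) (f s)
    have h2 := mem_ball.mp hxt
    have h3 : |t - s| ≤ 1 := by rw [abs_le]; constructor <;> linarith [ht.1, ht.2, hs.1, hs.2]
    have h4 := hf t ht s hs
    have h5 : |t - s| * D ≤ D := by nlinarith
    linarith
  have key : ∀ k : ℕ, k ≤ N → ∃ t ∈ T, (k : ℝ) / N ≤ t ∧ ∃ Γ', Ext Γ Γ' ∧
      Γ' \ Γ ⊆ f '' Icc 0 t ∧ ∀ x ∈ insert (f t) (Γ' \ Γ), Linked (Γ' ∩ U) p x := by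
    intro k
    induction k with
    | zero =>
      intro _
      refine ⟨0, hT0, by simp, Γ, Ext.refl, by simp, ?_⟩
      rintro x (rfl | hx)
      · rw [f0]; exact Linked.refl ⟨hp, by simpa [f0] using hfU 0 hT0.1⟩
      · exact absurd hx.1 hx.2
    | succ k ih =>
      intro hk
      obtain ⟨t, ht, hkt, Γ', hext, hsub, hlink⟩ := ih (by omega)
      set s : ℝ := ((k + 1 : ℕ) : ℝ) / N with hs
      have hs1 : s ≤ 1 := by
        rw [hs, div_le_one hN0]; exact_mod_cast hk
      have hsk : s = k / N + 1 / N := by rw [hs]; push_cast; ring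
      have hk0 : (0 : ℝ) ≤ k / N := by positivity
      rcases le_or_gt s t with hst | hst
      · exact ⟨t, ht, hst, Γ', hext, hsub, hlink⟩
      have hs0 : 0 ≤ s := ht.1.1.trans hst.le
      obtain ⟨l, ⟨hlT, hls⟩, hlmax⟩ :=
        (hTK.inter_right isClosed_Iic : IsCompact (T ∩ Iic s)).exists_isGreatest ⟨t, ht, hst.le⟩
      have htl : t ≤ l := hlmax ⟨ht, hst.le⟩
      have hl : Linked (Γ' ∩ U) p (f l) := by
        refine (hlink _ (Or.inl rfl)).trans ((hlc (f t) ht.2 (f l) hlT.2 ?_).mono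
          (inter_subset_inter hext.subset (hbU t ht.1)))
        rw [hf l hlT.1 t ht.1, abs_of_nonneg (by linarith)]
        have h1 : l - t ≤ 1 / N := by linarith [mem_Iic.mp hls]
        calc (l - t) * D ≤ 1 / N * D := by gcongr
          _ = D / N := by ring
          _ < δ₀ := hNd
      rcases le_or_gt s l with hsl | hsl
      · refine ⟨l, hlT, hsl, Γ', hext, hsub.trans (image_mono (Icc_subset_Icc_right htl)), ?_⟩
        rintro x (rfl | hx)
        · exact hl
        · exact hlink x (Or.inr hx)
      obtain ⟨r, ⟨hrT, hrs⟩, hrmin⟩ :=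
        (hTK.inter_right isClosed_Ici : IsCompact (T ∩ Ici s)).exists_isLeast ⟨1, hT1, hs1⟩
      have hlr : l < r := hsl.trans_le hrs
      have hI : Icc l r ⊆ Icc 0 1 := Icc_subset_Icc hlT.1.1 hrT.1.2
      have hc := isArc_image_Icc hlr (hfc.mono hI) (hfi.mono hI)
      have hcU : f '' Icc l r ⊆ U := by
        rintro _ ⟨u, hu, rfl⟩
        exact hfU u (hI hu)
      have hcΓ : f '' Icc l r ∩ Γ' = {f l, f r} := by
        refine Subset.antisymm ?_ ?_
        · rintro _ ⟨⟨u, hu, rfl⟩, huΓ⟩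
          by_cases huΓ' : f u ∈ Γ
          · have huT : u ∈ T := ⟨hI hu, huΓ'⟩
            rcases le_total u s with h | h
            · left; rw [le_antisymm (hlmax ⟨huT, h⟩) hu.1]
            · right; rw [mem_singleton_iff, le_antisymm hu.2 (hrmin ⟨huT, h⟩)]
          · obtain ⟨w, hw, hwu⟩ := hsub ⟨huΓ, huΓ'⟩
            have := hfi ⟨hw.1, hw.2.trans ht.1.2⟩ (hI hu) hwu
            left; rw [le_antisymm (by linarith [hw.2]) hu.1]
        · rintro _ (rfl | rfl)
          · exact ⟨hc.left_mem, hext.subset hlT.2⟩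
          · exact ⟨hc.right_mem, hext.subset hrT.2⟩
      have hcl : ∀ x ∈ f '' Icc l r, Linked ((Γ' ∪ f '' Icc l r) ∩ U) p x := fun x hx =>
        (hl.mono (inter_subset_inter_left _ subset_union_left)).trans
          ((hc.isPreconnected.linked hc.left_mem hx).mono (subset_inter subset_union_right hcU))
      refine ⟨r, hrT, hrs, _, hext.step hc hcΓ, ?_, ?_⟩
      · rintro x ⟨hx | hx, hn⟩
        · exact image_mono (Icc_subset_Icc_right (htl.trans hlr.le)) (hsub ⟨hx, hn⟩)
        · exact image_mono (Icc_subset_Icc_left hlT.1.1) hx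
      · rintro x (rfl | ⟨hx | hx, hn⟩)
        · exact hcl _ hc.right_mem
        · exact (hlink x (Or.inr ⟨hx, hn⟩)).mono (inter_subset_inter_left _ subset_union_left)
        · exact hcl x hx
  obtain ⟨t, ht, hNt, Γ', hext, hsub, hlink⟩ := key N le_rfl
  have ht1 : t = 1 := le_antisymm ht.1.2 (by rwa [div_self hN0.ne'] at hNt)
  subst ht1
  have hpq' : Linked (Γ' ∩ U) p q := by simpa [f1] using hlink (f 1) (Or.inl rfl)
  refine ⟨Γ', hext, hpq'.mono (inter_subset_inter_right _ (by simpa [f0] using hUb 0 hT0.1)), ?_⟩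
  intro x hx
  obtain ⟨u, hu, rfl⟩ := hsub hx
  have hxp := (hlink _ (Or.inr hx)).symm
  have hsubb : Γ' ∩ U ⊆ Γ' ∩ closedBall (f u) (d + η) := inter_subset_inter_right _ (hUb u hu)
  rcases le_total u (1 / 2) with h | h
  · refine ⟨p, Or.inl rfl, ?_, hxp.mono hsubb⟩
    rw [← f0, hf u hu 0 hT0.1, sub_zero, abs_of_nonneg hu.1]
    nlinarith
  · refine ⟨q, Or.inr rfl, ?_, (hxp.trans hpq').mono hsubb⟩
    rw [← f1, hf u hu 1 hT1.1, abs_sub_comm, abs_of_nonneg (by linarith [hu.2])]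
    nlinarith [hu.2]

/-- Every net extends to one whose faces are small. -/
lemma Net.exists_ext_mesh (hE : Good E) {Γ : Set E} (hΓ : Net Γ) {δ : ℝ} (hδ : 0 < δ) :
    ∃ Γ', Ext Γ Γ' ∧ ∀ x y, Linked Γ'ᶜ x y → dist x y ≤ δ := by
  obtain ⟨r, hr, hbot⟩ := hE.bottleneck (show 0 < δ / 4 by linarith)
  obtain ⟨ε, hε, hε1, hε2⟩ : ∃ ε > 0, 10 * ε ≤ r ∧ 64 * ε ≤ δ :=
    ⟨min (r / 10) (δ / 64), by positivity, by linarith [min_le_left (r / 10) (δ / 64)],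
      by linarith [min_le_right (r / 10) (δ / 64)]⟩
  obtain ⟨Γ₁, hext₁, hd⟩ := hΓ.exists_ext_dense hE hε
  have hΓ₁ := hext₁.net hE hΓ
  obtain ⟨δ₁, hδ₁, hlc⟩ := hΓ₁.lc.uniform hΓ₁.isClosed.isCompact hε
  obtain ⟨P, hPΓ, hPf, hP⟩ := finite_cover_balls_of_compact hΓ₁.isClosed.isCompact
    (lt_min hδ₁ hε)
  have hnear : ∀ x ∈ Γ₁, ∃ p ∈ P, dist x p < δ₁ ∧ dist x p < ε := fun x hx => by
    obtain ⟨p, hp, hxp⟩ := mem_iUnion₂.mp (hP hx)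
    exact ⟨p, hp, lt_min_iff.mp hxp⟩
  have key : ∀ R : Set (E × E), R.Finite → R ⊆ P ×ˢ P → ∃ Γ₂, Ext Γ₁ Γ₂ ∧
      (∀ x ∈ Γ₂, ∃ p ∈ P, dist x p ≤ 2 * ε ∧ Linked (Γ₂ ∩ closedBall x (5 * ε)) x p) ∧
      ∀ z ∈ R, dist z.1 z.2 ≤ 4 * ε → Linked (Γ₂ ∩ closedBall z.1 (5 * ε)) z.1 z.2 := by
    intro R hR
    induction R, hR using Set.Finite.induction_on with
    | empty =>
      intro _
      refine ⟨Γ₁, Ext.refl, fun x hx => ?_, by simp⟩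
      obtain ⟨p, hp, h1, h2⟩ := hnear x hx
      refine ⟨p, hp, by linarith, (hlc p (hPΓ hp) x hx h1).symm.mono
        (inter_subset_inter_right _ fun y hy => ?_)⟩
      rw [mem_ball] at hy
      rw [mem_closedBall]
      linarith [dist_triangle_right y x p]
    | @insert z R _ _ ih =>
      intro hRP
      obtain ⟨Γ₂, hext₂, hl, hp⟩ := ih ((subset_insert _ _).trans hRP)
      obtain ⟨hz1, hz2⟩ := hRP (mem_insert z R)
      by_cases hz : dist z.1 z.2 ≤ 4 * ε
      swap
      · refine ⟨Γ₂, hext₂, hl, ?_⟩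
        rintro w (rfl | hw) h
        · exact absurd h hz
        · exact hp w hw h
      obtain ⟨Γ₃, hext₃, hzl, hnew⟩ := (hext₂.net hE hΓ₁).exists_bridge hE
        (hext₂.subset (hPΓ hz1)) (hext₂.subset (hPΓ hz2)) hz hε
      rw [show 4 * ε + ε = 5 * ε by ring] at hzl hnew
      refine ⟨Γ₃, hext₂.trans hext₃, fun x hx => ?_, ?_⟩
      · by_cases hx2 : x ∈ Γ₂
        · obtain ⟨p, hp, h1, h2⟩ := hl x hx2
          exact ⟨p, hp, h1, h2.mono (inter_subset_inter_left _ hext₃.subset)⟩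
        · obtain ⟨e, he, h1, h2⟩ := hnew x ⟨hx, hx2⟩
          exact ⟨e, by rcases he with rfl | rfl <;> assumption, by linarith, h2⟩
      · rintro w (rfl | hw) h
        · exact hzl
        · exact (hp w hw h).mono (inter_subset_inter_left _ hext₃.subset)
  obtain ⟨Γ₂, hext₂, hl, hp⟩ := key (P ×ˢ P) (hPf.prod hPf) subset_rfl
  refine ⟨Γ₂, hext₁.trans hext₂, fun x y hxy => hE.dist_le_of_web (hext₂.net hE hΓ₁).isClosed hPf
    hε hε2 (fun z u v hu hv => (hbot z u v hu hv).mono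
      (compl_subset_compl.mpr (closedBall_subset_closedBall hε1))) (fun x => ?_) hl
    (fun p hpP q hqP h => hp (p, q) ⟨hpP, hqP⟩ h) hxy⟩
  obtain ⟨y, hy, hyx⟩ := hd x
  obtain ⟨p, hp, -, hyp⟩ := hnear y hy
  exact ⟨p, hp, by linarith [dist_triangle_left x p y]⟩

end Mesh

section Glue

variable {E F : Type*} [TopologicalSpace E] [TopologicalSpace F]

lemma continuousOn_invFunOn [T2Space F] [Nonempty E] {K : Set E} (hK : IsCompact K) {f : E → F}
    (hf : ContinuousOn f K) (hi : InjOn f K) : ContinuousOn (Function.invFunOn f K) (f '' K) := by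
  rw [continuousOn_iff_isClosed]
  intro t ht
  refine ⟨f '' (K ∩ t), ((hK.inter_right ht).image_of_continuousOn
    (hf.mono inter_subset_left)).isClosed, ?_⟩
  ext y
  constructor
  · rintro ⟨hy, x, hx, rfl⟩
    rw [mem_preimage, hi.leftInvOn_invFunOn hx] at hy
    exact ⟨⟨x, ⟨hx, hy⟩, rfl⟩, x, hx, rfl⟩
  · rintro ⟨⟨x, ⟨hx, hxt⟩, rfl⟩, -⟩
    refine ⟨?_, x, hx, rfl⟩
    rw [mem_preimage, hi.leftInvOn_invFunOn hx]
    exact hxt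

lemma IsArc.exists_homeo [T2Space E] {S : Set E} {S' : Set F} {a b : E} {a' b' : F} (h : IsArc S a b)
    (h' : IsArc S' a' b') :
    ∃ g : E → F, ContinuousOn g S ∧ InjOn g S ∧ g '' S = S' ∧ g a = a' ∧ g b = b' := by
  obtain ⟨f, hf, hi, rfl, rfl, rfl⟩ := h
  obtain ⟨f', hf', hi', rfl, rfl, rfl⟩ := h'
  have hl := hi.leftInvOn_invFunOn
  have hm : MapsTo (Function.invFunOn f (Icc 0 1)) (f '' Icc 0 1) (Icc 0 1) := by
    rintro _ ⟨t, ht, rfl⟩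
    rwa [hl ht]
  refine ⟨f' ∘ Function.invFunOn f (Icc 0 1),
    hf'.comp (continuousOn_invFunOn isCompact_Icc hf hi) hm,
    hi'.comp (Function.invFunOn_injOn_image f _) hm, ?_, ?_, ?_⟩
  · rw [image_comp, hi.invFunOn_image subset_rfl]
  · simp only [Function.comp, hl (left_mem_Icc.mpr zero_le_one)]
  · simp only [Function.comp, hl (right_mem_Icc.mpr zero_le_one)]

lemma exists_glue {Γ c : Set E} (hΓ : IsClosed Γ) (hc : IsClosed c) {φ g : E → F}
    (hφ : ContinuousOn φ Γ) (hφi : InjOn φ Γ) (hg : ContinuousOn g c) (hgi : InjOn g c)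
    (heq : ∀ x ∈ Γ ∩ c, φ x = g x) (himg : φ '' Γ ∩ g '' c ⊆ φ '' (Γ ∩ c)) :
    ∃ ψ : E → F, ContinuousOn ψ (Γ ∪ c) ∧ InjOn ψ (Γ ∪ c) ∧ EqOn ψ φ Γ ∧ EqOn ψ g c := by
  classical
  set ψ : E → F := fun x => if x ∈ Γ then φ x else g x with hψ
  have h1 : EqOn ψ φ Γ := fun x hx => if_pos hx
  have h2 : EqOn ψ g c := fun x hx => by
    by_cases hxΓ : x ∈ Γ
    · rw [h1 hxΓ, heq x ⟨hxΓ, hx⟩]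
    · exact if_neg hxΓ
  have mixed : ∀ x ∈ Γ, ∀ y ∈ c, ψ x = ψ y → x = y := by
    intro x hx y hy hxy
    rw [h1 hx, h2 hy] at hxy
    obtain ⟨z, hz, hzx⟩ := himg ⟨mem_image_of_mem φ hx, hxy ▸ mem_image_of_mem g hy⟩
    obtain rfl := hφi hz.1 hx hzx
    exact hgi hz.2 hy (by rw [← heq z hz, hxy])
  refine ⟨ψ, (hφ.congr h1).union_of_isClosed (hg.congr h2) hΓ hc, ?_, h1, h2⟩
  rintro x (hx | hx) y (hy | hy) hxy
  · rw [h1 hx, h1 hy] at hxy; exact hφi hx hy hxy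
  · exact mixed x hx y hy hxy
  · exact (mixed y hy x hx hxy.symm).symm
  · rw [h2 hx, h2 hy] at hxy; exact hgi hx hy hxy

lemma IsJordan.exists_homeo [T2Space E] {J : Set E} {J' : Set F} (h : IsJordan J) (h' : IsJordan J') :
    ∃ φ : E → F, ContinuousOn φ J ∧ InjOn φ J ∧ φ '' J = J' := by
  obtain ⟨a, b, α, β, hL, rfl⟩ := h
  obtain ⟨a', b', α', β', hL', rfl⟩ := h'
  obtain ⟨g, hg, hgi, hgα, ga, gb⟩ := hL.1.exists_homeo hL'.1
  obtain ⟨k, hk, hki, hkβ, ka, kb⟩ := hL.2.1.exists_homeo hL'.2.1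
  obtain ⟨ψ, hψ, hψi, h1, h2⟩ := exists_glue hL.1.isClosed hL.2.1.isClosed hg hgi hk hki
    (by
      intro x hx
      rw [hL.inter_eq] at hx
      rcases hx with rfl | rfl
      · rw [ga, ka]
      · rw [gb, kb])
    (by
      rw [hgα, hkβ, hL.inter_eq, hL'.inter_eq, image_pair, ga, gb])
  exact ⟨ψ, hψ, hψi, by rw [image_union, h1.image_eq, h2.image_eq, hgα, hkβ]⟩

end Glue

/-- Combinatorially equivalent decompositions of two spaces, with a homeomorphism of skeletons. -/
structure Deco (A B : Type) [MetricSpace A] [MetricSpace B] where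
  ι : Type
  fin : Finite ι
  D : ι → Set A
  D' : ι → Set B
  Γ : Set A
  Γ' : Set B
  φ : A → B
  cells : Cells D Γ
  cells' : Cells D' Γ'
  cont : ContinuousOn φ Γ
  inj : InjOn φ Γ
  front : ∀ i, φ '' frontier (D i) = frontier (D' i)

namespace Deco

variable {A B : Type} [MetricSpace A] [MetricSpace B]

lemma image_skel (d : Deco A B) : d.φ '' d.Γ = d.Γ' := by
  rw [d.cells.skel, d.cells'.skel, image_iUnion]
  exact iUnion_congr d.front

lemma isCompact [CompactSpace A] (d : Deco A B) : IsCompact d.Γ :=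
  haveI := d.fin
  d.cells.isClosed.isCompact

/-- The same decompositions with the roles of the two spaces exchanged. -/
noncomputable def symm [CompactSpace A] [Nonempty A] (d : Deco A B) : Deco B A where
  ι := d.ι
  fin := d.fin
  D := d.D'
  D' := d.D
  Γ := d.Γ'
  Γ' := d.Γ
  φ := Function.invFunOn d.φ d.Γ
  cells := d.cells'
  cells' := d.cells
  cont := d.image_skel ▸ continuousOn_invFunOn d.isCompact d.cont d.inj
  inj := d.image_skel ▸ Function.invFunOn_injOn_image d.φ d.Γ
  front i := by rw [← d.front i, d.inj.invFunOn_image (d.cells.frontier_subset i)]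

/-- Each pair of corresponding faces of `d₂` lies in a pair of corresponding faces of `d₁`. -/
def Refines (d₁ d₂ : Deco A B) : Prop :=
  ∀ j, ∃ i, d₂.D j ⊆ d₁.D i ∧ d₂.D' j ⊆ d₁.D' i

lemma Refines.rfl {d : Deco A B} : Refines d d := fun j => ⟨j, subset_rfl, subset_rfl⟩

lemma Refines.trans {d₁ d₂ d₃ : Deco A B} (h : Refines d₁ d₂) (h' : Refines d₂ d₃) :
    Refines d₁ d₃ := by
  intro k
  obtain ⟨j, hj, hj'⟩ := h' k
  obtain ⟨i, hi, hi'⟩ := h j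
  exact ⟨i, hj.trans hi, hj'.trans hi'⟩

lemma exists_step [CompactSpace A] [CompactSpace B] (hA : Good A) (hB : Good B) (d : Deco A B)
    {c : Set A} {a b : A} (hc : IsArc c a b) (hcΓ : c ∩ d.Γ = {a, b}) :
    ∃ d₁ : Deco A B, d₁.Γ = d.Γ ∪ c ∧ Refines d d₁ := by
  classical
  have := d.fin
  obtain ⟨i, hcD, ha, hb⟩ := d.cells.exists_arc_mem hc hcΓ
  obtain ⟨α, β, hL, hJ⟩ := (d.cells.jordan i).split ha hb hc.ne
  obtain ⟨D₁, D₂, hd, hu, h₁, h₂⟩ := hA.theta hL (hJ ▸ d.cells.face i) hc hcD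
  have hαΓ : α ⊆ d.Γ := (subset_union_left.trans hJ.subset).trans (d.cells.frontier_subset i)
  have hβΓ : β ⊆ d.Γ := (subset_union_right.trans hJ.subset).trans (d.cells.frontier_subset i)
  have hL' : Loop (d.φ '' α) (d.φ '' β) (d.φ a) (d.φ b) := by
    refine ⟨hL.1.image (d.cont.mono hαΓ) (d.inj.mono hαΓ),
      hL.2.1.image (d.cont.mono hβΓ) (d.inj.mono hβΓ), ?_⟩
    rw [← d.inj.image_inter hαΓ hβΓ, hL.inter_eq, image_pair]
  have hJ' : d.φ '' α ∪ d.φ '' β = frontier (d.D' i) := by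
    rw [← image_union, hJ, d.front]
  obtain ⟨c', hc', hcD'⟩ := hB.crosscut (d.cells'.jordan i) (d.cells'.face i)
    (hJ'.subset (Or.inl hL'.1.left_mem)) (hJ'.subset (Or.inl hL'.1.right_mem)) hL'.1.ne
  obtain ⟨D₁', D₂', hd', hu', h₁', h₂'⟩ := hB.theta hL' (hJ' ▸ d.cells'.face i) hc' hcD'
  obtain ⟨g, hg, hgi, hgc, ga, gb⟩ := hc.exists_homeo hc'
  obtain ⟨ψ, hψ, hψi, hψΓ, hψc⟩ := exists_glue d.cells.isClosed hc.isClosed d.cont d.inj hg hgi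
    (by
      intro x hx
      rw [inter_comm, hcΓ] at hx
      rcases hx with rfl | rfl
      · rw [ga]
      · rw [gb])
    (by
      rw [hgc, d.image_skel, inter_comm d.Γ, hcΓ, image_pair]
      intro y hy
      by_contra hn
      exact disjoint_left.mp (d.cells'.disjoint i) (hcD' ⟨hy.2, hn⟩) hy.1)
  have hs : D₁ ∪ D₂ ⊆ d.D i := hu.subset.trans sdiff_subset
  have hs' : D₁' ∪ D₂' ⊆ d.D' i := hu'.subset.trans sdiff_subset
  refine ⟨⟨Option d.ι, inferInstance, _, _, _, _, ψ, d.cells.split hL hJ hc hcD hd hu h₁ h₂,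
    d.cells'.split hL' hJ' hc' hcD' hd' hu' h₁' h₂', hψ, hψi, ?_⟩, rfl, ?_⟩
  · rintro (_ | j)
    · simp only [Option.elim]
      rw [h₂.frontier_eq, h₂'.frontier_eq, image_union, hψc.image_eq, hgc,
        (hψΓ.mono hβΓ).image_eq]
    · by_cases hj : j = i
      · subst hj
        simp only [Option.elim, Function.update_self]
        rw [h₁.frontier_eq, h₁'.frontier_eq, image_union, hψc.image_eq, hgc,
          (hψΓ.mono hαΓ).image_eq]
      · simp only [Option.elim, Function.update_of_ne hj]
        rw [(hψΓ.mono (d.cells.frontier_subset j)).image_eq, d.front]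
  · rintro (_ | j)
    · exact ⟨i, subset_union_right.trans hs, subset_union_right.trans hs'⟩
    · by_cases hj : j = i
      · subst hj
        refine ⟨j, ?_, ?_⟩ <;> simp only [Option.elim, Function.update_self]
        · exact subset_union_left.trans hs
        · exact subset_union_left.trans hs'
      · refine ⟨j, ?_, ?_⟩ <;> simp only [Option.elim, Function.update_of_ne hj] <;> rfl

lemma exists_ext [CompactSpace A] [CompactSpace B] (hA : Good A) (hB : Good B) (d : Deco A B)
    {Γ₁ : Set A} (h : Ext d.Γ Γ₁) : ∃ d₁ : Deco A B, d₁.Γ = Γ₁ ∧ Refines d d₁ := by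
  induction h with
  | refl => exact ⟨d, rfl, Refines.rfl⟩
  | step _ hc hcΓ ih =>
    obtain ⟨d₁, rfl, hd₁⟩ := ih
    obtain ⟨d₂, h2, hd₂⟩ := d₁.exists_step hA hB hc hcΓ
    exact ⟨d₂, h2, hd₁.trans hd₂⟩

/-- All faces of the first decomposition have diameter at most `δ`. -/
def Small (d : Deco A B) (δ : ℝ) : Prop :=
  ∀ i, ∀ x ∈ closure (d.D i), ∀ y ∈ closure (d.D i), dist x y ≤ δ

lemma Small.refine {d₁ d₂ : Deco A B} {δ : ℝ} (h : Small d₁ δ) (h' : Refines d₁ d₂) :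
    Small d₂ δ := by
  intro j x hx y hy
  obtain ⟨i, hi, -⟩ := h' j
  exact h i x (closure_mono hi hx) y (closure_mono hi hy)

lemma exists_small [CompactSpace A] [CompactSpace B] (hA : Good A) (hB : Good B) (d : Deco A B)
    {δ : ℝ} (hδ : 0 < δ) : ∃ d₁ : Deco A B, Refines d d₁ ∧ Small d₁ δ := by
  obtain ⟨Γ₁, hext, hm⟩ := Net.exists_ext_mesh hA ⟨d.ι, d.fin, d.D, d.cells⟩ hδ
  obtain ⟨d₁, rfl, hd₁⟩ := d.exists_ext hA hB hext
  refine ⟨d₁, hd₁, fun i x hx y hy => ?_⟩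
  have h1 : d₁.D i ×ˢ d₁.D i ⊆ {z : A × A | dist z.1 z.2 ≤ δ} := fun z hz =>
    hm _ _ (((d₁.cells.face i).isPreconnected.linked hz.1 hz.2).mono
      (d₁.cells.disjoint i).subset_compl_right)
  have h2 := closure_minimal h1 (isClosed_le continuous_dist continuous_const)
  rw [closure_prod_eq] at h2
  exact h2 (mk_mem_prod hx hy)

lemma exists_small_both [CompactSpace A] [CompactSpace B] [Nonempty A] [Nonempty B] (hA : Good A)
    (hB : Good B) (d : Deco A B) {δ : ℝ} (hδ : 0 < δ) :
    ∃ d₁ : Deco A B, Refines d d₁ ∧ Small d₁ δ ∧ Small d₁.symm δ := by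
  obtain ⟨d₁, hd₁, hs₁⟩ := d.exists_small hA hB hδ
  obtain ⟨d₂, hd₂, hs₂⟩ := d₁.symm.exists_small hB hA hδ
  have h : Refines d₁ d₂.symm := fun j => (hd₂ j).imp fun i hi => hi.symm
  exact ⟨d₂.symm, hd₁.trans h, hs₁.refine h, hs₂⟩

end Deco

lemma Good.exists_cells {A : Type} [MetricSpace A] [CompactSpace A] (hA : Good A) :
    ∃ (D : Bool → Set A) (J : Set A), IsJordan J ∧ Cells D J ∧ ∀ i, frontier (D i) = J := by
  obtain ⟨J, hJ⟩ := hA.exists_jordan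
  obtain ⟨x, hx⟩ : ∃ x, x ∉ J := by
    by_contra! hn
    refine hA.not_isPreconnected_compl hJ ?_
    rw [compl_empty_iff.mpr (eq_univ_of_forall hn)]
    exact isPreconnected_empty
  have h1 := hA.face_component hJ hx
  have h2 := hA.exterior hJ h1
  set D := connectedComponentIn Jᶜ x
  have hfr : ∀ i, frontier (Bool.rec (D ∪ J)ᶜ D i) = J := by
    rintro (_ | _)
    · exact h2.frontier_eq
    · exact h1.frontier_eq
  refine ⟨fun i => Bool.rec (D ∪ J)ᶜ D i, J, hJ, ⟨?_, ?_, ?_, ?_, ?_⟩, hfr⟩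
  · intro i
    rw [hfr]
    rcases i with _ | _
    · exact h2
    · exact h1
  · intro i
    rw [hfr]; exact hJ
  · have hd : Disjoint D (D ∪ J)ᶜ := disjoint_left.mpr fun z hz h => h (Or.inl hz)
    rintro (_ | _) (_ | _) h
    · exact absurd rfl h
    · exact hd.symm
    · exact hd
    · exact absurd rfl h
  · intro z
    by_cases hz : z ∈ D ∪ J
    · exact ⟨true, h1.closure_eq.symm.subset hz⟩
    · exact ⟨false, subset_closure hz⟩
  · simp only [hfr, iUnion_const]

lemma nonempty_deco {A B : Type} [MetricSpace A] [MetricSpace B] [CompactSpace A] [CompactSpace B]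
    (hA : Good A) (hB : Good B) : Nonempty (Deco A B) := by
  obtain ⟨D, J, hJ, hD, hf⟩ := hA.exists_cells
  obtain ⟨D', J', hJ', hD', hf'⟩ := hB.exists_cells
  obtain ⟨φ, h1, h2, h3⟩ := hJ.exists_homeo hJ'
  exact ⟨⟨Bool, inferInstance, D, D', J, J', φ, hD, hD', h1, h2, fun i => by rw [hf, hf', h3]⟩⟩

section Limit

variable {A B : Type} [MetricSpace A] [MetricSpace B]

/-- Points lying in corresponding closed faces of all decompositions of a sequence. -/
def Rel (d : ℕ → Deco A B) (x : A) (y : B) : Prop :=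
  ∀ k, ∃ i, x ∈ closure ((d k).D i) ∧ y ∈ closure ((d k).D' i)

lemma exists_rel [CompactSpace B] {d : ℕ → Deco A B} (hd : ∀ k, (d k).Refines (d (k + 1))) (x : A) :
    ∃ y, Rel d x y := by
  have hcl : ∀ k, IsClosed {y | ∃ i, x ∈ closure ((d k).D i) ∧ y ∈ closure ((d k).D' i)} := by
    intro k
    have := (d k).fin
    have h : {y | ∃ i, x ∈ closure ((d k).D i) ∧ y ∈ closure ((d k).D' i)} =
        ⋃ i ∈ {i | x ∈ closure ((d k).D i)}, closure ((d k).D' i) := by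
      ext y
      simp
    rw [h]
    exact (toFinite _).isClosed_biUnion fun _ _ => isClosed_closure
  have := IsCompact.nonempty_iInter_of_sequence_nonempty_isCompact_isClosed
    (fun k => {y | ∃ i, x ∈ closure ((d k).D i) ∧ y ∈ closure ((d k).D' i)}) ?_ ?_
    (hcl 0).isCompact hcl
  · obtain ⟨y, hy⟩ := this
    exact ⟨y, fun k => mem_iInter.mp hy k⟩
  · rintro k y ⟨j, hx, hy⟩
    obtain ⟨i, hi, hi'⟩ := hd k j
    exact ⟨i, closure_mono hi hx, closure_mono hi' hy⟩
  · intro k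
    obtain ⟨i, hi⟩ := (d k).cells.cover x
    obtain ⟨y, hy⟩ := ((d k).cells'.face i).nonempty
    exact ⟨y, i, hi, subset_closure hy⟩

lemma isClosed_rel (d : ℕ → Deco A B) : IsClosed {z : A × B | Rel d z.1 z.2} := by
  have : {z : A × B | Rel d z.1 z.2} =
      ⋂ k, ⋃ i, closure ((d k).D i) ×ˢ closure ((d k).D' i) := by
    ext z
    simp [Rel]
  rw [this]
  refine isClosed_iInter fun k => ?_
  have := (d k).fin
  exact isClosed_iUnion_of_finite fun i => isClosed_closure.prod isClosed_closure

lemma Rel.unique [CompactSpace A] [Nonempty A] {d : ℕ → Deco A B}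
    (hs : ∀ k, (d k).symm.Small (1 / (k + 1))) {x : A} {y y' : B} (h : Rel d x y)
    (h' : Rel d x y') : y = y' := by
  have key : ∀ k : ℕ, dist y y' ≤ 2 * (1 / (k + 1)) := by
    intro k
    obtain ⟨i, hx, hy⟩ := h k
    obtain ⟨j, hx', hy'⟩ := h' k
    have hpos : (0 : ℝ) < 1 / (k + 1) := by positivity
    by_cases hij : i = j
    · subst hij
      linarith [hs k i y hy y' hy']
    · have c := (d k).cells
      have hfi : x ∈ frontier ((d k).D i) := by
        rw [(c.face i).closure_eq] at hx
        exact hx.resolve_left fun hn => disjoint_left.mp (c.disjoint_closure hij) hn hx'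
      have hfj : x ∈ frontier ((d k).D j) := by
        rw [(c.face j).closure_eq] at hx'
        exact hx'.resolve_left fun hn =>
          disjoint_left.mp (c.disjoint_closure (Ne.symm hij)) hn (frontier_subset_closure hfi)
      have hi := frontier_subset_closure ((d k).front i ▸ mem_image_of_mem (d k).φ hfi)
      have hj := frontier_subset_closure ((d k).front j ▸ mem_image_of_mem (d k).φ hfj)
      linarith [hs k i y hy _ hi, hs k j _ hj y' hy', dist_triangle y ((d k).φ x) y']
  refine dist_le_zero.mp (ge_of_tendsto' (x := atTop) ?_ key)
  simpa using (tendsto_one_div_add_atTop_nhds_zero_nat (𝕜 := ℝ)).const_mul 2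

end Limit

/-- Any two compact good spaces are homeomorphic. -/
theorem Good.nonempty_homeomorph {A B : Type} [MetricSpace A] [MetricSpace B] [CompactSpace A]
    [CompactSpace B] (hA : Good A) (hB : Good B) : Nonempty (A ≃ₜ B) := by
  have := hA.nontrivial
  have := hB.nontrivial
  obtain ⟨d₀⟩ := nonempty_deco hA hB
  have hstep : ∀ (k : ℕ) (d : Deco A B), ∃ d₁ : Deco A B, d.Refines d₁ ∧
      d₁.Small (1 / (k + 1)) ∧ d₁.symm.Small (1 / (k + 1)) :=
    fun k d => d.exists_small_both hA hB (by positivity)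
  choose next hn using hstep
  let e : ℕ → Deco A B := fun n => Nat.rec d₀ (fun k d => next k d) n
  let d : ℕ → Deco A B := fun k => e (k + 1)
  have hd : ∀ k, (d k).Refines (d (k + 1)) := fun k => (hn (k + 1) (d k)).1
  have hsA : ∀ k, (d k).Small (1 / (k + 1)) := fun k => (hn k (e k)).2.1
  have hsB : ∀ k, (d k).symm.Small (1 / (k + 1)) := fun k => (hn k (e k)).2.2
  choose f hf using fun x => exists_rel hd x
  have hiff : ∀ x y, Rel d x y ↔ f x = y := fun x y =>
    ⟨fun h => (hf x).unique hsB h, fun h => h ▸ hf x⟩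
  have hinv : ∀ {x y}, Rel d x y → Rel (fun k => (d k).symm) y x :=
    fun h k => (h k).imp fun i hi => hi.symm
  have hinv' : ∀ {x y}, Rel (fun k => (d k).symm) y x → Rel d x y :=
    fun h k => (h k).imp fun i hi => hi.symm
  have hbij : Function.Bijective f := by
    constructor
    · intro x x' h
      have h1 := hinv (hf x)
      rw [h] at h1
      exact h1.unique (d := fun k => (d k).symm) hsA (hinv (hf x'))
    · intro y
      obtain ⟨x, hx⟩ := exists_rel (d := fun k => (d k).symm)
        (fun k j => (hd k j).imp fun i hi => hi.symm) y
      exact ⟨x, (hiff x y).mp (hinv' hx)⟩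
  have hcont : Continuous f := by
    rw [continuous_iff_isClosed]
    intro C hC
    have : f ⁻¹' C = Prod.fst '' ({z : A × B | Rel d z.1 z.2} ∩ Prod.snd ⁻¹' C) := by
      ext x
      constructor
      · exact fun hx => ⟨(x, f x), ⟨hf x, hx⟩, rfl⟩
      · rintro ⟨⟨x, y⟩, ⟨hr, hy⟩, rfl⟩
        rw [mem_preimage, (hiff x y).mp hr]
        exact hy
    rw [this]
    exact (((isClosed_rel d).inter (hC.preimage continuous_snd)).isCompact.image
      continuous_fst).isClosed
  exact ⟨Continuous.homeoOfEquivCompactToT2 (f := Equiv.ofBijective f hbij) hcont⟩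

end Cactoid

/-- Whyburn's theorem: the Gromov-Hausdorff limit of a sequence of compact length
spaces homeomorphic to the 2-sphere is a cactoid, i.e. a Peano space all of whose
maximal cyclic subsets are 2-spheres. -/
theorem ghLimit_of_length_spheres_is_cactoid
    (X : Type) [MetricSpace X] [Nonempty X] [CompactSpace X]
    (F : ℕ → GHSpace)
    (hF : ∀ n, ∃ (Z : Type) (m : MetricSpace Z), letI := m;
      ∃ (_ : Nonempty Z) (_ : CompactSpace Z),
        IsLengthSpace Z ∧ IsTopological2Sphere Z ∧ toGHSpace Z = F n)
    (hlim : Tendsto F atTop (nhds (toGHSpace X))) :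
    ConnectedSpace X ∧ LocallyConnectedSpace X ∧
      ∀ T : Set X, MaximalCyclic T → IsTopological2Sphere ↥T := by
  obtain ⟨hG, hJ⟩ := Cactoid.geod_janis_of_limit hF hlim
  have := hG.preconnectedSpace
  refine ⟨⟨‹_›⟩, hG.locallyConnectedSpace, fun T hT => ?_⟩
  obtain ⟨E, hEc, hE, hET⟩ := Cactoid.exists_good_of_maximalCyclic hG hJ hT
  obtain ⟨Z, m, _, _, hZ, ⟨e⟩, -⟩ := hF 0
  have := isCompact_iff_compactSpace.mp hEc.isCompact
  obtain ⟨g⟩ := hE.nonempty_homeomorph (Cactoid.good_of_sphere hZ ⟨e⟩)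
  obtain rfl := hET ⟨g.trans e⟩
  exact ⟨g.trans e⟩
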